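/- arXiv:1201.1139 — 2 statements merged into one kernel-verified Lean document; each statement's English description precedes it below -/
import Mathlib

section
/- Let S ⊂ SL₂(ℤ) be a finite symmetric set with |S| ≥ 4 which freely generates a free subgroup of rank |S|/2. Let Δ = max_{s∈S} ‖s‖, τ = 1/log Δ, δ = 1/3024, δ₂ = τ·log(|S|−1)/8, and A = log(1/δ₂)/log(1+δ). Then for every prime p ≥ 17 with p > exp(2/τ) such that the reduction of S modulo p generates SL₂(𝔽_p), there exists a natural number n with (n : ℝ) ≤ 3^(max(⌈A⌉,0)) · τ · log(p/2) such that ((S mod p) ∪ {1})^(n) = SL₂(𝔽_p); that is, the diameter of the Cayley graph of SL₂(𝔽_p) with respect to S mod p is at most 3^(max(⌈A⌉,0)) · τ · log(p/2). -/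
open Pointwise

instance {n : Type*} [DecidableEq n] [Fintype n] {R : Type*} [CommRing R] [DecidableEq R] :
    DecidableEq (Matrix.SpecialLinearGroup n R) := Subtype.instDecidableEq

/-- The ℓ² operator norm of an integer matrix in `SL₂(ℤ)`, i.e. the norm of the induced
linear operator on Euclidean `ℝ²`. -/
noncomputable def sl2zOpNorm (g : Matrix.SpecialLinearGroup (Fin 2) ℤ) : ℝ :=
  ‖Matrix.toEuclideanCLM (𝕜 := ℝ)
    ((g : Matrix (Fin 2) (Fin 2) ℤ).map (Int.cast : ℤ → ℝ))‖

set_option linter.unusedSectionVars false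

section basics
variable {F : Type*} [Field F] [Fintype F] [DecidableEq F]

lemma hg_mem_mul {H : Finset (Matrix.SpecialLinearGroup (Fin 2) F)} {a b : Matrix.SpecialLinearGroup (Fin 2) F} {m n : ℕ} (ha : a ∈ H ^ m) (hb : b ∈ H ^ n) :
    a * b ∈ H ^ (m + n) := by
  rw [pow_add]; exact Finset.mul_mem_mul ha hb

lemma hg_mem_mul' {H : Finset (Matrix.SpecialLinearGroup (Fin 2) F)} {a b : Matrix.SpecialLinearGroup (Fin 2) F} {m n : ℕ} (k : ℕ) (hk : m + n = k)
    (ha : a ∈ H ^ m) (hb : b ∈ H ^ n) : a * b ∈ H ^ k := by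
  rw [← hk]; exact hg_mem_mul ha hb

lemma hg_inv {H : Finset (Matrix.SpecialLinearGroup (Fin 2) F)} (hs : ∀ h ∈ H, h⁻¹ ∈ H) (k : ℕ) : ∀ g ∈ H ^ k, g⁻¹ ∈ H ^ k := by
  induction k with
  | zero => intro g hg; simp at hg ⊢; exact hg
  | succ k ih =>
    intro g hg
    rw [pow_succ] at hg
    obtain ⟨a, ha, b, hb, rfl⟩ := Finset.mem_mul.mp hg
    rw [pow_succ', mul_inv_rev]
    exact Finset.mul_mem_mul (hs b hb) (ih a ha)

lemma hg_mono {H : Finset (Matrix.SpecialLinearGroup (Fin 2) F)} (h1 : (1 : Matrix.SpecialLinearGroup (Fin 2) F) ∈ H) {m n : ℕ} (h : m ≤ n) : H ^ m ⊆ H ^ n :=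
  Finset.pow_subset_pow_right h1 h

lemma hg_one {H : Finset (Matrix.SpecialLinearGroup (Fin 2) F)} (h1 : (1 : Matrix.SpecialLinearGroup (Fin 2) F) ∈ H) (n : ℕ) : (1 : Matrix.SpecialLinearGroup (Fin 2) F) ∈ H ^ n :=
  Finset.one_mem_pow h1

lemma hg_ind {H : Finset (Matrix.SpecialLinearGroup (Fin 2) F)} (hs : ∀ h ∈ H, h⁻¹ ∈ H)
    (hgen : Subgroup.closure (H : Set (Matrix.SpecialLinearGroup (Fin 2) F)) = ⊤) (P : Matrix.SpecialLinearGroup (Fin 2) F → Prop) (p1 : P 1)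
    (pm : ∀ h ∈ H, ∀ x, P x → P (h * x)) (x : Matrix.SpecialLinearGroup (Fin 2) F) : P x := by
  have hx : x ∈ Subgroup.closure (H : Set (Matrix.SpecialLinearGroup (Fin 2) F)) := by rw [hgen]; trivial
  induction hx using Subgroup.closure_induction_left with
  | one => exact p1
  | mul_left a ha y _ ih => exact pm a ha y ih
  | inv_mul_cancel a ha y _ ih => exact pm _ (hs a ha) y ih

lemma hg_grow {H : Finset (Matrix.SpecialLinearGroup (Fin 2) F)} (hs : ∀ h ∈ H, h⁻¹ ∈ H) (h1 : (1 : Matrix.SpecialLinearGroup (Fin 2) F) ∈ H)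
    (hgen : Subgroup.closure (H : Set (Matrix.SpecialLinearGroup (Fin 2) F)) = ⊤) (r : ℕ) :
    H ^ r = Finset.univ ∨ r + 1 ≤ (H ^ r).card := by
  induction r with
  | zero => right; simp
  | succ r ih =>
    have hsub : H ^ r ⊆ H ^ (r + 1) := hg_mono h1 (Nat.le_succ r)
    rcases ih with h | h
    · left; rw [h] at hsub; exact Finset.univ_subset_iff.mp hsub
    · by_cases he : H ^ r = H ^ (r + 1)
      · left
        rw [← he, Finset.eq_univ_iff_forall]
        refine hg_ind hs hgen _ (hg_one h1 r) ?_
        intro a ha x hx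
        rw [he, pow_succ']; exact Finset.mul_mem_mul ha hx
      · right
        have := Finset.card_lt_card (Finset.ssubset_iff_subset_ne.mpr ⟨hsub, he⟩)
        omega

lemma hg_gen_pow {H : Finset (Matrix.SpecialLinearGroup (Fin 2) F)} (h1 : (1 : Matrix.SpecialLinearGroup (Fin 2) F) ∈ H)
    (hgen : Subgroup.closure (H : Set (Matrix.SpecialLinearGroup (Fin 2) F)) = ⊤) {k : ℕ} (hk : 1 ≤ k) :
    Subgroup.closure ((H ^ k : Finset (Matrix.SpecialLinearGroup (Fin 2) F)) : Set (Matrix.SpecialLinearGroup (Fin 2) F)) = ⊤ := by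
  rw [eq_top_iff, ← hgen]
  apply Subgroup.closure_mono
  have := hg_mono h1 hk
  rw [pow_one] at this
  exact_mod_cast this

/-- pigeonhole on a map: large fibres. -/
lemma hg_pigeon {α β : Type*} [DecidableEq β] (s : Finset α) (t : Finset β) (f : α → β)
    (hf : ∀ a ∈ s, f a ∈ t) (hs : s.Nonempty) :
    ∃ a ∈ s, s.card ≤ t.card * (s.filter (fun x => f x = f a)).card := by
  by_contra hcon
  push Not at hcon
  have himg : s.card = ∑ b ∈ s.image f, (s.filter (fun x => f x = b)).card :=
    Finset.card_eq_sum_card_image f s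
  have hne : (s.image f).Nonempty := hs.image f
  have hle : (s.image f).card ≤ t.card := Finset.card_le_card (by
    intro b hb; obtain ⟨a, ha, rfl⟩ := Finset.mem_image.mp hb; exact hf a ha)
  have h2 : ∑ b ∈ s.image f, t.card * (s.filter (fun x => f x = b)).card <
      ∑ b ∈ s.image f, s.card := by
    apply Finset.sum_lt_sum_of_nonempty hne
    intro b hb
    obtain ⟨a, ha, rfl⟩ := Finset.mem_image.mp hb
    exact hcon a ha
  rw [← Finset.mul_sum, ← himg, Finset.sum_const, smul_eq_mul] at h2
  have := Nat.mul_le_mul_right s.card hle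
  omega

end basics

set_option linter.unusedSectionVars false

section terminal
variable {F : Type*} [Field F] [Fintype F] [DecidableEq F]

lemma hg_incidence (A B C D : Finset F)
    (h : ∀ a ∈ A, ∀ b ∈ B, ∀ c ∈ C, c + a * b ∉ D) :
    A.card * B.card * C.card * D.card ≤ Fintype.card F ^ 3 := by
  classical
  set g : F → ℝ := fun x => if x ∈ D then 1 else 0 with hg
  set f : F → F → ℝ := fun b c => ∑ a ∈ A, g (c + a * b) with hf
  set q : ℝ := (Fintype.card F : ℝ) with hq
  have hqpos : 0 < q := by rw [hq]; exact_mod_cast Fintype.card_pos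
  have hgD : ∑ x, g x = D.card := by simp [hg]
  have hg0 : ∀ x, 0 ≤ g x := by intro x; simp only [hg]; split_ifs <;> norm_num
  have hg1 : ∀ x, g x ≤ 1 := by intro x; simp only [hg]; split_ifs <;> norm_num
  have hshift : ∀ y, ∑ c, g (c + y) = D.card := by
    intro y
    rw [← hgD]
    exact Equiv.sum_comp (Equiv.addRight y) g
  have s1 : ∑ b, ∑ c, f b c = A.card * q * D.card := by
    simp only [hf]
    have : ∀ b, ∑ c, ∑ a ∈ A, g (c + a * b) = A.card * D.card := by
      intro b
      rw [Finset.sum_comm]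
      simp [hshift]
    simp only [this]
    simp [hq]; ring
  have key : ∀ a a', ∑ b, ∑ c, g (c + a * b) * g (c + a' * b) ≤
      (if a = a' then q * D.card else 0) + (D.card : ℝ) ^ 2 := by
    intro a a'
    by_cases haa : a = a'
    · subst haa
      simp only [if_true]
      have : ∑ b, ∑ c, g (c + a * b) * g (c + a * b) ≤ ∑ b : F, (D.card : ℝ) := by
        apply Finset.sum_le_sum
        intro b _
        rw [← hshift (a * b)]
        apply Finset.sum_le_sum
        intro c _
        nlinarith [hg0 (c + a * b), hg1 (c + a * b)]
      simp at this
      have h2 : (0:ℝ) ≤ (D.card : ℝ) ^ 2 := by positivity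
      linarith
    · simp only [if_neg haa, zero_add]
      have e1 : ∀ b, ∑ c, g (c + a * b) * g (c + a' * b) = ∑ c, g c * g (c + (a' - a) * b) := by
        intro b
        rw [← Equiv.sum_comp (Equiv.addRight (a * b)) (fun c => g c * g (c + (a' - a) * b))]
        apply Finset.sum_congr rfl
        intro c _
        simp only [Equiv.coe_addRight]
        congr 2
        ring
      simp only [e1]
      rw [Finset.sum_comm]
      have hne : a' - a ≠ 0 := sub_ne_zero.mpr (Ne.symm haa)
      have e2 : ∀ c, ∑ b, g c * g (c + (a' - a) * b) = g c * D.card := by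
        intro c
        rw [← Finset.mul_sum, ← hgD]
        congr 1
        rw [← Equiv.sum_comp ((Equiv.mulLeft₀ _ hne).trans (Equiv.addLeft c)) g]
        rfl
      simp only [e2]
      rw [← Finset.sum_mul, hgD, sq]
  have s2 : ∑ b, ∑ c, f b c ^ 2 ≤ A.card * (q * D.card) + (A.card : ℝ) ^ 2 * (D.card : ℝ) ^ 2 := by
    have e : ∑ b, ∑ c, f b c ^ 2 =
        ∑ a ∈ A, ∑ a' ∈ A, ∑ b, ∑ c, g (c + a * b) * g (c + a' * b) := by
      have : ∀ b c, f b c ^ 2 = ∑ a ∈ A, ∑ a' ∈ A, g (c + a * b) * g (c + a' * b) := by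
        intro b c
        rw [sq, hf, Finset.sum_mul_sum]
      simp only [this]
      have h3 : ∀ b, ∑ c, ∑ a ∈ A, ∑ a' ∈ A, g (c + a * b) * g (c + a' * b) =
          ∑ a ∈ A, ∑ a' ∈ A, ∑ c, g (c + a * b) * g (c + a' * b) := by
        intro b
        rw [Finset.sum_comm]
        apply Finset.sum_congr rfl; intro a _
        rw [Finset.sum_comm]
      simp only [h3]
      rw [Finset.sum_comm]
      apply Finset.sum_congr rfl; intro a _
      rw [Finset.sum_comm]
    rw [e]
    calc _ ≤ ∑ a ∈ A, ∑ a' ∈ A, ((if a = a' then q * D.card else 0) + (D.card : ℝ) ^ 2) :=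
          Finset.sum_le_sum fun a _ => Finset.sum_le_sum fun a' _ => key a a'
      _ = _ := by
          simp only [Finset.sum_add_distrib, Finset.sum_const, Finset.sum_ite_eq]
          rw [← Finset.sum_filter]
          simp
          ring
  set P : ℝ := A.card * D.card with hP
  have hP0 : 0 ≤ P := by positivity
  have s3 : ∑ b, ∑ c, (f b c - P / q) ^ 2 ≤ q * P := by
    have : ∑ b, ∑ c, (f b c - P / q) ^ 2 =
        ∑ b, ∑ c, f b c ^ 2 - 2 * (P / q) * ∑ b, ∑ c, f b c + q * (q * (P / q) ^ 2) := by
      have h4 : ∀ b c, (f b c - P / q) ^ 2 = f b c ^ 2 - 2 * (P / q) * f b c + (P / q) ^ 2 := by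
        intro b c; ring
      simp only [h4, Finset.sum_add_distrib, Finset.sum_sub_distrib, Finset.mul_sum]
      simp [hq]
    rw [this, s1]
    have h5 : 2 * (P / q) * (A.card * q * D.card) = 2 * P ^ 2 := by
      rw [hP]; field_simp
    have h6 : q * (q * (P / q) ^ 2) = P ^ 2 := by field_simp
    rw [h5, h6]
    have h7 : A.card * (q * D.card) + (A.card : ℝ) ^ 2 * (D.card : ℝ) ^ 2 = q * P + P ^ 2 := by
      rw [hP]; ring
    linarith
  have s4 : (B.card : ℝ) * C.card * (P / q) ^ 2 ≤ ∑ b, ∑ c, (f b c - P / q) ^ 2 := by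
    calc (B.card : ℝ) * C.card * (P / q) ^ 2 = ∑ b ∈ B, ∑ c ∈ C, (P / q) ^ 2 := by
          simp; ring
      _ = ∑ b ∈ B, ∑ c ∈ C, (f b c - P / q) ^ 2 := by
          apply Finset.sum_congr rfl; intro b hb
          apply Finset.sum_congr rfl; intro c hc
          have : f b c = 0 := by
            apply Finset.sum_eq_zero
            intro a ha
            simp [hg, h a ha b hb c hc]
          rw [this]; ring
      _ ≤ ∑ b ∈ B, ∑ c, (f b c - P / q) ^ 2 := by
          apply Finset.sum_le_sum; intro b _
          apply Finset.sum_le_sum_of_subset_of_nonneg (Finset.subset_univ _)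
          intros; positivity
      _ ≤ _ := by
          apply Finset.sum_le_sum_of_subset_of_nonneg (Finset.subset_univ _)
          intros; apply Finset.sum_nonneg; intros; positivity
  have s5 := s4.trans s3
  have fin : (A.card * B.card * C.card * D.card : ℝ) ≤ q ^ 3 := by
    rcases hP0.eq_or_lt with h0 | h0
    · have : (A.card * B.card * C.card * D.card : ℝ) = B.card * C.card * P := by rw [hP]; ring
      rw [this, ← h0]; simp; positivity
    · have h8 : (B.card : ℝ) * C.card * (P / q) ^ 2 * q ^ 2 ≤ q * P * q ^ 2 :=
        mul_le_mul_of_nonneg_right s5 (by positivity)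
      have h9 : (B.card : ℝ) * C.card * (P / q) ^ 2 * q ^ 2 = (B.card * C.card * P) * P := by
        field_simp
      rw [h9] at h8
      have h10 : (B.card * C.card * P : ℝ) * P ≤ q ^ 3 * P := by linarith
      have h11 := le_of_mul_le_mul_right h10 h0
      have : (A.card * B.card * C.card * D.card : ℝ) = B.card * C.card * P := by rw [hP]; ring
      linarith
  rw [hq] at fin
  exact_mod_cast fin

/-- upper unipotent -/
def hgu (x : F) : Matrix.SpecialLinearGroup (Fin 2) F :=
  ⟨!![1, x; 0, 1], by simp [Matrix.det_fin_two]⟩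

lemma hg_det (g : Matrix.SpecialLinearGroup (Fin 2) F) :
    g.1 0 0 * g.1 1 1 - g.1 0 1 * g.1 1 0 = 1 := by
  have := g.2; rwa [Matrix.det_fin_two] at this

lemma hg_inv_entries (g : Matrix.SpecialLinearGroup (Fin 2) F) :
    (g⁻¹).1 0 0 = g.1 1 1 ∧ (g⁻¹).1 0 1 = - g.1 0 1 ∧ (g⁻¹).1 1 0 = - g.1 1 0 ∧
      (g⁻¹).1 1 1 = g.1 0 0 := by
  have : (g⁻¹).1 = g.1.adjugate := Matrix.SpecialLinearGroup.coe_inv g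
  rw [this, Matrix.adjugate_fin_two]
  simp

lemma hg_mul_entries (g h : Matrix.SpecialLinearGroup (Fin 2) F) (i j : Fin 2) :
    (g * h).1 i j = g.1 i 0 * h.1 0 j + g.1 i 1 * h.1 1 j := by
  have : (g * h).1 = g.1 * h.1 := rfl
  rw [this, Matrix.mul_apply, Fin.sum_univ_two]

lemma hg_ext {g h : Matrix.SpecialLinearGroup (Fin 2) F} (h00 : g.1 0 0 = h.1 0 0)
    (h01 : g.1 0 1 = h.1 0 1) (h10 : g.1 1 0 = h.1 1 0) (h11 : g.1 1 1 = h.1 1 1) : g = h := by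
  ext i j
  fin_cases i <;> fin_cases j <;> assumption

lemma hgu_mul (x y : F) : hgu x * hgu y = hgu (x + y) := by
  apply hg_ext <;> rw [hg_mul_entries] <;> simp [hgu, add_comm]

/-- conjugation of a unipotent by an upper triangular matrix -/
lemma hgu_conj (b : Matrix.SpecialLinearGroup (Fin 2) F) (hb : b.1 1 0 = 0) (x : F) :
    b * hgu x * b⁻¹ = hgu (x * b.1 0 0 ^ 2) := by
  have hd := hg_det b
  obtain ⟨i1, i2, i3, i4⟩ := hg_inv_entries b
  have e00 : (hgu x).1 0 0 = 1 := rfl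
  have e01 : (hgu x).1 0 1 = x := rfl
  have e10 : (hgu x).1 1 0 = 0 := rfl
  have e11 : (hgu x).1 1 1 = 1 := rfl
  rw [hb] at hd
  have f00 : (hgu (x * b.1 0 0 ^ 2)).1 0 0 = 1 := rfl
  have f01 : (hgu (x * b.1 0 0 ^ 2)).1 0 1 = x * b.1 0 0 ^ 2 := rfl
  have f10 : (hgu (x * b.1 0 0 ^ 2)).1 1 0 = 0 := rfl
  have f11 : (hgu (x * b.1 0 0 ^ 2)).1 1 1 = 1 := rfl
  apply hg_ext <;> simp only [hg_mul_entries, i1, i2, i3, i4, e00, e01, e10, e11, f00, f01, f10, f11, hb]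
    <;> first | linear_combination hd | ring1

end terminal

set_option linter.unusedSectionVars false

section terminal2
variable {F : Type*} [Field F] [Fintype F] [DecidableEq F]

lemma hg_X_card {H : Finset (Matrix.SpecialLinearGroup (Fin 2) F)} (hs : ∀ h ∈ H, h⁻¹ ∈ H)
    (h1 : 1 ∈ H) :
    H.card ≤ Fintype.card F ^ 2 *
      (Finset.univ.filter (fun x : F => hgu x ∈ H ^ (2:ℕ))).card := by
  obtain ⟨a, ha, hcard⟩ := hg_pigeon H (Finset.univ : Finset (F × F))
    (fun h => (h.1 0 0, h.1 1 0)) (fun _ _ => Finset.mem_univ _) ⟨1, h1⟩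
  rw [Finset.card_univ, Fintype.card_prod, ← sq] at hcard
  refine hcard.trans (Nat.mul_le_mul_left _ ?_)
  have hu : ∀ h ∈ H.filter (fun x => (x.1 0 0, x.1 1 0) = (a.1 0 0, a.1 1 0)),
      a⁻¹ * h = hgu ((a⁻¹ * h).1 0 1) := by
    intro h hh
    rw [Finset.mem_filter, Prod.mk.injEq] at hh
    obtain ⟨_, e1, e2⟩ := hh
    obtain ⟨i1, i2, i3, i4⟩ := hg_inv_entries a
    have hd := hg_det a
    have hd' := hg_det h
    rw [e1, e2] at hd'
    apply hg_ext
    · change _ = (1 : F)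
      rw [hg_mul_entries, i1, i2, e1, e2]; linear_combination hd
    · rfl
    · change _ = (0 : F)
      rw [hg_mul_entries, i3, i4, e1, e2]; ring
    · change _ = (1 : F)
      rw [hg_mul_entries, i3, i4]; linear_combination hd'
  apply Finset.card_le_card_of_injOn (fun h => (a⁻¹ * h).1 0 1)
  · intro h hh
    have hh' := hu h hh
    rw [Finset.mem_coe, Finset.mem_filter] at hh
    simp only [Finset.coe_filter, Finset.mem_univ, true_and, Set.mem_ofPred_eq]
    rw [← hh', sq]
    exact Finset.mul_mem_mul (hs a ha) hh.1
  · intro h hh h' hh' he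
    have e1 := hu h hh
    have e2 := hu h' hh'
    simp only at he
    rw [he, ← e2] at e1
    exact mul_left_cancel e1

lemma hg_Y_card {H : Finset (Matrix.SpecialLinearGroup (Fin 2) F)} (hs : ∀ h ∈ H, h⁻¹ ∈ H)
    (h1 : 1 ∈ H) :
    H.card ≤ (Fintype.card F + 1) * (2 * (Fintype.card F *
      (((H ^ (2:ℕ)).filter (fun b => b.1 1 0 = 0)).image (fun b => b.1 0 0 ^ 2)).card)) := by
  obtain ⟨a, ha, hcard⟩ := hg_pigeon H (Finset.univ : Finset (Option F))
    (fun h => if h.1 0 0 = 0 then none else some (h.1 1 0 / h.1 0 0))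
    (fun _ _ => Finset.mem_univ _) ⟨1, h1⟩
  rw [Finset.card_univ, Fintype.card_option] at hcard
  refine hcard.trans (Nat.mul_le_mul_left _ ?_)
  set B2 := (H ^ (2:ℕ)).filter (fun b => b.1 1 0 = 0) with hB2
  have c1 : (H.filter (fun h => (if h.1 0 0 = 0 then none else some (h.1 1 0 / h.1 0 0)) =
      (if a.1 0 0 = 0 then none else some (a.1 1 0 / a.1 0 0)))).card ≤ B2.card := by
    apply Finset.card_le_card_of_injOn (fun h => a⁻¹ * h)
    · intro h hh
      rw [Finset.mem_coe, Finset.mem_filter] at hh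
      obtain ⟨hH, he⟩ := hh
      obtain ⟨i1, i2, i3, i4⟩ := hg_inv_entries a
      rw [hB2, Finset.mem_coe, Finset.mem_filter]
      refine ⟨by rw [sq]; exact Finset.mul_mem_mul (hs a ha) hH, ?_⟩
      rw [hg_mul_entries, i3, i4]
      by_cases z1 : h.1 0 0 = 0 <;> by_cases z2 : a.1 0 0 = 0
      · rw [z1, z2]; ring
      · simp [z1, z2] at he
      · simp [z1, z2] at he
      · simp only [z1, z2, if_false, Option.some.injEq] at he
        field_simp at he
        linear_combination he
    · intro h _ h' _ he
      exact mul_left_cancel he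
  refine c1.trans ?_
  have := Finset.card_le_mul_card_image_of_maps_to (s := B2)
    (t := (B2.image (fun b => b.1 0 0 ^ 2)) ×ˢ (Finset.univ : Finset F))
    (f := fun b => (b.1 0 0 ^ 2, b.1 0 1))
    (fun b hb => Finset.mem_product.mpr ⟨Finset.mem_image_of_mem _ hb, Finset.mem_univ _⟩) 2 ?_
  · rw [Finset.card_product, Finset.card_univ, mul_comm (Finset.card _) (Fintype.card F)] at this
    exact this
  · rintro ⟨y, z⟩ _
    rcases (Finset.filter (fun b => (b.1 0 0 ^ 2, b.1 0 1) = (y, z)) B2).eq_empty_or_nonempty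
      with h | ⟨b0, hb0⟩
    · rw [h]; simp
    · have : (({b0.1 0 0, - b0.1 0 0} : Finset F)).card ≤ 2 := Finset.card_le_two
      refine le_trans ?_ this
      rw [Finset.mem_filter, Prod.mk.injEq] at hb0
      apply Finset.card_le_card_of_injOn (fun b => b.1 0 0)
      · intro b hb
        rw [Finset.mem_coe, Finset.mem_filter, Prod.mk.injEq] at hb
        have : b.1 0 0 ^ 2 = b0.1 0 0 ^ 2 := by rw [hb.2.1, hb0.2.1]
        simp only [Finset.coe_insert, Finset.coe_singleton, Set.mem_insert_iff,
          Set.mem_singleton_iff]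
        exact sq_eq_sq_iff_eq_or_eq_neg.mp this
      · intro b hb b' hb' he
        rw [Finset.mem_coe, Finset.mem_filter, Prod.mk.injEq, hB2, Finset.mem_filter] at hb hb'
        simp only at he
        have hd := hg_det b
        have hd' := hg_det b'
        have e10 : b.1 1 0 = b'.1 1 0 := by rw [hb.1.2, hb'.1.2]
        have e01 : b.1 0 1 = b'.1 0 1 := by rw [hb.2.2, hb'.2.2]
        rw [hb.1.2] at hd
        rw [hb'.1.2, ← he] at hd'
        have hne : b.1 0 0 ≠ 0 := by
          intro h0; rw [h0] at hd; simp at hd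
        apply hg_ext he e01 e10
        apply mul_left_cancel₀ hne
        linear_combination hd - hd'

lemma hg_term_U {H : Finset (Matrix.SpecialLinearGroup (Fin 2) F)} (hs : ∀ h ∈ H, h⁻¹ ∈ H)
    (h1 : 1 ∈ H) (hbig : 64 * Fintype.card F ^ 8 ≤ H.card ^ 3) (x : F) :
    hgu x ∈ H ^ (16:ℕ) := by
  have hX := hg_X_card hs h1
  have hY := hg_Y_card hs h1
  set X := Finset.univ.filter (fun x : F => hgu x ∈ H ^ (2:ℕ)) with hXd
  set Y := ((H ^ (2:ℕ)).filter (fun b => b.1 1 0 = 0)).image (fun b => b.1 0 0 ^ 2) with hYd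
  set Z := Finset.univ.filter (fun x : F => hgu x ∈ H ^ (8:ℕ)) with hZd
  have hq : 1 ≤ Fintype.card F := Fintype.card_pos
  set q := Fintype.card F with hqd
  have hinc := hg_incidence X Y X (Finset.univ.filter (fun x : F => hgu x ∉ H ^ (8:ℕ))) (by
    intro a ha y hy c hc
    rw [hXd, Finset.mem_filter] at ha hc
    rw [hYd, Finset.mem_image] at hy
    obtain ⟨b, hb, rfl⟩ := hy
    rw [Finset.mem_filter] at hb
    rw [Finset.mem_filter, not_and, not_not]
    intro _
    rw [← hgu_mul, ← hgu_conj b hb.2]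
    exact hg_mem_mul (m := 2) (n := 6) hc.2 (hg_mem_mul (m := 4) (n := 2)
      (hg_mem_mul (m := 2) (n := 2) hb.1 ha.2) (hg_inv hs 2 b hb.1)))
  set D := Finset.univ.filter (fun x : F => hgu x ∉ H ^ (8:ℕ)) with hDd
  have hZD : Z.card + D.card = q := by
    rw [hZd, hDd, Finset.card_filter_add_card_filter_not, Finset.card_univ]
  have hY2 : H.card ≤ 4 * q ^ 2 * Y.card := by
    refine hY.trans ?_
    calc (q + 1) * (2 * (q * Y.card)) ≤ (q + q) * (2 * (q * Y.card)) := by gcongr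
      _ = 4 * q ^ 2 * Y.card := by ring
  have h3 : 64 * q ^ 8 ≤ 4 * q ^ 6 * (X.card ^ 2 * Y.card) := by
    refine hbig.trans ?_
    calc H.card ^ 3 = H.card * H.card * H.card := by ring
      _ ≤ (q ^ 2 * X.card) * (q ^ 2 * X.card) * (4 * q ^ 2 * Y.card) := by gcongr
      _ = _ := by ring
  have h4 : 16 * D.card ≤ q := by
    have e1 : 64 * q ^ 8 * D.card ≤ 4 * q ^ 9 := by
      calc 64 * q ^ 8 * D.card ≤ 4 * q ^ 6 * (X.card ^ 2 * Y.card) * D.card := by gcongr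
        _ = 4 * q ^ 6 * (X.card * Y.card * X.card * D.card) := by ring
        _ ≤ 4 * q ^ 6 * q ^ 3 := by gcongr
        _ = 4 * q ^ 9 := by ring
    have e2 : (4 * q ^ 8) * (16 * D.card) ≤ (4 * q ^ 8) * q := by
      calc _ = 64 * q ^ 8 * D.card := by ring
        _ ≤ _ := e1
        _ = _ := by ring
    exact Nat.le_of_mul_le_mul_left e2 (by positivity)
  have h5 : ∃ z ∈ Z, x - z ∈ Z := by
    by_contra hcon
    push Not at hcon
    have : Z.card ≤ D.card := by
      apply Finset.card_le_card_of_injOn (fun z => x - z)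
      · intro z hz
        have := hcon z hz
        rw [hZd, Finset.mem_filter] at this
        rw [hDd, Finset.mem_coe, Finset.mem_filter]
        exact ⟨Finset.mem_univ _, fun h => this ⟨Finset.mem_univ _, h⟩⟩
      · intro a _ b _ h
        simpa using h
    omega
  obtain ⟨z, hz, hz'⟩ := h5
  rw [hZd, Finset.mem_filter] at hz hz'
  have : hgu x = hgu z * hgu (x - z) := by rw [hgu_mul]; congr 1; ring
  rw [this]
  exact hg_mem_mul (m := 8) (n := 8) hz.2 hz'.2

set_option maxRecDepth 8000 in
/-- large sets generate in 64 steps -/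
lemma hg_terminal {H : Finset (Matrix.SpecialLinearGroup (Fin 2) F)} (hs : ∀ h ∈ H, h⁻¹ ∈ H)
    (h1 : 1 ∈ H) (hbig : 64 * Fintype.card F ^ 8 ≤ H.card ^ 3) :
    H ^ (64:ℕ) = Finset.univ := by
  have hU := hg_term_U hs h1 hbig
  let w : Matrix.SpecialLinearGroup (Fin 2) F := ⟨!![0, 1; -1, 0], by simp [Matrix.det_fin_two]⟩
  have hV : ∀ x, w * hgu x * w⁻¹ ∈ H ^ (16:ℕ) := by
    intro x
    let φ := (MulAut.conj w⁻¹).toMonoidHom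
    have hφ : Function.Injective φ := (MulAut.conj w⁻¹).injective
    have := hg_term_U (H := H.image φ) (by
      intro h hh
      obtain ⟨a, ha, rfl⟩ := Finset.mem_image.mp hh
      rw [← map_inv]
      exact Finset.mem_image_of_mem _ (hs a ha)) (by
      rw [← map_one φ]; exact Finset.mem_image_of_mem _ h1) (by
      rw [Finset.card_image_of_injective _ hφ]; exact hbig) x
    rw [← Finset.image_pow] at this
    obtain ⟨a, ha, he⟩ := Finset.mem_image.mp this
    have e2 : a = w * hgu x * w⁻¹ := by
      rw [← he]
      simp [φ, mul_assoc]
    rw [← e2]; exact ha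
  let v : F → Matrix.SpecialLinearGroup (Fin 2) F := fun x =>
    ⟨!![1, 0; x, 1], by simp [Matrix.det_fin_two]⟩
  have hv : ∀ x, v x ∈ H ^ (16:ℕ) := by
    intro x
    have : v x = w * hgu (-x) * w⁻¹ := by
      obtain ⟨i1, i2, i3, i4⟩ := hg_inv_entries w
      apply hg_ext <;> simp only [hg_mul_entries, i1, i2, i3, i4] <;> simp [v, w, hgu]
    rw [this]; exact hV _
  have step : ∀ g : Matrix.SpecialLinearGroup (Fin 2) F, g.1 1 0 ≠ 0 → g ∈ H ^ (48:ℕ) := by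
    intro g hc
    have hd := hg_det g
    have : g = hgu ((g.1 0 0 - 1) / g.1 1 0) * v (g.1 1 0) * hgu ((g.1 1 1 - 1) / g.1 1 0) := by
      apply hg_ext <;> simp only [hg_mul_entries] <;> simp [v, hgu] <;> field_simp
      · ring
      · linear_combination (-1) * hd
      · ring
    rw [this]
    exact hg_mem_mul' 48 (by norm_num) (hg_mem_mul' 32 (by norm_num) (hU _) (hv _)) (hU _)
  rw [Finset.eq_univ_iff_forall]
  intro g
  by_cases hc : g.1 1 0 = 0
  · have hd := hg_det g
    have hg : g = (g * v 1) * v (-1) := by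
      have : v 1 * v (-1) = 1 := by
        apply hg_ext <;> simp only [hg_mul_entries] <;> simp [v]
      rw [mul_assoc, this, mul_one]
    rw [hg]
    refine hg_mem_mul' 64 (by norm_num) (step _ ?_) (hv _)
    rw [hg_mul_entries, hc]
    rw [hc] at hd
    intro h0
    have : g.1 1 1 = 0 := by simpa [v] using h0
    rw [this] at hd
    simp at hd
  · exact hg_mono h1 (by norm_num) (step g hc)

end terminal2

set_option linter.unusedSectionVars false

section stab
variable {F : Type*} [Field F] [Fintype F] [DecidableEq F]

/-- `g` fixes the vector `(x, y)` -/
def hgfix (x y : F) (g : Matrix.SpecialLinearGroup (Fin 2) F) : Prop :=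
  g.1 0 0 * x + g.1 0 1 * y = x ∧ g.1 1 0 * x + g.1 1 1 * y = y

instance (x y : F) : DecidablePred (hgfix x y) := fun g => by unfold hgfix; infer_instance

/-- the form vanishing iff `(x, y)` is an eigenvector (or zero) -/
def hgq (g : Matrix.SpecialLinearGroup (Fin 2) F) (x y : F) : F :=
  x * (g.1 1 0 * x + g.1 1 1 * y) - y * (g.1 0 0 * x + g.1 0 1 * y)

lemma hgfix_mul {x y : F} {g h : Matrix.SpecialLinearGroup (Fin 2) F} (hg : hgfix x y g) (hh : hgfix x y h) :
    hgfix x y (g * h) := by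
  obtain ⟨a, b⟩ := hg
  obtain ⟨c, d⟩ := hh
  constructor <;> rw [hg_mul_entries, hg_mul_entries]
  · linear_combination a + g.1 0 0 * c + g.1 0 1 * d
  · linear_combination b + g.1 1 0 * c + g.1 1 1 * d

lemma hgfix_inv {x y : F} {g : Matrix.SpecialLinearGroup (Fin 2) F} (hg : hgfix x y g) : hgfix x y g⁻¹ := by
  obtain ⟨a, b⟩ := hg
  obtain ⟨i1, i2, i3, i4⟩ := hg_inv_entries g
  have hd := hg_det g
  constructor <;> simp only [i1, i2, i3, i4]
  · linear_combination x * hd - g.1 1 1 * a + g.1 0 1 * b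
  · linear_combination y * hd + g.1 1 0 * a - g.1 0 0 * b

lemma hg_move {H : Finset (Matrix.SpecialLinearGroup (Fin 2) F)} (hs : ∀ h ∈ H, h⁻¹ ∈ H)
    (hgen : Subgroup.closure (H : Set (Matrix.SpecialLinearGroup (Fin 2) F)) = ⊤) {x y : F} (hxy : x ≠ 0 ∨ y ≠ 0) :
    ∃ h ∈ H, hgq h x y ≠ 0 := by
  by_contra hcon
  push Not at hcon
  have key : ∀ g : Matrix.SpecialLinearGroup (Fin 2) F, hgq g x y = 0 := by
    apply hg_ind hs hgen
    · simp [hgq]; ring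
    · intro h hh g hg
      have h0 := hcon h hh
      unfold hgq at *
      simp only [hg_mul_entries]
      rcases hxy with hx | hy
      · apply (mul_eq_zero.mp (?_ : x * _ = 0)).resolve_left hx
        linear_combination (g.1 0 0 * x + g.1 0 1 * y) * h0 + (x * h.1 1 1 - y * h.1 0 1) * hg
      · apply (mul_eq_zero.mp (?_ : y * _ = 0)).resolve_left hy
        linear_combination (g.1 1 0 * x + g.1 1 1 * y) * h0 - (x * h.1 1 0 - y * h.1 0 0) * hg
  have k1 := key (hgu 1)
  have k2 := key ⟨!![1, 0; 1, 1], by simp [Matrix.det_fin_two]⟩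
  simp [hgq, hgu] at k1 k2
  have y0 : y = 0 := by
    have : y * y = 0 := by linear_combination -k1
    simpa using this
  have x0 : x = 0 := by
    have : x * x = 0 := by linear_combination k2
    simpa using this
  rcases hxy with h | h
  · exact h x0
  · exact h y0

lemma hg_stab_card {H : Finset (Matrix.SpecialLinearGroup (Fin 2) F)} (hs : ∀ h ∈ H, h⁻¹ ∈ H)
    (hgen : Subgroup.closure (H : Set (Matrix.SpecialLinearGroup (Fin 2) F)) = ⊤) {x y : F} (hxy : x ≠ 0 ∨ y ≠ 0) (k : ℕ) :
    ((H ^ k).filter (hgfix x y)).card ^ 2 ≤ (H ^ (2 * k + 2)).card := by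
  obtain ⟨h, hh, hq⟩ := hg_move hs hgen hxy
  rw [sq, ← Finset.card_product]
  apply Finset.card_le_card_of_injOn (fun u => u.1 * (h * u.2 * h⁻¹))
  · rintro ⟨u, v⟩ huv
    simp only [Finset.coe_product, Set.mem_prod, Finset.mem_coe, Finset.mem_filter] at huv
    have hH : h ∈ H ^ 1 := by rwa [pow_one]
    have hH' : h⁻¹ ∈ H ^ 1 := by rw [pow_one]; exact hs h hh
    have := hg_mem_mul huv.1.1 (hg_mem_mul (hg_mem_mul hH huv.2.1) hH')
    rw [Finset.mem_coe]
    convert this using 2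
    ring
  · rintro ⟨u, v⟩ huv ⟨u', v'⟩ huv' he
    simp only [Finset.coe_product, Set.mem_prod, Finset.mem_coe, Finset.mem_filter] at huv huv'
    simp only at he
    have e1 : u'⁻¹ * u = h * (v' * v⁻¹) * h⁻¹ := by
      rw [inv_mul_eq_iff_eq_mul]
      have : u = u * (h * v * h⁻¹) * (h * v⁻¹ * h⁻¹) := by group
      rw [this, he]; group
    have f1 : hgfix x y (u'⁻¹ * u) := hgfix_mul (hgfix_inv huv'.1.2) huv.1.2
    have f2 : hgfix x y (v' * v⁻¹) := hgfix_mul huv'.2.2 (hgfix_inv huv.2.2)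
    have e2 : (u'⁻¹ * u) * h = h * (v' * v⁻¹) := by rw [e1]; group
    generalize u'⁻¹ * u = w at *
    have hone : w = 1 := by
      generalize v' * v⁻¹ = z at *
      have c1 : ∀ i j, (w * h).1 i j = (h * z).1 i j := by intro i j; rw [e2]
      have c00 := c1 0 0
      have c01 := c1 0 1
      have c10 := c1 1 0
      have c11 := c1 1 1
      simp only [hg_mul_entries] at c00 c01 c10 c11
      obtain ⟨a1, a2⟩ := f1
      obtain ⟨b1, b2⟩ := f2
      unfold hgq at hq
      have d1 : w.1 0 0 * (h.1 0 0 * x + h.1 0 1 * y) + w.1 0 1 * (h.1 1 0 * x + h.1 1 1 * y)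
          = h.1 0 0 * x + h.1 0 1 * y := by
        linear_combination x * c00 + y * c01 + h.1 0 0 * b1 + h.1 0 1 * b2
      have d2 : w.1 1 0 * (h.1 0 0 * x + h.1 0 1 * y) + w.1 1 1 * (h.1 1 0 * x + h.1 1 1 * y)
          = h.1 1 0 * x + h.1 1 1 * y := by
        linear_combination x * c10 + y * c11 + h.1 1 0 * b1 + h.1 1 1 * b2
      generalize h.1 0 0 * x + h.1 0 1 * y = p at *
      generalize h.1 1 0 * x + h.1 1 1 * y = r at *
      apply hg_ext <;> apply mul_right_cancel₀ hq
      · change _ = (1 : F) * _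
        linear_combination r * a1 - y * d1
      · change _ = (0 : F) * _
        linear_combination x * d1 - p * a1
      · change _ = (0 : F) * _
        linear_combination r * a2 - y * d2
      · change _ = (1 : F) * _
        linear_combination x * d2 - p * a2
    have hu : u = u' := by
      subst hone
      have : u * (h * v * h⁻¹) = u * (h * v * h⁻¹) := rfl
      rw [eq_comm, mul_inv_eq_one] at e1
      have h3 : h * (v' * v⁻¹) = h * 1 := by rw [e1, mul_one]
      have h4 : v' = v := mul_inv_eq_one.mp (mul_left_cancel h3)
      rw [h4] at he
      exact mul_right_cancel he
    subst hu
    have h5 := mul_left_cancel he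
    have h6 := mul_left_cancel (mul_right_cancel h5)
    rw [h6]

end stab


section cls
variable {F : Type*} [Field F] [Fintype F] [DecidableEq F]

/-- trace -/
def hgtr (g : Matrix.SpecialLinearGroup (Fin 2) F) : F := g.1 0 0 + g.1 1 1

/-- common eigenvector -/
def hgE (b a : Matrix.SpecialLinearGroup (Fin 2) F) : Prop :=
  ∃ x y : F, (x ≠ 0 ∨ y ≠ 0) ∧ hgq b x y = 0 ∧ hgq a x y = 0

lemma hg_core (n1 n2 n3 : F) (hn : n1 ≠ 0 ∨ n2 ≠ 0 ∨ n3 ≠ 0) (hd : n1 ^ 2 + n2 * n3 = 0) :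
    ∃ x y : F, (x ≠ 0 ∨ y ≠ 0) ∧ ∀ g : Matrix.SpecialLinearGroup (Fin 2) F,
      n1 * (g.1 0 0 - g.1 1 1) + n2 * g.1 1 0 + n3 * g.1 0 1 = 0 → hgq g x y = 0 := by
  by_cases h : n1 ≠ 0 ∨ n3 ≠ 0
  · refine ⟨n1, n3, h, ?_⟩
    intro g hg
    unfold hgq
    linear_combination (-n3) * hg + g.1 1 0 * hd
  · push Not at h
    obtain ⟨h1, h3⟩ := h
    have h2 : n2 ≠ 0 := by simpa [h1, h3] using hn
    refine ⟨1, 0, Or.inl one_ne_zero, ?_⟩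
    intro g hg
    have : g.1 1 0 = 0 := by simpa [h1, h3, h2] using hg
    simp [hgq, this]

lemma hg_TD {T D γ : F} (h1 : T + D = 0) (h2 : γ * T + γ ^ 2 * D = 0) (g0 : γ ≠ 0) (g1 : γ ≠ 1) :
    T = 0 ∧ D = 0 := by
  have : γ * (γ - 1) * D = 0 := by linear_combination h2 - γ * h1
  have hD : D = 0 := (mul_eq_zero.mp this).resolve_left (mul_ne_zero g0 (sub_ne_zero.mpr g1))
  exact ⟨by rw [hD] at h1; simpa using h1, hD⟩

lemma hg_dep {t : F} (ht : t ≠ 0) {a b c : Matrix.SpecialLinearGroup (Fin 2) F} (ha : hgtr a = t) (hb : hgtr b = t)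
    (hc : hgtr c = t) (hab : a ≠ b) (hcb : c ≠ b) (hca : c ≠ a) (α β : F)
    (h : ∀ i j, c.1 i j = α * a.1 i j + β * b.1 i j) : hgE b a := by
  have h00 := h 0 0
  have h01 := h 0 1
  have h10 := h 1 0
  have h11 := h 1 1
  have da := hg_det a
  have db := hg_det b
  have dc := hg_det c
  unfold hgtr at ha hb hc
  have hβ : β = 1 - α := by
    apply mul_right_cancel₀ ht
    linear_combination hc - h00 - h11 - α * ha - β * hb
  have a0 : α ≠ 0 := by
    rintro rfl
    apply hcb
    subst hβ
    apply hg_ext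
    · rw [h00]; ring
    · rw [h01]; ring
    · rw [h10]; ring
    · rw [h11]; ring
  have a1 : α ≠ 1 := by
    rintro rfl
    apply hca
    subst hβ
    apply hg_ext
    · rw [h00]; ring
    · rw [h01]; ring
    · rw [h10]; ring
    · rw [h11]; ring
  rw [h00, h01, h10, h11, hβ] at dc
  obtain ⟨n1, e1⟩ : ∃ n, a.1 0 0 = b.1 0 0 + n := ⟨_, (add_sub_cancel _ _).symm⟩
  obtain ⟨n2, e2⟩ : ∃ n, a.1 0 1 = b.1 0 1 + n := ⟨_, (add_sub_cancel _ _).symm⟩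
  obtain ⟨n3, e3⟩ : ∃ n, a.1 1 0 = b.1 1 0 + n := ⟨_, (add_sub_cancel _ _).symm⟩
  have e4 : a.1 1 1 = b.1 1 1 - n1 := by linear_combination ha - hb - e1
  rw [e1, e2, e3, e4] at dc da
  obtain ⟨hT, hD⟩ := hg_TD (T := - b.1 0 0 * n1 + b.1 1 1 * n1 - b.1 0 1 * n3 - b.1 1 0 * n2)
    (D := -n1 ^ 2 - n2 * n3) (γ := α) (by linear_combination da - db)
    (by linear_combination dc - db) a0 a1
  obtain ⟨x, y, hxy, hg⟩ := hg_core n1 n2 n3 (by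
    by_contra hcon
    push Not at hcon
    obtain ⟨z1, z2, z3⟩ := hcon
    apply hab
    subst z1 z2 z3
    simp only [add_zero, sub_zero] at e1 e2 e3 e4
    exact hg_ext e1 e2 e3 e4) (by linear_combination -hD)
  refine ⟨x, y, hxy, hg b ?_, hg a ?_⟩
  · linear_combination -hT
  · rw [e1, e2, e3, e4]
    linear_combination -hT - 2 * hD

lemma hg_par {w1 w2 w3 m1 m2 m3 : F} (hw : w1 ≠ 0 ∨ w2 ≠ 0 ∨ w3 ≠ 0)
    (h12 : m1 * w2 = m2 * w1) (h13 : m1 * w3 = m3 * w1) (h23 : m2 * w3 = m3 * w2) :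
    ∃ μ, m1 = μ * w1 ∧ m2 = μ * w2 ∧ m3 = μ * w3 := by
  rcases hw with h | h | h
  · refine ⟨m1 / w1, ?_, ?_, ?_⟩ <;> field_simp
    · linear_combination -h12
    · linear_combination -h13
  · refine ⟨m2 / w2, ?_, ?_, ?_⟩ <;> field_simp
    · linear_combination h12
    · linear_combination -h23
  · refine ⟨m3 / w3, ?_, ?_, ?_⟩ <;> field_simp
    · linear_combination h13
    · linear_combination h23

lemma hg_fiber {t : F} (ht : t ≠ 0) {b b' b'' X Y : Matrix.SpecialLinearGroup (Fin 2) F}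
    (tb : hgtr b = t) (tb' : hgtr b' = t) (tb'' : hgtr b'' = t)
    (tX : hgtr (b * X) = t) (tX' : hgtr (b' * X) = t) (tX'' : hgtr (b'' * X) = t)
    (tY : hgtr (b * Y) = t) (tY' : hgtr (b' * Y) = t) (tY'' : hgtr (b'' * Y) = t)
    (n1 : b' ≠ b) (n2 : b'' ≠ b) (n3 : b'' ≠ b')
    (hX : b * X ≠ b) (hY : b * Y ≠ b) (hXY : b * Y ≠ b * X) : hgE b (b * X) := by
  have db := hg_det b
  have db' := hg_det b'
  have db'' := hg_det b''
  have dX := hg_det X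
  by_cases hw : X.1 1 0 * Y.1 0 1 - X.1 0 1 * Y.1 1 0 ≠ 0 ∨
      X.1 0 1 * (Y.1 0 0 - Y.1 1 1) - (X.1 0 0 - X.1 1 1) * Y.1 0 1 ≠ 0 ∨
      (X.1 0 0 - X.1 1 1) * Y.1 1 0 - X.1 1 0 * (Y.1 0 0 - Y.1 1 1) ≠ 0
  · unfold hgtr at *
    simp only [hg_mul_entries] at tX tX' tX'' tY tY' tY''
    obtain ⟨m1, e1⟩ : ∃ n, b'.1 0 0 = b.1 0 0 + n := ⟨_, (add_sub_cancel _ _).symm⟩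
    obtain ⟨m2, e2⟩ : ∃ n, b'.1 0 1 = b.1 0 1 + n := ⟨_, (add_sub_cancel _ _).symm⟩
    obtain ⟨m3, e3⟩ : ∃ n, b'.1 1 0 = b.1 1 0 + n := ⟨_, (add_sub_cancel _ _).symm⟩
    have e4 : b'.1 1 1 = b.1 1 1 - m1 := by linear_combination tb' - tb - e1
    obtain ⟨k1, f1⟩ : ∃ n, b''.1 0 0 = b.1 0 0 + n := ⟨_, (add_sub_cancel _ _).symm⟩
    obtain ⟨k2, f2⟩ : ∃ n, b''.1 0 1 = b.1 0 1 + n := ⟨_, (add_sub_cancel _ _).symm⟩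
    obtain ⟨k3, f3⟩ : ∃ n, b''.1 1 0 = b.1 1 0 + n := ⟨_, (add_sub_cancel _ _).symm⟩
    have f4 : b''.1 1 1 = b.1 1 1 - k1 := by linear_combination tb'' - tb - f1
    rw [e1, e2, e3, e4] at tX' tY' db'
    rw [f1, f2, f3, f4] at tX'' tY'' db''
    have mX : m1 * (X.1 0 0 - X.1 1 1) + m2 * X.1 1 0 + m3 * X.1 0 1 = 0 := by
      linear_combination tX' - tX
    have mY : m1 * (Y.1 0 0 - Y.1 1 1) + m2 * Y.1 1 0 + m3 * Y.1 0 1 = 0 := by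
      linear_combination tY' - tY
    have kX : k1 * (X.1 0 0 - X.1 1 1) + k2 * X.1 1 0 + k3 * X.1 0 1 = 0 := by
      linear_combination tX'' - tX
    have kY : k1 * (Y.1 0 0 - Y.1 1 1) + k2 * Y.1 1 0 + k3 * Y.1 0 1 = 0 := by
      linear_combination tY'' - tY
    obtain ⟨μ, u1, u2, u3⟩ := hg_par (m1 := m1) (m2 := m2) (m3 := m3) hw
      (by linear_combination (-Y.1 0 1) * mX + X.1 0 1 * mY)
      (by linear_combination Y.1 1 0 * mX - X.1 1 0 * mY)
      (by linear_combination (-(Y.1 0 0 - Y.1 1 1)) * mX + (X.1 0 0 - X.1 1 1) * mY)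
    obtain ⟨ν, v1, v2, v3⟩ := hg_par (m1 := k1) (m2 := k2) (m3 := k3) hw
      (by linear_combination (-Y.1 0 1) * kX + X.1 0 1 * kY)
      (by linear_combination Y.1 1 0 * kX - X.1 1 0 * kY)
      (by linear_combination (-(Y.1 0 0 - Y.1 1 1)) * kX + (X.1 0 0 - X.1 1 1) * kY)
    have hm : m1 ≠ 0 ∨ m2 ≠ 0 ∨ m3 ≠ 0 := by
      by_contra hcon
      push Not at hcon
      obtain ⟨z1, z2, z3⟩ := hcon
      rw [z1] at e1 e4
      rw [z2] at e2
      rw [z3] at e3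
      simp only [add_zero, sub_zero] at e1 e2 e3 e4
      exact n1 (hg_ext e1 e2 e3 e4)
    have hμ : μ ≠ 0 := by
      rintro rfl
      simp [u1, u2, u3] at hm
    obtain ⟨γ, hγ⟩ : ∃ γ, ν = γ * μ := ⟨ν / μ, by field_simp⟩
    have w1 : k1 = γ * m1 := by rw [v1, hγ, u1]; ring
    have w2 : k2 = γ * m2 := by rw [v2, hγ, u2]; ring
    have w3 : k3 = γ * m3 := by rw [v3, hγ, u3]; ring
    clear u1 u2 u3 v1 v2 v3
    have g0 : γ ≠ 0 := by
      rintro rfl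
      simp only [w1, w2, w3, zero_mul, add_zero, sub_zero] at f1 f2 f3 f4
      exact n2 (hg_ext f1 f2 f3 f4)
    have g1 : γ ≠ 1 := by
      rintro rfl
      simp only [w1, w2, w3, one_mul] at f1 f2 f3 f4
      rw [← e1] at f1
      rw [← e2] at f2
      rw [← e3] at f3
      rw [← e4] at f4
      exact n3 (hg_ext f1 f2 f3 f4)
    rw [w1, w2, w3] at db''
    obtain ⟨hT, hD⟩ := hg_TD (T := - b.1 0 0 * m1 + b.1 1 1 * m1 - b.1 0 1 * m3 - b.1 1 0 * m2)
      (D := -m1 ^ 2 - m2 * m3) (γ := γ) (by linear_combination db' - db)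
      (by linear_combination db'' - db) g0 g1
    obtain ⟨x, y, hxy, hg⟩ := hg_core (m1 * b.1 1 1 - m2 * b.1 1 0) (-m1 * b.1 0 1 + m2 * b.1 0 0)
      (m3 * b.1 1 1 + m1 * b.1 1 0) (by
      by_contra hcon
      push Not at hcon
      obtain ⟨z1, z2, z3⟩ := hcon
      have y1 : m1 = 0 := by
        linear_combination b.1 0 0 * z1 + b.1 1 0 * z2 - m1 * db
      have y2 : m2 = 0 := by
        linear_combination b.1 0 1 * z1 + b.1 1 1 * z2 - m2 * db
      have y3 : m3 = 0 := by
        linear_combination b.1 0 0 * z3 - b.1 1 0 * z1 + b.1 1 0 * hT - m3 * db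
      simp [y1, y2, y3] at hm) (by
        linear_combination (m1 * b.1 1 1 - m2 * b.1 1 0) * hT - (b.1 0 0 * b.1 1 1 - b.1 0 1 * b.1 1 0) * hD)
    refine ⟨x, y, hxy, hg b ?_, hg (b * X) ?_⟩
    · linear_combination (-b.1 1 1) * hT
    · simp only [hg_mul_entries]
      linear_combination (b.1 0 0 * b.1 1 1 - b.1 0 1 * b.1 1 0) * mX - (b.1 1 0 * X.1 0 1 + b.1 1 1 * X.1 1 1) * hT
  · push Not at hw
    obtain ⟨w1, w2, w3⟩ := hw
    have hx : X.1 0 0 - X.1 1 1 ≠ 0 ∨ X.1 1 0 ≠ 0 ∨ X.1 0 1 ≠ 0 := by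
      by_contra hcon
      push Not at hcon
      obtain ⟨z1, z2, z3⟩ := hcon
      have tX0 := tX
      unfold hgtr at tX tb
      simp only [hg_mul_entries] at tX
      have : X.1 1 1 = 1 := by
        apply mul_right_cancel₀ ht
        rw [z2, z3] at tX
        linear_combination tX - X.1 1 1 * tb - b.1 0 0 * z1
      have : X = 1 := by
        apply hg_ext
        · change _ = (1 : F)
          linear_combination z1 + this
        · change _ = (0 : F)
          exact z3
        · change _ = (0 : F)
          exact z2
        · exact this
      rw [this, mul_one] at hX
      exact hX rfl
    obtain ⟨c, c1, c2, c3⟩ := hg_par (m1 := Y.1 0 0 - Y.1 1 1) (m2 := Y.1 1 0) (m3 := Y.1 0 1) hx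
      (by linear_combination -w3) (by linear_combination w2) (by linear_combination -w1)
    refine hg_dep ht tX tb tY hX hY hXY c (Y.1 1 1 - c * X.1 1 1) ?_
    have c0 : Y.1 0 0 = Y.1 1 1 + c * (X.1 0 0 - X.1 1 1) := by linear_combination c1
    intro i j
    fin_cases j
    · change (b * Y).1 i 0 = c * (b * X).1 i 0 + _ * b.1 i 0
      rw [hg_mul_entries, hg_mul_entries, c0, c2]; ring
    · change (b * Y).1 i 1 = c * (b * X).1 i 1 + _ * b.1 i 1
      rw [hg_mul_entries, hg_mul_entries, c3]; ring

end cls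


section cls2
variable {F : Type*} [Field F] [Fintype F] [DecidableEq F]

lemma hg_root_card (t : F) : (Finset.univ.filter (fun l : F => l ^ 2 - t * l + 1 = 0)).card ≤ 2 := by
  rcases (Finset.univ.filter (fun l : F => l ^ 2 - t * l + 1 = 0)).eq_empty_or_nonempty with h | ⟨l0, h0⟩
  · rw [h]; simp
  · refine le_trans (Finset.card_le_card (t := {l0, t - l0}) ?_) Finset.card_le_two
    intro l hl
    rw [Finset.mem_filter] at hl h0
    have : (l - l0) * (l - (t - l0)) = 0 := by linear_combination hl.2 - h0.2
    rw [Finset.mem_insert, Finset.mem_singleton]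
    rcases mul_eq_zero.mp this with h | h
    · exact Or.inl (sub_eq_zero.mp h)
    · exact Or.inr (sub_eq_zero.mp h)

lemma hg_eig {x y : F} (hxy : x ≠ 0 ∨ y ≠ 0) (a : Matrix.SpecialLinearGroup (Fin 2) F) : ∃ l : F, hgq a x y = 0 →
    a.1 0 0 * x + a.1 0 1 * y = l * x ∧ a.1 1 0 * x + a.1 1 1 * y = l * y := by
  rcases hxy with h | h
  · refine ⟨(a.1 0 0 * x + a.1 0 1 * y) / x, fun hq => ⟨by field_simp, ?_⟩⟩
    unfold hgq at hq
    field_simp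
    linear_combination hq
  · refine ⟨(a.1 1 0 * x + a.1 1 1 * y) / y, fun hq => ⟨?_, by field_simp⟩⟩
    unfold hgq at hq
    field_simp
    linear_combination -hq

lemma hg_eig_root {x y : F} (hxy : x ≠ 0 ∨ y ≠ 0) (a : Matrix.SpecialLinearGroup (Fin 2) F) {l : F}
    (h1 : a.1 0 0 * x + a.1 0 1 * y = l * x) (h2 : a.1 1 0 * x + a.1 1 1 * y = l * y) :
    l ^ 2 - hgtr a * l + 1 = 0 := by
  have hd := hg_det a
  unfold hgtr
  rcases hxy with h | h <;> apply mul_right_cancel₀ h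
  · linear_combination (a.1 1 1 - l) * h1 - a.1 0 1 * h2 - x * hd
  · linear_combination (a.1 0 0 - l) * h2 - a.1 1 0 * h1 - y * hd

lemma hg_line_card {t : F} {A P : Finset (Matrix.SpecialLinearGroup (Fin 2) F)} {s : ℕ} (hA : ∀ a ∈ A, hgtr a = t)
    (hP : ∀ a ∈ A, ∀ b ∈ A, b⁻¹ * a ∈ P) {x y : F} (hxy : x ≠ 0 ∨ y ≠ 0)
    (hs : (P.filter (hgfix x y)).card ≤ s) :
    (A.filter (fun a => hgq a x y = 0)).card ≤ 2 * s := by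
  choose l hl using fun a : Matrix.SpecialLinearGroup (Fin 2) F => hg_eig hxy a
  have := Finset.card_le_mul_card_image_of_maps_to (s := A.filter (fun a => hgq a x y = 0))
    (t := Finset.univ.filter (fun l : F => l ^ 2 - t * l + 1 = 0)) (f := l) (by
      intro a ha
      rw [Finset.mem_filter] at ha
      rw [Finset.mem_filter]
      refine ⟨Finset.mem_univ _, ?_⟩
      have h := hl a ha.2
      rw [← hA a ha.1]
      exact hg_eig_root hxy a h.1 h.2) s (by
      intro r _
      rcases (Finset.filter (fun a => l a = r) (A.filter (fun a => hgq a x y = 0))).eq_empty_or_nonempty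
        with h | ⟨a0, h0⟩
      · rw [h]; simp
      · refine le_trans ?_ hs
        rw [Finset.mem_filter, Finset.mem_filter] at h0
        apply Finset.card_le_card_of_injOn (fun a => a0⁻¹ * a)
        · intro a ha
          rw [Finset.mem_coe, Finset.mem_filter, Finset.mem_filter] at ha
          rw [Finset.mem_coe, Finset.mem_filter]
          refine ⟨hP a ha.1.1 a0 h0.1.1, ?_⟩
          have e1 := hl a ha.1.2
          have e2 := hl a0 h0.1.2
          rw [ha.2] at e1
          rw [h0.2] at e2
          have hd := hg_det a0
          obtain ⟨i1, i2, i3, i4⟩ := hg_inv_entries a0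
          constructor <;> simp only [hg_mul_entries, i1, i2, i3, i4]
          · linear_combination a0.1 1 1 * (e1.1 - e2.1) - a0.1 0 1 * (e1.2 - e2.2) + x * hd
          · linear_combination a0.1 0 0 * (e1.2 - e2.2) - a0.1 1 0 * (e1.1 - e2.1) + y * hd
        · intro a _ b _ he
          exact mul_left_cancel he)
  calc _ ≤ s * _ := this
    _ ≤ s * 2 := Nat.mul_le_mul_left _ (hg_root_card t)
    _ = 2 * s := mul_comm _ _

lemma hg_q_par {a : Matrix.SpecialLinearGroup (Fin 2) F} {x y u v : F} (hxy : x ≠ 0 ∨ y ≠ 0) (hp : x * v = y * u)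
    (h : hgq a x y = 0) : hgq a u v = 0 := by
  unfold hgq at *
  rcases hxy with hx | hx
  · apply (mul_eq_zero.mp (?_ : (x ^ 2) * _ = 0)).resolve_left (pow_ne_zero 2 hx)
    linear_combination u ^ 2 * h + ((a.1 1 1 - a.1 0 0) * x * u - a.1 0 1 * (x * v + y * u)) * hp
  · apply (mul_eq_zero.mp (?_ : (y ^ 2) * _ = 0)).resolve_left (pow_ne_zero 2 hx)
    linear_combination v ^ 2 * h - ((a.1 1 1 - a.1 0 0) * y * v + a.1 1 0 * (x * v + y * u)) * hp

/-- three non-parallel eigenvectors force `b` to be scalar -/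
lemma hg_three {t : F} (ht : t ^ 2 ≠ 4) {b : Matrix.SpecialLinearGroup (Fin 2) F} (hb : hgtr b = t) {x1 y1 x2 y2 x3 y3 : F}
    (q1 : hgq b x1 y1 = 0) (q2 : hgq b x2 y2 = 0) (q3 : hgq b x3 y3 = 0)
    (h12 : x1 * y2 ≠ y1 * x2) (h13 : x1 * y3 ≠ y1 * x3) (h23 : x2 * y3 ≠ y2 * x3) : False := by
  have hV := mul_ne_zero (mul_ne_zero (sub_ne_zero.mpr h12) (sub_ne_zero.mpr h13)) (sub_ne_zero.mpr h23)
  have hd := hg_det b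
  unfold hgq hgtr at *
  have c1 : b.1 1 0 = 0 := by
    apply mul_right_cancel₀ hV
    linear_combination (x2 * y2 * y3 ^ 2 - y2 ^ 2 * x3 * y3) * q1
      - (x1 * y1 * y3 ^ 2 - y1 ^ 2 * x3 * y3) * q2 + (x1 * y1 * y2 ^ 2 - y1 ^ 2 * x2 * y2) * q3
  have c2 : b.1 0 1 = 0 := by
    apply mul_right_cancel₀ hV
    linear_combination -(x2 ^ 2 * x3 * y3 - x2 * y2 * x3 ^ 2) * q1
      + (x1 ^ 2 * x3 * y3 - x1 * y1 * x3 ^ 2) * q2 - (x1 ^ 2 * x2 * y2 - x1 * y1 * x2 ^ 2) * q3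
  have c3 : b.1 1 1 - b.1 0 0 = 0 := by
    apply mul_right_cancel₀ hV
    linear_combination -(x2 ^ 2 * y3 ^ 2 - y2 ^ 2 * x3 ^ 2) * q1
      + (x1 ^ 2 * y3 ^ 2 - y1 ^ 2 * x3 ^ 2) * q2 - (x1 ^ 2 * y2 ^ 2 - y1 ^ 2 * x2 ^ 2) * q3
  apply ht
  rw [c1, c2] at hd
  rw [← hb]
  linear_combination 4 * hd + (b.1 1 1 - b.1 0 0) * c3

open Classical in
lemma hg_E_card {t : F} (ht : t ^ 2 ≠ 4) {A P : Finset (Matrix.SpecialLinearGroup (Fin 2) F)} {s : ℕ} (hA : ∀ a ∈ A, hgtr a = t)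
    (hP : ∀ a ∈ A, ∀ b ∈ A, b⁻¹ * a ∈ P)
    (hs : ∀ x y : F, (x ≠ 0 ∨ y ≠ 0) → (P.filter (hgfix x y)).card ≤ s) {b : Matrix.SpecialLinearGroup (Fin 2) F} (hb : b ∈ A) :
    (A.filter (fun a => hgE b a)).card ≤ 4 * s := by
  by_cases h1 : ∃ x y : F, (x ≠ 0 ∨ y ≠ 0) ∧ hgq b x y = 0
  · obtain ⟨x1, y1, n1, q1⟩ := h1
    have k1 := hg_line_card hA hP n1 (hs x1 y1 n1)
    by_cases h2 : ∃ x y : F, (x ≠ 0 ∨ y ≠ 0) ∧ hgq b x y = 0 ∧ x1 * y ≠ y1 * x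
    · obtain ⟨x2, y2, n2, q2, h12⟩ := h2
      have k2 := hg_line_card hA hP n2 (hs x2 y2 n2)
      have hsub : A.filter (fun a => hgE b a) ⊆ A.filter (fun a => hgq a x1 y1 = 0) ∪
          A.filter (fun a => hgq a x2 y2 = 0) := by
        intro a ha
        rw [Finset.mem_filter] at ha
        obtain ⟨haA, x, y, n, q, q'⟩ := ha
        rw [Finset.mem_union, Finset.mem_filter, Finset.mem_filter]
        by_cases p1 : x1 * y = y1 * x
        · left
          exact ⟨haA, hg_q_par n (by linear_combination -p1) q'⟩
        · right
          by_cases p2 : x2 * y = y2 * x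
          · exact ⟨haA, hg_q_par n (by linear_combination -p2) q'⟩
          · exact (hg_three ht (hA b hb) q1 q2 q h12 p1 p2).elim
      have := (Finset.card_le_card hsub).trans (Finset.card_union_le _ _)
      omega
    · push Not at h2
      have hsub : A.filter (fun a => hgE b a) ⊆ A.filter (fun a => hgq a x1 y1 = 0) := by
        intro a ha
        rw [Finset.mem_filter] at ha
        obtain ⟨haA, x, y, n, q, q'⟩ := ha
        rw [Finset.mem_filter]
        exact ⟨haA, hg_q_par n (by linear_combination -(h2 x y n q)) q'⟩
      have := Finset.card_le_card hsub
      omega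
  · have : A.filter (fun a => hgE b a) = ∅ := by
      rw [Finset.filter_eq_empty_iff]
      rintro a _ ⟨x, y, n, q, _⟩
      exact h1 ⟨x, y, n, q⟩
    rw [this]; simp

open Classical in
lemma hg_triples {t : F} (ht0 : t ≠ 0) (ht : t ^ 2 ≠ 4) {A P : Finset (Matrix.SpecialLinearGroup (Fin 2) F)} {s : ℕ}
    (hA : ∀ a ∈ A, hgtr a = t)
    (hP : ∀ a ∈ A, ∀ b ∈ A, b⁻¹ * a ∈ P)
    (hs : ∀ x y : F, (x ≠ 0 ∨ y ≠ 0) → (P.filter (hgfix x y)).card ≤ s) :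
    A.card * ((A.card - (4 * s + 1)) * (A.card - 2)) ≤ 2 * P.card ^ 2 := by
  let T : Finset (Σ _ : Matrix.SpecialLinearGroup (Fin 2) F, Σ _ : Matrix.SpecialLinearGroup (Fin 2) F, Matrix.SpecialLinearGroup (Fin 2) F) := A.sigma (fun b =>
    (A \ (A.filter (fun a => hgE b a) ∪ {b})).sigma (fun a => A \ {b, a}))
  have hT1 : A.card * ((A.card - (4 * s + 1)) * (A.card - 2)) ≤ T.card := by
    rw [Finset.card_sigma, ← smul_eq_mul]
    apply Finset.card_nsmul_le_sum
    intro b hb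
    rw [Finset.card_sigma]
    have c1 : A.card - (4 * s + 1) ≤ (A \ (A.filter (fun a => hgE b a) ∪ {b})).card := by
      refine le_trans ?_ (Finset.le_card_sdiff _ _)
      have := Finset.card_union_le (A.filter (fun a => hgE b a)) {b}
      have h2 := hg_E_card ht hA hP hs hb
      rw [Finset.card_singleton] at this
      omega
    refine le_trans (Nat.mul_le_mul_right _ c1) ?_
    rw [← smul_eq_mul]
    apply Finset.card_nsmul_le_sum
    intro a ha
    refine le_trans ?_ (Finset.le_card_sdiff _ _)
    have := Finset.card_le_two (a := b) (b := a)
    omega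
  have hmem : ∀ b a c, (⟨b, a, c⟩ : Σ _ : Matrix.SpecialLinearGroup (Fin 2) F, Σ _ : Matrix.SpecialLinearGroup (Fin 2) F, Matrix.SpecialLinearGroup (Fin 2) F) ∈ T ↔
      b ∈ A ∧ (a ∈ A ∧ ¬ hgE b a ∧ a ≠ b) ∧ c ∈ A ∧ c ≠ b ∧ c ≠ a := by
    intro b a c
    simp only [T, Finset.mem_sigma, Finset.mem_sdiff, Finset.mem_union, Finset.mem_filter,
      Finset.mem_singleton, Finset.mem_insert]
    tauto
  refine hT1.trans ?_
  have := Finset.card_le_mul_card_image_of_maps_to (s := T) (t := P ×ˢ P)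
    (f := fun z => (z.1⁻¹ * z.2.1, z.1⁻¹ * z.2.2)) (by
      rintro ⟨b, a, c⟩ h
      rw [hmem] at h
      rw [Finset.mem_product]
      exact ⟨hP _ h.2.1.1 _ h.1, hP _ h.2.2.1 _ h.1⟩) 2 (by
      rintro ⟨X, Y⟩ _
      by_contra hcon
      push Not at hcon
      obtain ⟨z1, z2, z3, h1, h2, h3, n12, n13, n23⟩ := Finset.two_lt_card_iff.mp hcon
      obtain ⟨b1, a1, c1⟩ := z1
      obtain ⟨b2, a2, c2⟩ := z2
      obtain ⟨b3, a3, c3⟩ := z3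
      rw [Finset.mem_filter, hmem] at h1 h2 h3
      obtain ⟨⟨hb1, ⟨ha1, hE1, hab1⟩, hc1, hcb1, hca1⟩, e1⟩ := h1
      obtain ⟨⟨hb2, ⟨ha2, -, -⟩, hc2, -, -⟩, e2⟩ := h2
      obtain ⟨⟨hb3, ⟨ha3, -, -⟩, hc3, -, -⟩, e3⟩ := h3
      simp only [Prod.mk.injEq, inv_mul_eq_iff_eq_mul] at e1 e2 e3
      obtain ⟨rfl, rfl⟩ := e1
      obtain ⟨rfl, rfl⟩ := e2
      obtain ⟨rfl, rfl⟩ := e3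
      exact hE1 (hg_fiber ht0 (hA _ hb1) (hA _ hb2) (hA _ hb3) (hA _ ha1) (hA _ ha2) (hA _ ha3)
        (hA _ hc1) (hA _ hc2) (hA _ hc3) (fun h => n12 (by rw [h])) (fun h => n13 (by rw [h]))
        (fun h => n23 (by rw [h])) hab1 hcb1 hca1))
  rw [Finset.card_product, ← sq] at this
  exact this

lemma hg_arith1 {a s P Q : ℕ} (h : a * ((a - (4 * s + 1)) * (a - 2)) ≤ 2 * P ^ 2) (hs1 : 1 ≤ s)
    (hsQ : s ^ 2 ≤ Q) (hPQ : P ≤ Q) : a ^ 3 ≤ 1728 * Q ^ 2 := by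
  by_cases h12 : a ≤ 12 * s
  · calc a ^ 3 ≤ (12 * s) ^ 3 := by gcongr
      _ = 1728 * s ^ 3 := by ring
      _ ≤ 1728 * s ^ 4 := by gcongr; omega
      _ = 1728 * (s ^ 2) ^ 2 := by ring
      _ ≤ 1728 * Q ^ 2 := by gcongr
  · push Not at h12
    have e1 : a ≤ 2 * (a - (4 * s + 1)) := by omega
    have e2 : a ≤ 2 * (a - 2) := by omega
    calc a ^ 3 = a * (a * a) := by ring
      _ ≤ a * ((2 * (a - (4 * s + 1))) * (2 * (a - 2))) := by gcongr
      _ = 4 * (a * ((a - (4 * s + 1)) * (a - 2))) := by ring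
      _ ≤ 4 * (2 * P ^ 2) := by gcongr
      _ ≤ 4 * (2 * Q ^ 2) := by gcongr
      _ ≤ 1728 * Q ^ 2 := by omega

/-- bound for a conjugacy class -/
lemma hg_class {H : Finset (Matrix.SpecialLinearGroup (Fin 2) F)} (hs : ∀ h ∈ H, h⁻¹ ∈ H) (h1 : 1 ∈ H)
    (hgen : Subgroup.closure (H : Set (Matrix.SpecialLinearGroup (Fin 2) F)) = ⊤) {t : F} (ht0 : t ≠ 0) (ht : t ^ 2 ≠ 4) (k : ℕ) :
    ((H ^ k).filter (fun g => hgtr g = t)).card ^ 3 ≤ 1728 * (H ^ (4 * k + 2)).card ^ 2 := by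
  have := hg_triples (A := (H ^ k).filter (fun g => hgtr g = t)) (P := H ^ (2 * k))
    (s := ((H ^ (4 * k + 2)).card).sqrt) ht0 ht
    (fun a ha => (Finset.mem_filter.mp ha).2) (by
      intro a ha b hb
      exact hg_mem_mul' _ (by ring) (hg_inv hs k b (Finset.mem_filter.mp hb).1)
        (Finset.mem_filter.mp ha).1) (by
      intro x y hxy
      rw [Nat.le_sqrt']
      have := hg_stab_card hs hgen hxy (2 * k)
      rwa [show 2 * (2 * k) + 2 = 4 * k + 2 by ring] at this)
  refine hg_arith1 this ?_ (Nat.sqrt_le' _) (Finset.card_le_card (hg_mono h1 (by omega)))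
  rw [Nat.le_sqrt']
  exact Finset.card_pos.mpr ⟨1, hg_one h1 _⟩

end cls2


section pivot
variable {F : Type*} [Field F] [Fintype F] [DecidableEq F]

lemma hgtr_conj (a g : Matrix.SpecialLinearGroup (Fin 2) F) : hgtr (a * g * a⁻¹) = hgtr g := by
  obtain ⟨i1, i2, i3, i4⟩ := hg_inv_entries a
  have hd := hg_det a
  unfold hgtr
  simp only [hg_mul_entries, i1, i2, i3, i4]
  linear_combination (g.1 0 0 + g.1 1 1) * hd

/-- regular semisimple with nonzero trace -/
def hggood (g : Matrix.SpecialLinearGroup (Fin 2) F) : Prop := hgtr g ≠ 0 ∧ hgtr g ^ 2 ≠ 4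

instance : DecidablePred (hggood (F := F)) := fun g => by unfold hggood; infer_instance

lemma hg_comm_param {g h : Matrix.SpecialLinearGroup (Fin 2) F} (hg : hgtr g ^ 2 ≠ 4) (hc : h * g = g * h) :
    ∃ α β : F, h.1 0 0 = α + β * g.1 0 0 ∧ h.1 0 1 = β * g.1 0 1 ∧ h.1 1 0 = β * g.1 1 0 ∧
      h.1 1 1 = α + β * g.1 1 1 := by
  have hd := hg_det g
  have c : ∀ i j, (h * g).1 i j = (g * h).1 i j := by intro i j; rw [hc]
  have c00 := c 0 0
  have c01 := c 0 1
  have c10 := c 1 0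
  simp only [hg_mul_entries] at c00 c01 c10
  have hx : g.1 0 0 - g.1 1 1 ≠ 0 ∨ g.1 1 0 ≠ 0 ∨ g.1 0 1 ≠ 0 := by
    by_contra hcon
    push Not at hcon
    obtain ⟨z1, z2, z3⟩ := hcon
    apply hg
    unfold hgtr
    rw [z2] at hd
    linear_combination 4 * hd + (g.1 0 0 - g.1 1 1) * z1
  obtain ⟨β, b1, b2, b3⟩ := hg_par (m1 := h.1 0 0 - h.1 1 1) (m2 := h.1 1 0) (m3 := h.1 0 1) hx
    (by linear_combination -c10) (by linear_combination c01) (by linear_combination -c00)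
  exact ⟨h.1 0 0 - β * g.1 0 0, β, by ring, b3, b2, by linear_combination -b1⟩

lemma hg_comm_trans {g h y : Matrix.SpecialLinearGroup (Fin 2) F} (hg : hgtr g ^ 2 ≠ 4) (hc : h * g = g * h) (hy : y * g = g * y) :
    h * y = y * h := by
  obtain ⟨α, β, a1, a2, a3, a4⟩ := hg_comm_param hg hc
  obtain ⟨γ, δ, b1, b2, b3, b4⟩ := hg_comm_param hg hy
  apply hg_ext <;> simp only [hg_mul_entries, a1, a2, a3, a4, b1, b2, b3, b4] <;> ring

lemma hg_tr_card (h2 : (2 : F) ≠ 0) {g : Matrix.SpecialLinearGroup (Fin 2) F} (hg : hgtr g ^ 2 ≠ 4) (t : F) (B : Finset (Matrix.SpecialLinearGroup (Fin 2) F))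
    (hB : ∀ h ∈ B, h * g = g * h ∧ hgtr h = t) : B.card ≤ 2 := by
  have key : ∀ h ∈ B, ∃ β, 
      (β ^ 2 * (4 - hgtr g ^ 2) = 4 - t ^ 2) ∧ 2 * h.1 0 0 = t + β * (g.1 0 0 - g.1 1 1) ∧ 
      h.1 0 1 = β * g.1 0 1 ∧ h.1 1 0 = β * g.1 1 0 ∧ 
      2 * h.1 1 1 = t + β * (g.1 1 1 - g.1 0 0) := by
    intro h hh
    obtain ⟨hc, htr⟩ := hB h hh
    obtain ⟨α, β, a1, a2, a3, a4⟩ := hg_comm_param hg hc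
    have dh := hg_det h
    have dg := hg_det g
    rw [a1, a2, a3, a4] at dh
    unfold hgtr at htr ⊢
    rw [a1, a4] at htr
    refine ⟨β, ?_, ?_, a2, a3, ?_⟩
    · rw [← htr]
      linear_combination 4 * dh - 4 * β ^ 2 * dg
    · rw [a1, ← htr]; ring
    · rw [a4, ← htr]; ring
  choose! f hf using key
  rcases B.eq_empty_or_nonempty with h | ⟨h0, hh0⟩
  · rw [h]; simp
  · refine le_trans ?_ (Finset.card_le_two (a := f h0) (b := - f h0))
    apply Finset.card_le_card_of_injOn f
    · intro h hh
      have e1 := (hf h hh).1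
      have e0 := (hf h0 hh0).1
      have : f h ^ 2 = f h0 ^ 2 := by
        apply mul_right_cancel₀ (sub_ne_zero.mpr hg.symm)
        rw [e1, e0]
      simp only [Finset.coe_insert, Finset.coe_singleton, Set.mem_insert_iff,
          Set.mem_singleton_iff]
      exact sq_eq_sq_iff_eq_or_eq_neg.mp this
    · intro h hh h' hh' he
      obtain ⟨_, a1, a2, a3, a4⟩ := hf h hh
      obtain ⟨_, b1, b2, b3, b4⟩ := hf h' hh'
      rw [he] at a1 a2 a3 a4
      apply hg_ext
      · apply mul_left_cancel₀ h2; rw [a1, b1]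
      · rw [a2, b2]
      · rw [a3, b3]
      · apply mul_left_cancel₀ h2; rw [a4, b4]

lemma hg_bad_card (h2 : (2 : F) ≠ 0) {g : Matrix.SpecialLinearGroup (Fin 2) F} (hg : hgtr g ^ 2 ≠ 4) (B : Finset (Matrix.SpecialLinearGroup (Fin 2) F))
    (hB : ∀ h ∈ B, h * g = g * h ∧ ¬ hggood h) : B.card ≤ 6 := by
  have := Finset.card_le_mul_card_image_of_maps_to (s := B) (t := ({0, 2, -2} : Finset F))
    (f := hgtr) (by
      intro h hh
      have := (hB h hh).2
      unfold hggood at this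
      rw [not_and_or, not_not, not_not] at this
      simp only [Finset.mem_insert, Finset.mem_singleton]
      rcases this with h | h
      · exact Or.inl h
      · right
        apply sq_eq_sq_iff_eq_or_eq_neg.mp
        rw [h]; norm_num) 2 (by
      intro t _
      apply hg_tr_card h2 hg t
      intro h hh
      rw [Finset.mem_filter] at hh
      exact ⟨(hB h hh.1).1, hh.2⟩)
  have h3 := Finset.card_le_three (a := (0 : F)) (b := 2) (c := -2)
  omega

lemma hg_torus_card (h2 : (2 : F) ≠ 0) {g : Matrix.SpecialLinearGroup (Fin 2) F} (hg : hgtr g ^ 2 ≠ 4) (B : Finset (Matrix.SpecialLinearGroup (Fin 2) F))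
    (hB : ∀ h ∈ B, h * g = g * h) : B.card ≤ 2 * Fintype.card F := by
  have := Finset.card_le_mul_card_image_of_maps_to (s := B) (t := (Finset.univ : Finset F))
    (f := hgtr) (fun _ _ => Finset.mem_univ _) 2 (by
      intro t _
      apply hg_tr_card h2 hg t
      intro h hh
      rw [Finset.mem_filter] at hh
      exact ⟨hB h hh.1, hh.2⟩)
  rwa [Finset.card_univ] at this

lemma hg_orbit {H : Finset (Matrix.SpecialLinearGroup (Fin 2) F)} (hs : ∀ h ∈ H, h⁻¹ ∈ H) (h1 : 1 ∈ H) {g : Matrix.SpecialLinearGroup (Fin 2) F}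
    (hg : g ∈ H ^ (2:ℕ)) :
    H.card ≤ ((H ^ (4:ℕ)).filter (fun x => hgtr x = hgtr g)).card *
      ((H ^ (2:ℕ)).filter (fun h => h * g = g * h)).card := by
  have hH : ∀ h ∈ H, h ∈ H ^ (1:ℕ) := fun h hh => by rwa [pow_one]
  obtain ⟨a, ha, hc⟩ := hg_pigeon H ((H ^ (4:ℕ)).filter (fun x => hgtr x = hgtr g))
    (fun h => h * g * h⁻¹) (by
      intro h hh
      rw [Finset.mem_filter]
      exact ⟨hg_mem_mul (m := 3) (n := 1) (hg_mem_mul (m := 1) (n := 2) (hH h hh) hg)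
        (hH _ (hs h hh)), hgtr_conj _ _⟩) ⟨1, h1⟩
  refine hc.trans (Nat.mul_le_mul_left _ ?_)
  apply Finset.card_le_card_of_injOn (fun h => a⁻¹ * h)
  · intro h hh
    rw [Finset.mem_coe, Finset.mem_filter] at hh
    rw [Finset.mem_coe, Finset.mem_filter]
    refine ⟨hg_mem_mul (m := 1) (n := 1) (hH _ (hs a ha)) (hH _ hh.1), ?_⟩
    have e := hh.2
    have : h * g = a * g * a⁻¹ * h := by rw [← e]; group
    rw [mul_assoc, this]; group
  · intro x _ y _ he
    exact mul_left_cancel he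

lemma hg_orbit_class {H : Finset (Matrix.SpecialLinearGroup (Fin 2) F)} (hs : ∀ h ∈ H, h⁻¹ ∈ H) (h1 : 1 ∈ H)
    (hgen : Subgroup.closure (H : Set (Matrix.SpecialLinearGroup (Fin 2) F)) = ⊤) {g : Matrix.SpecialLinearGroup (Fin 2) F}
    (hg : g ∈ H ^ (2:ℕ)) (hgood : hggood g) :
    H.card ^ 3 ≤ 1728 * (H ^ (18:ℕ)).card ^ 2 *
      ((H ^ (2:ℕ)).filter (fun h => h * g = g * h)).card ^ 3 := by
  have a1 := hg_orbit hs h1 hg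
  have a2 := hg_class hs h1 hgen hgood.1 hgood.2 4
  calc H.card ^ 3 ≤ _ := Nat.pow_le_pow_left a1 3
    _ = _ := mul_pow _ _ _
    _ ≤ _ := Nat.mul_le_mul_right _ a2

lemma hg_pivot (h2 : (2 : F) ≠ 0) {H : Finset (Matrix.SpecialLinearGroup (Fin 2) F)} (hs : ∀ h ∈ H, h⁻¹ ∈ H) (h1 : 1 ∈ H)
    (hgen : Subgroup.closure (H : Set (Matrix.SpecialLinearGroup (Fin 2) F)) = ⊤) {g0 : Matrix.SpecialLinearGroup (Fin 2) F}
    (hg0 : g0 ∈ H ^ (2:ℕ)) (hgood : hggood g0) {M : ℕ}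
    (hM : ∀ g ∈ H ^ (2:ℕ), hggood g → M ≤ ((H ^ (2:ℕ)).filter (fun h => h * g = g * h)).card) :
    H.card * M ≤ (H ^ (5:ℕ)).card * 6 ∨
    (∀ x : Matrix.SpecialLinearGroup (Fin 2) F, ∃ g ∈ H ^ (2:ℕ), hggood g ∧ g * (x * g0 * x⁻¹) = (x * g0 * x⁻¹) * g) := by
  by_contra hcon
  rw [not_or] at hcon
  obtain ⟨ha, hb⟩ := hcon
  apply hb
  have hH : ∀ h ∈ H, h ∈ H ^ (1:ℕ) := fun h hh => by rwa [pow_one]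
  apply hg_ind hs hgen
  · exact ⟨g0, hg0, hgood, by simp⟩
  · rintro h hh x ⟨g, hg, hgg, hgc⟩
    by_contra hno
    push Not at hno
    apply ha
    set y := h * x * g0 * (h * x)⁻¹ with hy
    have hyt : hgtr y ^ 2 ≠ 4 := by rw [hy, hgtr_conj]; exact hgood.2
    have c6 : ((H ^ (2:ℕ)).filter (fun u => u * y = y * u)).card ≤ 6 := by
      apply hg_bad_card h2 hyt
      intro u hu
      rw [Finset.mem_filter] at hu
      exact ⟨hu.2, fun hg' => hno u hu.1 hg' hu.2⟩
    have cM : M ≤ ((H ^ (4:ℕ)).filter (fun u => u * y = y * u)).card := by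
      refine (hM g hg hgg).trans ?_
      apply Finset.card_le_card_of_injOn (fun u => h * u * h⁻¹)
      · intro u hu
        rw [Finset.mem_coe, Finset.mem_filter] at hu
        rw [Finset.mem_coe, Finset.mem_filter]
        refine ⟨hg_mem_mul (m := 3) (n := 1) (hg_mem_mul (m := 1) (n := 2) (hH h hh) hu.1)
          (hH _ (hs h hh)), ?_⟩
        have := hg_comm_trans hgg.2 hu.2 hgc.symm
        have hy' : y = h * (x * g0 * x⁻¹) * h⁻¹ := by rw [hy]; group
        rw [hy']
        have e1 : h * u * h⁻¹ * (h * (x * g0 * x⁻¹) * h⁻¹) = h * (u * (x * g0 * x⁻¹)) * h⁻¹ := by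
          group
        rw [e1, this]; group
      · intro u _ v _ he
        exact mul_left_cancel (mul_right_cancel he)
    refine le_trans (Nat.mul_le_mul_left _ cM) ?_
    rw [← Finset.card_product, mul_comm _ 6]
    apply Finset.card_le_mul_card_image_of_maps_to (f := fun z => z.1 * z.2)
    · rintro ⟨a, u⟩ hau
      rw [Finset.mem_product, Finset.mem_filter] at hau
      exact hg_mem_mul (m := 1) (n := 4) (hH a hau.1) hau.2.1
    · intro z _
      rcases (Finset.filter (fun w : Matrix.SpecialLinearGroup (Fin 2) F × Matrix.SpecialLinearGroup (Fin 2) F => w.1 * w.2 = z)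
        (H ×ˢ (H ^ (4:ℕ)).filter (fun u => u * y = y * u))).eq_empty_or_nonempty with h | ⟨⟨a0, u0⟩, h0⟩
      · rw [h]; simp
      · refine le_trans ?_ c6
        rw [Finset.mem_filter, Finset.mem_product, Finset.mem_filter] at h0
        simp only at h0
        apply Finset.card_le_card_of_injOn (fun w => a0⁻¹ * w.1)
        · rintro ⟨a, u⟩ hau
          rw [Finset.mem_coe, Finset.mem_filter, Finset.mem_product, Finset.mem_filter] at hau
          simp only at hau
          rw [Finset.mem_coe, Finset.mem_filter]
          refine ⟨hg_mem_mul (m := 1) (n := 1) (hH _ (hs _ h0.1.1)) (hH _ hau.1.1), ?_⟩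
          have e1 : a0⁻¹ * a = u0 * u⁻¹ := by
            rw [inv_mul_eq_iff_eq_mul, ← mul_assoc, h0.2, ← hau.2]; group
          simp only
          rw [e1]
          have c1 : Commute u0 y := h0.1.2.2
          have c2 : Commute u y := hau.1.2.2
          exact (c1.mul_left c2.inv_left).eq
        · rintro ⟨a, u⟩ hau ⟨a', u'⟩ hau' he
          rw [Finset.mem_coe, Finset.mem_filter, Finset.mem_product, Finset.mem_filter] at hau hau'
          have : a = a' := mul_left_cancel he
          subst this
          have : u = u' := mul_left_cancel (hau.2.trans hau'.2.symm)
          rw [this]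

lemma hg_count (h2 : (2 : F) ≠ 0) {H : Finset (Matrix.SpecialLinearGroup (Fin 2) F)} {g0 : Matrix.SpecialLinearGroup (Fin 2) F} (hgood : hggood g0) {M : ℕ}
    (hM : ∀ g ∈ H ^ (2:ℕ), hggood g → M ≤ ((H ^ (2:ℕ)).filter (fun h => h * g = g * h)).card)
    (hall : ∀ x : Matrix.SpecialLinearGroup (Fin 2) F, ∃ g ∈ H ^ (2:ℕ), hggood g ∧ g * (x * g0 * x⁻¹) = (x * g0 * x⁻¹) * g) :
    Fintype.card (Matrix.SpecialLinearGroup (Fin 2) F) * (M - 6) ≤ (H ^ (2:ℕ)).card * (2 * (2 * Fintype.card F)) := by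
  rw [← Finset.card_univ]
  apply Finset.card_mul_le_card_mul
    (fun (x y : Matrix.SpecialLinearGroup (Fin 2) F) => y * (x * g0 * x⁻¹) = (x * g0 * x⁻¹) * y ∧ hggood y)
  · intro x _
    obtain ⟨g, hg, hgg, hgc⟩ := hall x
    have hyt : hgtr (x * g0 * x⁻¹) ^ 2 ≠ 4 := by rw [hgtr_conj]; exact hgood.2
    obtain ⟨y, hyd⟩ : ∃ y, y = x * g0 * x⁻¹ := ⟨_, rfl⟩
    rw [← hyd] at hyt hgc
    have e1 : M ≤ ((H ^ (2:ℕ)).filter (fun u => u * y = y * u)).card := by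
      refine (hM g hg hgg).trans (Finset.card_le_card ?_)
      intro u hu
      rw [Finset.mem_filter] at hu ⊢
      exact ⟨hu.1, hg_comm_trans hgg.2 hu.2 hgc.symm⟩
    have e2 := hg_bad_card h2 hyt ((H ^ (2:ℕ)).filter (fun u => u * y = y * u ∧ ¬ hggood u)) (by
      intro u hu
      exact (Finset.mem_filter.mp hu).2)
    have e3 : (H ^ (2:ℕ)).filter (fun u => u * y = y * u) ⊆
        (H ^ (2:ℕ)).filter (fun u => u * y = y * u ∧ hggood u) ∪
        (H ^ (2:ℕ)).filter (fun u => u * y = y * u ∧ ¬ hggood u) := by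
      intro u hu
      rw [Finset.mem_union, Finset.mem_filter, Finset.mem_filter]
      rw [Finset.mem_filter] at hu
      tauto
    have e4 := (Finset.card_le_card e3).trans (Finset.card_union_le _ _)
    have e5 : (H ^ (2:ℕ)).filter (fun u => u * y = y * u ∧ hggood u) ⊆
        Finset.bipartiteAbove (fun (x y : Matrix.SpecialLinearGroup (Fin 2) F) => y * (x * g0 * x⁻¹) = (x * g0 * x⁻¹) * y ∧ hggood y)
          (H ^ (2:ℕ)) x := by
      intro u hu
      rw [Finset.mem_filter] at hu
      rw [Finset.mem_bipartiteAbove, ← hyd]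
      exact hu
    have e6 := Finset.card_le_card e5
    omega
  · intro y _
    unfold Finset.bipartiteBelow
    by_cases hy : hggood y
    · have k := Finset.card_le_mul_card_image_of_maps_to
        (s := Finset.univ.filter (fun x : Matrix.SpecialLinearGroup (Fin 2) F => y * (x * g0 * x⁻¹) = (x * g0 * x⁻¹) * y ∧ hggood y))
        (t := Finset.univ.filter (fun z : Matrix.SpecialLinearGroup (Fin 2) F => z * g0 = g0 * z ∧ hgtr z = hgtr y))
        (f := fun x => x⁻¹ * y * x) (by
          intro x hx
          rw [Finset.mem_filter] at hx ⊢
          refine ⟨Finset.mem_univ _, ?_, ?_⟩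
          · have := hx.2.1
            have e1 : x⁻¹ * y * x * g0 = x⁻¹ * (y * (x * g0 * x⁻¹)) * x := by group
            rw [e1, this]; group
          · have := hgtr_conj x⁻¹ y
            rwa [inv_inv] at this) (2 * Fintype.card F) (by
          intro z _
          rcases (Finset.filter (fun x => x⁻¹ * y * x = z) (Finset.univ.filter (fun x : Matrix.SpecialLinearGroup (Fin 2) F =>
            y * (x * g0 * x⁻¹) = (x * g0 * x⁻¹) * y ∧ hggood y))).eq_empty_or_nonempty with h | ⟨x0, h0⟩
          · rw [h]; simp
          · rw [Finset.mem_filter] at h0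
            refine le_trans ?_ (hg_torus_card h2 hy.2 (Finset.univ.filter (fun u => u * y = y * u))
              (fun u hu => (Finset.mem_filter.mp hu).2))
            apply Finset.card_le_card_of_injOn (fun x => x * x0⁻¹)
            · intro x hx
              rw [Finset.mem_coe, Finset.mem_filter] at hx
              rw [Finset.mem_coe, Finset.mem_filter]
              refine ⟨Finset.mem_univ _, ?_⟩
              have e : x0⁻¹ * y * x0 = x⁻¹ * y * x := by rw [hx.2, h0.2]
              have : x * x0⁻¹ * y = x * (x0⁻¹ * y * x0) * x0⁻¹ := by group
              rw [this, e]; group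
            · intro u _ v _ he
              exact mul_right_cancel he)
      have k2 := hg_tr_card h2 hgood.2 (hgtr y)
        (Finset.univ.filter (fun z : Matrix.SpecialLinearGroup (Fin 2) F => z * g0 = g0 * z ∧ hgtr z = hgtr y))
        (fun u hu => (Finset.mem_filter.mp hu).2)
      calc _ ≤ _ := k
        _ ≤ 2 * Fintype.card F * 2 := Nat.mul_le_mul_left _ k2
        _ = _ := by ring
    · have : (Finset.univ.filter (fun x : Matrix.SpecialLinearGroup (Fin 2) F =>
          y * (x * g0 * x⁻¹) = (x * g0 * x⁻¹) * y ∧ hggood y)) = ∅ := by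
        rw [Finset.filter_eq_empty_iff]
        intro x _ h
        exact hy h.2
      rw [this]; simp

lemma hg_G_card : Fintype.card F ^ 2 * (Fintype.card F - 1) ≤ Fintype.card (Matrix.SpecialLinearGroup (Fin 2) F) := by
  have : Fintype.card (F × F × Fˣ) = Fintype.card F ^ 2 * (Fintype.card F - 1) := by
    rw [Fintype.card_prod, Fintype.card_prod, Fintype.card_units]; ring
  rw [← this]
  apply Fintype.card_le_of_injective (fun z : F × F × Fˣ =>
    (⟨!![(z.2.2 : F), z.1; z.2.1, (1 + z.1 * z.2.1) * (z.2.2 : F)⁻¹], by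
      rw [Matrix.det_fin_two_of]
      have := z.2.2.ne_zero
      field_simp
      ring⟩ : Matrix.SpecialLinearGroup (Fin 2) F))
  rintro ⟨a, b, c⟩ ⟨a', b', c'⟩ h
  have h1 := congrArg (fun g : Matrix.SpecialLinearGroup (Fin 2) F => g.1 0 0) h
  have h2 := congrArg (fun g : Matrix.SpecialLinearGroup (Fin 2) F => g.1 0 1) h
  have h3 := congrArg (fun g : Matrix.SpecialLinearGroup (Fin 2) F => g.1 1 0) h
  simp at h1 h2 h3
  rw [Units.ext h1, h2, h3]

end pivot


section escape
variable {F : Type*} [Field F] [Fintype F] [DecidableEq F]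

/-- linear span of `H^k` -/
def hgspan (H : Finset (Matrix.SpecialLinearGroup (Fin 2) F)) (k : ℕ) : Submodule F (Matrix (Fin 2) (Fin 2) F) :=
  Submodule.span F ((fun g : Matrix.SpecialLinearGroup (Fin 2) F => g.1) '' ((H ^ k : Finset (Matrix.SpecialLinearGroup (Fin 2) F)) : Set (Matrix.SpecialLinearGroup (Fin 2) F)))

lemma hgspan_top_of (V : Submodule F (Matrix (Fin 2) (Fin 2) F)) (hV : ∀ g : Matrix.SpecialLinearGroup (Fin 2) F, g.1 ∈ V) :
    V = ⊤ := by
  have i1 := hV 1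
  have i2 := hV (hgu 1)
  have i3 := hV ⟨!![1, 0; 1, 1], by simp [Matrix.det_fin_two]⟩
  have i4 := hV ⟨!![1, 1; 1, 2], by rw [Matrix.det_fin_two_of]; norm_num⟩
  rw [eq_top_iff]
  intro A _
  have : A = (A 0 0) • (1 : Matrix.SpecialLinearGroup (Fin 2) F).1 + (A 0 1) • ((hgu 1 : Matrix.SpecialLinearGroup (Fin 2) F).1 - (1 : Matrix.SpecialLinearGroup (Fin 2) F).1)
      + (A 1 0) • ((!![1, 0; 1, 1] : Matrix (Fin 2) (Fin 2) F) - (1 : Matrix.SpecialLinearGroup (Fin 2) F).1)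
      + (A 1 1 - A 0 0) • ((!![1, 1; 1, 2] : Matrix (Fin 2) (Fin 2) F) - (hgu 1 : Matrix.SpecialLinearGroup (Fin 2) F).1 -
        (!![1, 0; 1, 1] : Matrix (Fin 2) (Fin 2) F) + (1 : Matrix.SpecialLinearGroup (Fin 2) F).1) := by
    ext i j
    fin_cases i <;> fin_cases j <;> simp [hgu] <;> ring
  rw [this]
  exact V.add_mem (V.add_mem (V.add_mem (V.smul_mem _ i1) (V.smul_mem _ (V.sub_mem i2 i1)))
    (V.smul_mem _ (V.sub_mem i3 i1)))
    (V.smul_mem _ (V.add_mem (V.sub_mem (V.sub_mem i4 i2) i3) i1))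

lemma hgspan_chain {H : Finset (Matrix.SpecialLinearGroup (Fin 2) F)} (hs : ∀ h ∈ H, h⁻¹ ∈ H) (h1 : 1 ∈ H)
    (hgen : Subgroup.closure (H : Set (Matrix.SpecialLinearGroup (Fin 2) F)) = ⊤) (k : ℕ) :
    hgspan H k = ⊤ ∨ k + 1 ≤ Module.finrank F (hgspan H k) := by
  induction k with
  | zero =>
    right
    rw [zero_add, Nat.one_le_iff_ne_zero]
    intro h0
    rw [Submodule.finrank_eq_zero] at h0
    have : (1 : Matrix.SpecialLinearGroup (Fin 2) F).1 ∈ hgspan H 0 := Submodule.subset_span ⟨1, hg_one h1 0, rfl⟩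
    rw [h0, Submodule.mem_bot] at this
    have := congrFun (congrFun this 0) 0
    simp at this
  | succ k ih =>
    have hle : hgspan H k ≤ hgspan H (k + 1) := by
      apply Submodule.span_mono
      apply Set.image_mono
      exact_mod_cast hg_mono h1 (Nat.le_succ k)
    rcases ih with h | h
    · left; rw [h] at hle; exact top_le_iff.mp hle
    · by_cases he : hgspan H k = hgspan H (k + 1)
      · left
        rw [← he]
        apply hgspan_top_of
        refine hg_ind hs hgen _ (Submodule.subset_span ⟨1, hg_one h1 k, rfl⟩) ?_
        intro a ha x hx
        rw [he]
        have hsub : hgspan H k ≤ (hgspan H (k + 1)).comap (LinearMap.mulLeft F a.1) := by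
          apply Submodule.span_le.mpr
          rintro _ ⟨g, hg, rfl⟩
          refine Submodule.subset_span ⟨a * g, ?_, rfl⟩
          rw [Finset.mem_coe, pow_succ']
          exact Finset.mul_mem_mul ha hg
        exact hsub hx
      · right
        have := Submodule.finrank_lt_finrank_of_lt (lt_of_le_of_ne hle he)
        omega

lemma hgspan_three {H : Finset (Matrix.SpecialLinearGroup (Fin 2) F)} (hs : ∀ h ∈ H, h⁻¹ ∈ H) (h1 : 1 ∈ H)
    (hgen : Subgroup.closure (H : Set (Matrix.SpecialLinearGroup (Fin 2) F)) = ⊤) : hgspan H 3 = ⊤ := by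
  rcases hgspan_chain hs h1 hgen 3 with h | h
  · exact h
  · apply Submodule.eq_top_of_finrank_eq
    have h4 : Module.finrank F (Matrix (Fin 2) (Fin 2) F) = 4 := by
      rw [Module.finrank_matrix]; simp
    have := Submodule.finrank_le (hgspan H 3)
    omega

lemma hg_escape {H : Finset (Matrix.SpecialLinearGroup (Fin 2) F)} (hs : ∀ h ∈ H, h⁻¹ ∈ H) (h1 : 1 ∈ H)
    (hgen : Subgroup.closure (H : Set (Matrix.SpecialLinearGroup (Fin 2) F)) = ⊤) (hc : 81 < H.card) :
    ∃ g ∈ H ^ (4:ℕ), hggood g := by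
  by_contra hcon
  push Not at hcon
  have htop := hgspan_three hs h1 hgen
  obtain ⟨f, hf, hspan, -⟩ := Submodule.exists_fun_fin_finrank_span_eq F
    ((fun g : Matrix.SpecialLinearGroup (Fin 2) F => g.1) '' ((H ^ 3 : Finset (Matrix.SpecialLinearGroup (Fin 2) F)) : Set (Matrix.SpecialLinearGroup (Fin 2) F)))
  change Submodule.span F (Set.range f) = hgspan H 3 at hspan
  have hd : Module.finrank F (Submodule.span F
      ((fun g : Matrix.SpecialLinearGroup (Fin 2) F => g.1) '' ((H ^ 3 : Finset (Matrix.SpecialLinearGroup (Fin 2) F)) : Set (Matrix.SpecialLinearGroup (Fin 2) F)))) ≤ 4 := by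
    refine (Submodule.finrank_le _).trans ?_
    rw [Module.finrank_matrix]; simp
  generalize Module.finrank F (Submodule.span F
      ((fun g : Matrix.SpecialLinearGroup (Fin 2) F => g.1) '' ((H ^ 3 : Finset (Matrix.SpecialLinearGroup (Fin 2) F)) : Set (Matrix.SpecialLinearGroup (Fin 2) F)))) = d at *
  have hle : H.card ≤ (Fintype.piFinset (fun _ : Fin d => ({0, 2, -2} : Finset F))).card := by
    apply Finset.card_le_card_of_injOn (fun g i => (f i * g.1).trace)
    · intro g hg
      rw [Finset.mem_coe, Fintype.mem_piFinset]
      intro i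
      obtain ⟨x, hx, hxe⟩ := hf i
      have hm : x * g ∈ H ^ (4:ℕ) := hg_mem_mul (m := 3) (n := 1) hx (by rwa [pow_one])
      have := hcon _ hm
      unfold hggood at this
      rw [not_and_or, not_not, not_not] at this
      have e : (f i * g.1).trace = hgtr (x * g) := by
        rw [← hxe, Matrix.trace_fin_two]; rfl
      change (f i * g.1).trace ∈ _
      rw [e]
      simp only [Finset.mem_insert, Finset.mem_singleton]
      rcases this with h | h
      · exact Or.inl h
      · right
        apply sq_eq_sq_iff_eq_or_eq_neg.mp
        rw [h]; norm_num
    · intro g _ g' _ he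
      have hall : ∀ y : Matrix (Fin 2) (Fin 2) F, (y * g.1).trace = (y * g'.1).trace := by
        intro y
        have hy : y ∈ Submodule.span F (Set.range f) := by rw [hspan, htop]; trivial
        induction hy using Submodule.span_induction with
        | mem x hx =>
          obtain ⟨i, rfl⟩ := hx
          exact congrFun he i
        | zero => simp
        | add a b _ _ ha hb => rw [Matrix.add_mul, Matrix.add_mul, Matrix.trace_add, Matrix.trace_add, ha, hb]
        | smul c a _ ha => rw [Matrix.smul_mul, Matrix.smul_mul, Matrix.trace_smul, Matrix.trace_smul, ha]
      have t1 := hall !![1, 0; 0, 0]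
      have t2 := hall !![0, 1; 0, 0]
      have t3 := hall !![0, 0; 1, 0]
      have t4 := hall !![0, 0; 0, 1]
      rw [Matrix.trace_fin_two, Matrix.trace_fin_two, Matrix.mul_apply, Matrix.mul_apply, Matrix.mul_apply,
        Matrix.mul_apply, Fin.sum_univ_two, Fin.sum_univ_two, Fin.sum_univ_two, Fin.sum_univ_two] at t1 t2 t3 t4
      simp at t1 t2 t3 t4
      exact hg_ext t1 t3 t2 t4
  rw [Fintype.card_piFinset_const] at hle
  have h3 := Finset.card_le_three (a := (0 : F)) (b := 2) (c := -2)
  have : (({0, 2, -2} : Finset F)).card ^ d ≤ 3 ^ 4 :=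
    (Nat.pow_le_pow_left h3 d).trans (Nat.pow_le_pow_right (by norm_num) hd)
  omega

end escape


lemma hg_arith_fin {N R j k : ℕ} (hN : 3 ^ 100 ≤ N) (hk : k ≤ 100 * j)
    (h : N ^ (101 + j) ≤ 3 ^ k * R ^ 100) : N ^ 101 ≤ R ^ 100 := by
  have e1 : 3 ^ k ≤ N ^ j := by
    calc 3 ^ k ≤ 3 ^ (100 * j) := Nat.pow_le_pow_right (by norm_num) hk
      _ = (3 ^ 100) ^ j := by rw [pow_mul]
      _ ≤ N ^ j := Nat.pow_le_pow_left hN j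
  have e2 : 3 ^ k * N ^ 101 ≤ 3 ^ k * R ^ 100 := by
    calc 3 ^ k * N ^ 101 ≤ N ^ j * N ^ 101 := Nat.mul_le_mul_right _ e1
      _ = N ^ (101 + j) := by rw [← pow_add, add_comm]
      _ ≤ _ := h
  exact Nat.le_of_mul_le_mul_left e2 (by positivity)

lemma hg_arith2 {N R M q : ℕ} (hN : 3 ^ 100 ≤ N) (h1 : N ^ 3 ≤ 1728 * R ^ 2 * M ^ 3)
    (h2 : N * M ≤ R * 6 ∨ q ^ 2 * (q - 1) * (M - 6) ≤ R * (2 * (2 * q)))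
    (h3 : N ^ 3 < 64 * q ^ 8) : N ^ 101 ≤ R ^ 100 := by
  rcases h2 with h2 | h2
  · have a1 : N ^ 6 ≤ 3 ^ 12 * R ^ 5 := by
      calc N ^ 6 = N ^ 3 * N ^ 3 := by ring
        _ ≤ N ^ 3 * (1728 * R ^ 2 * M ^ 3) := by gcongr
        _ = 1728 * R ^ 2 * (N * M) ^ 3 := by ring
        _ ≤ 1728 * R ^ 2 * (R * 6) ^ 3 := by gcongr
        _ = 373248 * R ^ 5 := by ring
        _ ≤ 3 ^ 12 * R ^ 5 := by gcongr; norm_num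
    apply hg_arith_fin (j := 19) (k := 240) hN (by norm_num)
    calc N ^ (101 + 19) = (N ^ 6) ^ 20 := by rw [← pow_mul]
      _ ≤ (3 ^ 12 * R ^ 5) ^ 20 := by gcongr
      _ = 3 ^ 240 * R ^ 100 := by rw [mul_pow, ← pow_mul, ← pow_mul]
  · by_cases hM : M < 12
    · have a1 : N ^ 3 ≤ 3 ^ 14 * R ^ 2 := by
        calc N ^ 3 ≤ _ := h1
          _ ≤ 1728 * R ^ 2 * 12 ^ 3 := by gcongr
          _ = 2985984 * R ^ 2 := by ring
          _ ≤ _ := by gcongr; norm_num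
      apply hg_arith_fin (j := 49) (k := 700) hN (by norm_num)
      calc N ^ (101 + 49) = (N ^ 3) ^ 50 := by rw [← pow_mul]
        _ ≤ (3 ^ 14 * R ^ 2) ^ 50 := by gcongr
        _ = 3 ^ 700 * R ^ 100 := by rw [mul_pow, ← pow_mul, ← pow_mul]
    · have hq : 2 ≤ q := by
        by_contra hq
        have : q ^ 8 ≤ 1 := Nat.pow_le_one_iff (by norm_num) |>.mpr (by omega)
        have : (3 ^ 100) ^ 3 ≤ N ^ 3 := Nat.pow_le_pow_left hN 3
        have : 64 < (3 ^ 100) ^ 3 := by norm_num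
        omega
      have c1 : q ≤ 2 * (q - 1) := by omega
      have c2 : M ≤ 2 * (M - 6) := by omega
      have b1 : q * (q ^ 2 * M) ≤ q * (16 * R) := by
        calc q * (q ^ 2 * M) = q ^ 2 * q * M := by ring
          _ ≤ q ^ 2 * (2 * (q - 1)) * (2 * (M - 6)) := by gcongr
          _ = 4 * (q ^ 2 * (q - 1) * (M - 6)) := by ring
          _ ≤ 4 * (R * (2 * (2 * q))) := by gcongr
          _ = q * (16 * R) := by ring
      have b2 : q ^ 2 * M ≤ 16 * R := Nat.le_of_mul_le_mul_left b1 (by omega)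
      have b3 : N ^ 3 * q ^ 6 ≤ 3 ^ 15 * R ^ 5 := by
        calc N ^ 3 * q ^ 6 ≤ (1728 * R ^ 2 * M ^ 3) * q ^ 6 := by gcongr
          _ = 1728 * R ^ 2 * (q ^ 2 * M) ^ 3 := by ring
          _ ≤ 1728 * R ^ 2 * (16 * R) ^ 3 := by gcongr
          _ = 7077888 * R ^ 5 := by ring
          _ ≤ _ := by gcongr; norm_num
      have b4 : N ^ 21 ≤ 3 ^ 72 * R ^ 20 := by
        calc N ^ 21 = N ^ 12 * (N ^ 3) ^ 3 := by ring
          _ ≤ N ^ 12 * (64 * q ^ 8) ^ 3 := by gcongr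
          _ = 262144 * (N ^ 3 * q ^ 6) ^ 4 := by ring
          _ ≤ 3 ^ 12 * (3 ^ 15 * R ^ 5) ^ 4 := by gcongr; norm_num
          _ = 3 ^ 72 * R ^ 20 := by ring
      apply hg_arith_fin (j := 4) (k := 360) hN (by norm_num)
      calc N ^ (101 + 4) = (N ^ 21) ^ 5 := by rw [← pow_mul]
        _ ≤ (3 ^ 72 * R ^ 20) ^ 5 := by gcongr
        _ = 3 ^ 360 * R ^ 100 := by rw [mul_pow, ← pow_mul, ← pow_mul]

section growth
variable {F : Type*} [Field F] [Fintype F] [DecidableEq F]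

lemma hg_growth (h2 : (2 : F) ≠ 0) {H : Finset (Matrix.SpecialLinearGroup (Fin 2) F)} (hs : ∀ h ∈ H, h⁻¹ ∈ H) (h1 : 1 ∈ H)
    (hgen : Subgroup.closure (H : Set (Matrix.SpecialLinearGroup (Fin 2) F)) = ⊤) (k : ℕ) (hk : k = 81) (hN : 3 ^ 100 ≤ H.card)
    (hsmall : H.card ^ 3 < 64 * Fintype.card F ^ 8) :
    H.card ^ 101 ≤ (H ^ k).card ^ 100 := by
  obtain ⟨g0, hg0, hgood0⟩ := hg_escape hs h1 hgen (lt_of_lt_of_le (by norm_num) hN)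
  obtain ⟨K, hK⟩ : ∃ K : Finset (Matrix.SpecialLinearGroup (Fin 2) F), K = H ^ (4:ℕ) := ⟨_, rfl⟩
  have Ks : ∀ h ∈ K, h⁻¹ ∈ K := by rw [hK]; exact hg_inv hs 4
  have K1 : 1 ∈ K := by rw [hK]; exact hg_one h1 4
  have Kgen : Subgroup.closure (K : Set (Matrix.SpecialLinearGroup (Fin 2) F)) = ⊤ := by
    rw [hK]; exact hg_gen_pow h1 hgen (by norm_num)
  have hHK : H.card ≤ K.card := by
    rw [hK]
    apply Finset.card_le_card
    have := hg_mono h1 (m := 1) (n := 4) (by norm_num)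
    rwa [pow_one] at this
  have hKR : ∀ n : ℕ, n ≤ 18 → (K ^ n).card ≤ (H ^ k).card := by
    intro n hn
    rw [hK, ← pow_mul]
    exact Finset.card_le_card (hg_mono h1 (by omega))
  rw [← hK] at hg0
  have hg0' : g0 ∈ K ^ (2:ℕ) := by
    have := hg_mono K1 (m := 1) (n := 2) (by norm_num)
    rw [pow_one] at this
    exact this hg0
  obtain ⟨g, hg, hmin⟩ := Finset.exists_min_image ((K ^ (2:ℕ)).filter hggood)
    (fun g => ((K ^ (2:ℕ)).filter (fun h => h * g = g * h)).card)
    ⟨g0, Finset.mem_filter.mpr ⟨hg0', hgood0⟩⟩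
  rw [Finset.mem_filter] at hg
  have hM : ∀ y ∈ K ^ (2:ℕ), hggood y → ((K ^ (2:ℕ)).filter (fun h => h * g = g * h)).card ≤
      ((K ^ (2:ℕ)).filter (fun h => h * y = y * h)).card := fun y hy hyg =>
    hmin y (Finset.mem_filter.mpr ⟨hy, hyg⟩)
  have c1 := hg_orbit_class Ks K1 Kgen hg.1 hg.2
  have c2 := hg_pivot h2 Ks K1 Kgen hg0' hgood0 hM
  have c3 := fun h => hg_count h2 (H := K) hgood0 hM h
  generalize ((K ^ (2:ℕ)).filter (fun h => h * g = g * h)).card = M at c1 c2 c3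
  have r18 := hKR 18 (by norm_num)
  have r5 := hKR 5 (by norm_num)
  have r2 := hKR 2 (by norm_num)
  refine hg_arith2 (q := Fintype.card F) (M := M) hN ?_ ?_ hsmall
  · calc H.card ^ 3 ≤ K.card ^ 3 := Nat.pow_le_pow_left hHK 3
      _ ≤ _ := c1
      _ ≤ _ := Nat.mul_le_mul_right _ (Nat.mul_le_mul_left _ (Nat.pow_le_pow_left r18 2))
  · rcases c2 with h | h
    · left
      exact (Nat.mul_le_mul_right _ hHK).trans (h.trans (Nat.mul_le_mul_right _ r5))
    · right
      exact (Nat.mul_le_mul_right _ hg_G_card).trans ((c3 h).trans (Nat.mul_le_mul_right _ r2))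

end growth


section iter
variable {F : Type*} [Field F] [Fintype F] [DecidableEq F]

lemma hg_iter (h2 : (2 : F) ≠ 0) {H : Finset (Matrix.SpecialLinearGroup (Fin 2) F)} (hs : ∀ h ∈ H, h⁻¹ ∈ H) (h1 : 1 ∈ H)
    (hgen : Subgroup.closure (H : Set (Matrix.SpecialLinearGroup (Fin 2) F)) = ⊤) (hN : 3 ^ 100 ≤ H.card) (k : ℕ) (hk : k = 81)
    (j : ℕ) :
    64 * Fintype.card F ^ 8 ≤ (H ^ (k ^ j)).card ^ 3 ∨
      (101 / 100 : ℝ) ^ j * Real.log H.card ≤ Real.log (H ^ (k ^ j)).card := by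
  induction j with
  | zero => right; simp
  | succ j ih =>
    have hkj : 1 ≤ k ^ j := Nat.one_le_pow _ _ (by omega)
    have hsub : H ^ (k ^ j) ⊆ H ^ (k ^ (j + 1)) :=
      hg_mono h1 (Nat.pow_le_pow_right (by omega) (Nat.le_succ j))
    have hcle := Finset.card_le_card hsub
    by_cases hb : 64 * Fintype.card F ^ 8 ≤ (H ^ (k ^ j)).card ^ 3
    · left; exact hb.trans (Nat.pow_le_pow_left hcle 3)
    · right
      have ih' := ih.resolve_left hb
      have hHle : H.card ≤ (H ^ (k ^ j)).card := by
        apply Finset.card_le_card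
        have := hg_mono h1 hkj
        rwa [pow_one] at this
      have hgr := hg_growth h2 (hg_inv hs (k ^ j)) (hg_one h1 (k ^ j)) (hg_gen_pow h1 hgen hkj) k hk
        (hN.trans hHle) (not_le.mp hb)
      rw [← pow_mul, ← pow_succ] at hgr
      have hpos : 0 < (H ^ (k ^ j)).card := Finset.card_pos.mpr ⟨1, hg_one h1 _⟩
      have hlog : Real.log (((H ^ (k ^ j)).card : ℝ) ^ 101) ≤
          Real.log (((H ^ (k ^ (j + 1))).card : ℝ) ^ 100) := by
        apply Real.log_le_log
        · positivity
        · exact_mod_cast hgr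
      rw [Real.log_pow, Real.log_pow] at hlog
      push_cast at hlog
      rw [pow_succ]
      nlinarith [ih', hlog]

lemma hg_G_card_le : Fintype.card (Matrix.SpecialLinearGroup (Fin 2) F) ≤ Fintype.card F ^ 4 := by
  have : Fintype.card (F × F × F × F) = Fintype.card F ^ 4 := by
    simp only [Fintype.card_prod]; ring
  rw [← this]
  apply Fintype.card_le_of_injective (fun g : Matrix.SpecialLinearGroup (Fin 2) F => (g.1 0 0, g.1 0 1, g.1 1 0, g.1 1 1))
  intro g h hgh
  simp only [Prod.mk.injEq] at hgh
  exact hg_ext hgh.1 hgh.2.1 hgh.2.2.1 hgh.2.2.2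

lemma hg_main (h2 : (2 : F) ≠ 0) {H : Finset (Matrix.SpecialLinearGroup (Fin 2) F)} (hs : ∀ h ∈ H, h⁻¹ ∈ H) (h1 : 1 ∈ H)
    (hgen : Subgroup.closure (H : Set (Matrix.SpecialLinearGroup (Fin 2) F)) = ⊤) (r : ℕ) (hr : r = 3 ^ 100) (k : ℕ) (hk : k = 81)
    (e : ℕ) (he : e = 64) (j : ℕ)
    (hj : 3 * Real.log (Fintype.card F) ≤ (101 / 100 : ℝ) ^ j * Real.log H.card) :
    H ^ (r * (k ^ j * e)) = Finset.univ := by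
  have hr1 : 1 ≤ r := by rw [hr]; exact Nat.one_le_pow _ _ (by norm_num)
  have hkj : 1 ≤ k ^ j := Nat.one_le_pow _ _ (by omega)
  rcases hg_grow hs h1 hgen r with h | h
  · have := hg_mono h1 (m := r) (n := r * (k ^ j * e)) (Nat.le_mul_of_pos_right _ (by positivity))
    rw [h] at this
    exact Finset.univ_subset_iff.mp this
  · have hHle : H.card ≤ (H ^ r).card := by
      apply Finset.card_le_card
      have := hg_mono h1 hr1
      rwa [pow_one] at this
    have hq : 64 ≤ Fintype.card F := by
      by_contra hq
      have c1 : (H ^ r).card ≤ Fintype.card F ^ 4 := (Finset.card_le_univ _).trans hg_G_card_le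
      have c2 : Fintype.card F ^ 4 ≤ 64 ^ 4 := Nat.pow_le_pow_left (by omega) 4
      have c3 : 64 ^ 4 < r := by rw [hr]; norm_num
      omega
    have hs' := hg_inv hs r
    have h1' := hg_one h1 r
    have hbig : 64 * Fintype.card F ^ 8 ≤ ((H ^ r) ^ (k ^ j)).card ^ 3 := by
      rcases hg_iter h2 hs' h1' (hg_gen_pow h1 hgen hr1) (by omega) k hk j with hh | hh
      · exact hh
      · have hHpos : (0 : ℝ) < H.card := by exact_mod_cast Finset.card_pos.mpr ⟨1, h1⟩
        have l1 : Real.log H.card ≤ Real.log (H ^ r).card :=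
          Real.log_le_log hHpos (by exact_mod_cast hHle)
        have l2 : 3 * Real.log (Fintype.card F) ≤ Real.log ((H ^ r) ^ (k ^ j)).card :=
          hj.trans ((mul_le_mul_of_nonneg_left l1 (by positivity)).trans hh)
        have hKpos : (0 : ℝ) < ((H ^ r) ^ (k ^ j)).card := by
          exact_mod_cast Finset.card_pos.mpr ⟨1, hg_one h1' _⟩
        have l3 : Real.log ((Fintype.card F : ℝ) ^ 3) ≤ Real.log ((H ^ r) ^ (k ^ j)).card := by
          rw [Real.log_pow]; exact_mod_cast l2
        have l4 : ((Fintype.card F : ℝ) ^ 3) ≤ ((H ^ r) ^ (k ^ j)).card :=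
          (Real.log_le_log_iff (by positivity) hKpos).mp l3
        have l5 : Fintype.card F ^ 3 ≤ ((H ^ r) ^ (k ^ j)).card := by exact_mod_cast l4
        calc 64 * Fintype.card F ^ 8 ≤ Fintype.card F * Fintype.card F ^ 8 := by gcongr
          _ = (Fintype.card F ^ 3) ^ 3 := by ring
          _ ≤ _ := Nat.pow_le_pow_left l5 3
    have := hg_terminal (hg_inv hs' (k ^ j)) (hg_one h1' (k ^ j)) hbig
    rw [← he] at this
    rw [pow_mul, pow_mul]
    exact this

end iter


section words
variable {G : Type*} [Group G] [DecidableEq G]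

/-- reduced words of length `m` -/
def hgW (S : Finset G) : ℕ → Finset (List G)
  | 0 => {[]}
  | (m + 1) => (hgW S m).biUnion (fun l =>
      (S.filter (fun s => ∀ b ∈ l.head?, s * b ≠ 1)).image (fun s => s :: l))

lemma hgW_mem (S : Finset G) (m : ℕ) : ∀ l ∈ hgW S m,
    l.length = m ∧ (∀ x ∈ l, x ∈ S) ∧ l.IsChain (fun a b => a * b ≠ 1) := by
  induction m with
  | zero => intro l hl; simp [hgW] at hl; subst hl; simp
  | succ m ih =>
    intro l hl
    simp only [hgW, Finset.mem_biUnion, Finset.mem_image, Finset.mem_filter] at hl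
    obtain ⟨t, ht, s, ⟨hs, hsb⟩, rfl⟩ := hl
    obtain ⟨h1, h2, h3⟩ := ih t ht
    refine ⟨by simp [h1], ?_, ?_⟩
    · intro x hx
      rcases List.mem_cons.mp hx with rfl | hx
      · exact hs
      · exact h2 x hx
    · rw [List.isChain_cons]; exact ⟨hsb, h3⟩

lemma hgW_card (S : Finset G) (m : ℕ) : (S.card - 1) ^ m ≤ (hgW S m).card := by
  induction m with
  | zero => simp [hgW]
  | succ m ih =>
    have hd : ((hgW S m : Finset (List G)) : Set (List G)).PairwiseDisjoint (fun l =>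
      (S.filter (fun s => ∀ b ∈ l.head?, s * b ≠ 1)).image (fun s => s :: l)) := by
      intro x _ y _ hxy
      rw [Function.onFun, Finset.disjoint_left]
      intro l hl hl'
      simp only [Finset.mem_image] at hl hl'
      obtain ⟨a, _, rfl⟩ := hl
      obtain ⟨b, _, h⟩ := hl'
      exact hxy (List.cons.inj h).2.symm
    rw [hgW, Finset.card_biUnion hd, pow_succ]
    have : ∀ l ∈ hgW S m, S.card - 1 ≤
        ((S.filter (fun s => ∀ b ∈ l.head?, s * b ≠ 1)).image (fun s => s :: l)).card := by
      intro l _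
      rw [Finset.card_image_of_injective _ (fun a b h => (List.cons.inj h).1)]
      cases l with
      | nil => simp
      | cons b t =>
        have : S.erase b⁻¹ ⊆ S.filter (fun s => ∀ c ∈ (b :: t).head?, s * c ≠ 1) := by
          intro s hs
          rw [Finset.mem_erase] at hs
          rw [Finset.mem_filter]
          refine ⟨hs.2, ?_⟩
          intro c hc
          simp at hc
          subst hc
          intro h
          exact hs.1 (eq_inv_of_mul_eq_one_left h)
        refine le_trans ?_ (Finset.card_le_card this)
        exact Finset.pred_card_le_card_erase
    calc (S.card - 1) ^ m * (S.card - 1) ≤ (hgW S m).card * (S.card - 1) :=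
          Nat.mul_le_mul_right _ ih
      _ = ∑ l ∈ hgW S m, (S.card - 1) := by simp
      _ ≤ _ := Finset.sum_le_sum this

lemma hgW_inj (S : Finset G) (hsym : ∀ s ∈ S, s⁻¹ ∈ S)
    (hfree : ∀ l : List G, l ≠ [] → (∀ x ∈ l, x ∈ S) →
      l.IsChain (fun a b => a * b ≠ 1) → l.prod ≠ 1) :
    ∀ l l' : List G, l.length = l'.length → (∀ x ∈ l, x ∈ S) → (∀ x ∈ l', x ∈ S) →
      l.IsChain (fun a b => a * b ≠ 1) → l'.IsChain (fun a b => a * b ≠ 1) →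
      l.prod = l'.prod → l = l' := by
  intro l
  induction l with
  | nil => intro l' h; intros; exact (List.length_eq_zero_iff.mp h.symm).symm
  | cons a t ih =>
    intro l' hlen hl hl' hc hc' hp
    cases l' with
    | nil => simp at hlen
    | cons b t' =>
      by_cases hab : a = b
      · subst hab
        rw [List.prod_cons, List.prod_cons] at hp
        rw [ih t' (by simpa using hlen) (fun x hx => hl x (List.mem_cons_of_mem _ hx))
          (fun x hx => hl' x (List.mem_cons_of_mem _ hx)) (List.isChain_cons.mp hc).2
          (List.isChain_cons.mp hc').2 (mul_left_cancel hp)]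
      · exfalso
        refine hfree ((((a :: t).map (fun x => x⁻¹)).reverse) ++ (b :: t')) (by simp) ?_ ?_ ?_
        · intro x hx
          rcases List.mem_append.mp hx with hx | hx
          · rw [List.mem_reverse, List.mem_map] at hx
            obtain ⟨y, hy, rfl⟩ := hx
            exact hsym y (hl y hy)
          · exact hl' x hx
        · rw [List.isChain_append]
          refine ⟨?_, hc', ?_⟩
          · rw [List.isChain_reverse, List.isChain_map]
            refine hc.imp ?_
            intro x y hxy h
            apply hxy
            rw [← inv_eq_one, mul_inv_rev]; exact h
          · intro x hx y hy
            simp at hx hy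
            subst hx; subst hy
            intro h
            exact hab (inv_mul_eq_one.mp h)
        · rw [List.prod_append, ← hp, ← List.prod_inv_reverse]
          simp

end words

lemma hg_norm_mul (g h : Matrix.SpecialLinearGroup (Fin 2) ℤ) :
    sl2zOpNorm (g * h) ≤ sl2zOpNorm g * sl2zOpNorm h := by
  unfold sl2zOpNorm
  have : ((g * h : Matrix.SpecialLinearGroup (Fin 2) ℤ) : Matrix (Fin 2) (Fin 2) ℤ).map
      (Int.cast : ℤ → ℝ) = (g : Matrix (Fin 2) (Fin 2) ℤ).map (Int.cast : ℤ → ℝ) *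
      (h : Matrix (Fin 2) (Fin 2) ℤ).map (Int.cast : ℤ → ℝ) := by
    ext i j
    simp [Matrix.mul_apply]
  rw [this, map_mul]
  exact norm_mul_le _ _

lemma hg_norm_one : sl2zOpNorm 1 ≤ 1 := by
  unfold sl2zOpNorm
  have : ((1 : Matrix.SpecialLinearGroup (Fin 2) ℤ) : Matrix (Fin 2) (Fin 2) ℤ).map
      (Int.cast : ℤ → ℝ) = 1 := by
    ext i j
    fin_cases i <;> fin_cases j <;> simp
  rw [this, map_one]
  exact ContinuousLinearMap.norm_id_le

lemma hg_norm_nonneg (g : Matrix.SpecialLinearGroup (Fin 2) ℤ) : 0 ≤ sl2zOpNorm g := norm_nonneg _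

lemma hg_entry (g : Matrix.SpecialLinearGroup (Fin 2) ℤ) (i j : Fin 2) :
    |((g i j : ℤ) : ℝ)| ≤ sl2zOpNorm g := by
  unfold sl2zOpNorm
  set M := ((g : Matrix (Fin 2) (Fin 2) ℤ).map (Int.cast : ℤ → ℝ)) with hM
  have h1 := (Matrix.toEuclideanCLM (𝕜 := ℝ) M).le_opNorm (EuclideanSpace.single j 1)
  rw [EuclideanSpace.norm_single, norm_one, mul_one] at h1
  have h2 := PiLp.norm_apply_le (Matrix.toEuclideanCLM (𝕜 := ℝ) M (EuclideanSpace.single j 1)) i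
  have h3 : (Matrix.toEuclideanCLM (𝕜 := ℝ) M (EuclideanSpace.single j 1)) i = (g i j : ℤ) := by
    rw [Matrix.ofLp_toEuclideanCLM]
    simp [hM]
  rw [h3, Real.norm_eq_abs] at h2
  exact h2.trans h1

lemma hg_norm_list (S : Finset (Matrix.SpecialLinearGroup (Fin 2) ℤ)) (D : ℝ)
    (hD : ∀ s ∈ S, sl2zOpNorm s ≤ D) (l : List (Matrix.SpecialLinearGroup (Fin 2) ℤ))
    (hl : ∀ x ∈ l, x ∈ S) : sl2zOpNorm l.prod ≤ D ^ l.length := by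
  induction l with
  | nil => simpa using hg_norm_one
  | cons a t ih =>
    rw [List.prod_cons, List.length_cons, pow_succ']
    have ha := hD a (hl a List.mem_cons_self)
    exact (hg_norm_mul _ _).trans (mul_le_mul ha
      (ih (fun x hx => hl x (List.mem_cons_of_mem _ hx))) (hg_norm_nonneg _)
      ((hg_norm_nonneg _).trans ha))

/-- the set of products of reduced words -/
lemma hg_words (S : Finset (Matrix.SpecialLinearGroup (Fin 2) ℤ))
    (hsym : ∀ s ∈ S, s⁻¹ ∈ S)
    (hfree : ∀ l : List (Matrix.SpecialLinearGroup (Fin 2) ℤ),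
      l ≠ [] → (∀ x ∈ l, x ∈ S) →
      l.IsChain (fun a b => a * b ≠ 1) → l.prod ≠ 1) (D : ℝ)
    (hD : ∀ s ∈ S, sl2zOpNorm s ≤ D) (m : ℕ) :
    ∃ T : Finset (Matrix.SpecialLinearGroup (Fin 2) ℤ), (S.card - 1) ^ m ≤ T.card ∧ T ⊆ S ^ m ∧
      ∀ g ∈ T, ∀ i j, |((g i j : ℤ) : ℝ)| ≤ D ^ m := by
  refine ⟨(hgW S m).image List.prod, ?_, ?_, ?_⟩
  · rw [Finset.card_image_of_injOn]
    · exact hgW_card S m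
    · intro l hl l' hl' h
      obtain ⟨a1, a2, a3⟩ := hgW_mem S m l hl
      obtain ⟨b1, b2, b3⟩ := hgW_mem S m l' hl'
      exact hgW_inj S hsym hfree l l' (a1.trans b1.symm) a2 b2 a3 b3 h
  · intro g hg
    obtain ⟨l, hl, rfl⟩ := Finset.mem_image.mp hg
    obtain ⟨a1, a2, a3⟩ := hgW_mem S m l hl
    rw [← a1]
    clear a1 a3 hl hg
    induction l with
    | nil => simp
    | cons a t ih =>
      rw [List.prod_cons, List.length_cons, pow_succ']
      exact Finset.mul_mem_mul (a2 a List.mem_cons_self)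
        (ih (fun x hx => a2 x (List.mem_cons_of_mem _ hx)))
  · intro g hg i j
    obtain ⟨l, hl, rfl⟩ := Finset.mem_image.mp hg
    obtain ⟨a1, a2, a3⟩ := hgW_mem S m l hl
    have := hg_norm_list S D hD l a2
    rw [a1] at this
    exact (hg_entry _ i j).trans this

lemma hg_box (T : Finset (Matrix.SpecialLinearGroup (Fin 2) ℤ)) (B : ℝ) (hB : 0 ≤ B)
    (hT : ∀ g ∈ T, ∀ i j, |((g i j : ℤ) : ℝ)| ≤ B) : (T.card : ℝ) ≤ (2 * B + 1) ^ (4:ℕ) := by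
  set I : Finset ℤ := Finset.Icc (-⌊B⌋) ⌊B⌋ with hI
  have hf : 0 ≤ ⌊B⌋ := Int.floor_nonneg.mpr hB
  have hmem : ∀ g ∈ T, ∀ i j, g i j ∈ I := by
    intro g hg i j
    have := abs_le.mp (hT g hg i j)
    rw [hI, Finset.mem_Icc]
    constructor
    · have : -(g i j) ≤ ⌊B⌋ := Int.le_floor.mpr (by push_cast; linarith)
      omega
    · exact Int.le_floor.mpr this.2
  have hc : T.card ≤ ((I ×ˢ I) ×ˢ (I ×ˢ I)).card := by
    apply Finset.card_le_card_of_injOn (fun g => ((g 0 0, g 0 1), (g 1 0, g 1 1)))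
    · intro g hg
      simp only [Finset.coe_product, Set.mem_prod, Finset.mem_coe]
      exact ⟨⟨hmem g hg _ _, hmem g hg _ _⟩, ⟨hmem g hg _ _, hmem g hg _ _⟩⟩
    · intro g _ h _ hgh
      simp only [Prod.mk.injEq] at hgh
      ext i j
      fin_cases i <;> fin_cases j <;> simp [hgh]
  have hIc : (I.card : ℝ) ≤ 2 * B + 1 := by
    have h1 : (I.card : ℤ) = 2 * ⌊B⌋ + 1 := by
      rw [hI, Int.card_Icc]
      omega
    have h2 : (I.card : ℝ) = 2 * ⌊B⌋ + 1 := by exact_mod_cast h1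
    rw [h2]
    have := Int.floor_le B
    linarith
  have : (T.card : ℝ) ≤ (I.card : ℝ) ^ (4:ℕ) := by
    have h : T.card ≤ I.card ^ 4 := by
      refine hc.trans (le_of_eq ?_)
      simp only [Finset.card_product]; ring
    exact_mod_cast h
  refine this.trans ?_
  gcongr

/-- the growth estimate in characteristic zero -/
lemma hg_D (S : Finset (Matrix.SpecialLinearGroup (Fin 2) ℤ)) (hcard : 4 ≤ S.card)
    (hsym : ∀ s ∈ S, s⁻¹ ∈ S)
    (hfree : ∀ l : List (Matrix.SpecialLinearGroup (Fin 2) ℤ),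
      l ≠ [] → (∀ x ∈ l, x ∈ S) →
      l.IsChain (fun a b => a * b ≠ 1) → l.prod ≠ 1) (D : ℝ)
    (hD : ∀ s ∈ S, sl2zOpNorm s ≤ D) :
    1 < D ∧ ((S.card : ℝ) - 1) ≤ D ^ (4:ℕ) := by
  have hD0 : 0 ≤ D := by
    obtain ⟨s, hs⟩ := Finset.card_pos.mp (by omega : 0 < S.card)
    exact (hg_norm_nonneg s).trans (hD s hs)
  have hk3 : (3:ℝ) ≤ (S.card : ℝ) - 1 := by
    have : (4:ℝ) ≤ S.card := by exact_mod_cast hcard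
    linarith
  have key : ∀ m : ℕ, ((S.card : ℝ) - 1) ^ m ≤ (2 * D ^ m + 1) ^ (4:ℕ) := by
    intro m
    obtain ⟨T, h1, _, h3⟩ := hg_words S hsym hfree D hD m
    refine le_trans ?_ (hg_box T (D ^ m) (by positivity) h3)
    have : (((S.card - 1 : ℕ) : ℝ)) = (S.card : ℝ) - 1 := by
      rw [Nat.cast_sub (by omega)]; simp
    rw [← this]
    exact_mod_cast h1
  have hD1 : 1 < D := by
    by_contra h
    push Not at h
    have h5 := key 5
    have h6 : D ^ 5 ≤ 1 := pow_le_one₀ hD0 h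
    have h7 : (2 * D ^ 5 + 1) ^ (4:ℕ) ≤ (3:ℝ) ^ (4:ℕ) := by
      apply pow_le_pow_left₀ (by positivity); linarith
    have h8 : (3:ℝ) ^ 5 ≤ ((S.card : ℝ) - 1) ^ 5 := pow_le_pow_left₀ (by norm_num) hk3 5
    norm_num at h7 h8
    linarith
  refine ⟨hD1, ?_⟩
  by_contra h
  push Not at h
  have hD4 : 0 < D ^ (4:ℕ) := by positivity
  have hq : 1 < ((S.card : ℝ) - 1) / D ^ (4:ℕ) := (one_lt_div hD4).mpr h
  obtain ⟨m, hm⟩ := pow_unbounded_of_one_lt 81 hq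
  rw [div_pow, lt_div_iff₀ (by positivity)] at hm
  have h2 := key m
  have h3 : 1 ≤ D ^ m := one_le_pow₀ hD1.le
  have h4 : (2 * D ^ m + 1) ^ (4:ℕ) ≤ (3 * D ^ m) ^ (4:ℕ) := by
    apply pow_le_pow_left₀ (by positivity); linarith
  have h5 : (3 * D ^ m) ^ (4:ℕ) = 81 * (D ^ (4:ℕ)) ^ m := by
    rw [mul_pow, ← pow_mul, ← pow_mul, mul_comm m 4]; norm_num
  linarith


lemma hg_modp (p : ℕ) (hodd : p % 2 = 1) (T : Finset (Matrix.SpecialLinearGroup (Fin 2) ℤ)) (B : ℝ)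
    (hB : B ≤ (p : ℝ) / 2) (hT : ∀ g ∈ T, ∀ i j, |((g i j : ℤ) : ℝ)| ≤ B) :
    Set.InjOn (Matrix.SpecialLinearGroup.map (n := Fin 2) (Int.castRingHom (ZMod p)))
      (T : Set (Matrix.SpecialLinearGroup (Fin 2) ℤ)) := by
  have hb : ∀ g ∈ T, ∀ i j, 2 * |g i j| < (p : ℤ) := by
    intro g hg i j
    have h1 := (hT g hg i j).trans hB
    have h2 : 2 * |((g i j : ℤ) : ℝ)| ≤ p := by linarith
    have h3 : 2 * |g i j| ≤ (p : ℤ) := by exact_mod_cast h2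
    omega
  intro g hg h hh hgh
  ext i j
  have he : (((g i j : ℤ)) : ZMod p) = ((h i j : ℤ) : ZMod p) := by
    have := congrArg (fun x : Matrix.SpecialLinearGroup (Fin 2) (ZMod p) => x i j) hgh
    simpa using this
  have hd := (ZMod.intCast_eq_intCast_iff_dvd_sub _ _ _).mp he
  have h1 := hb g hg i j
  have h2 := hb h hh i j
  have h3 := Int.eq_zero_of_abs_lt_dvd hd (by
    have := abs_sub (h i j) (g i j)
    omega)
  linarith

lemma hg_final (S : Finset (Matrix.SpecialLinearGroup (Fin 2) ℤ))
    (hcard : 4 ≤ S.card)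
    (hsym : ∀ s ∈ S, s⁻¹ ∈ S)
    (hfree : ∀ l : List (Matrix.SpecialLinearGroup (Fin 2) ℤ),
      l ≠ [] → (∀ x ∈ l, x ∈ S) →
      l.IsChain (fun a b => a * b ≠ 1) → l.prod ≠ 1)
    (D : ℝ) (hD : ∀ s ∈ S, sl2zOpNorm s ≤ D)
    (τ : ℝ) (hτ : τ = 1 / Real.log D)
    (A : ℝ)
    (hA : A = Real.log (1 / (τ * Real.log ((S.card : ℝ) - 1) / 8)) /
      Real.log (1 + 1 / 3024))
    (p : ℕ) [Fact p.Prime] (hp17 : 17 ≤ p) (hpτ : (p : ℝ) > Real.exp (2 / τ))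
    (hgen : Subgroup.closure
        ((S.image (Matrix.SpecialLinearGroup.map (Int.castRingHom (ZMod p))) :
          Finset (Matrix.SpecialLinearGroup (Fin 2) (ZMod p))) :
          Set (Matrix.SpecialLinearGroup (Fin 2) (ZMod p))) = ⊤) :
    ∃ n : ℕ,
      (n : ℝ) ≤ (3 : ℝ) ^ (max ⌈A⌉ 0) * τ * Real.log ((p : ℝ) / 2) ∧
      ((S.image (Matrix.SpecialLinearGroup.map (Int.castRingHom (ZMod p))) ∪ {1}) ^ n :
        Finset (Matrix.SpecialLinearGroup (Fin 2) (ZMod p))) = Finset.univ := by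
  obtain ⟨hD1, hkD⟩ := hg_D S hcard hsym hfree D hD
  have hk3 : (3:ℝ) ≤ (S.card : ℝ) - 1 := by
    have : (4:ℝ) ≤ S.card := by exact_mod_cast hcard
    linarith
  have hkc : (((S.card - 1 : ℕ) : ℝ)) = (S.card : ℝ) - 1 := by
    rw [Nat.cast_sub (by omega)]; simp
  set κ : ℝ := (S.card : ℝ) - 1 with hκ
  have hlD : 0 < Real.log D := Real.log_pos hD1
  have hlk : 0 < Real.log κ := Real.log_pos (by linarith)
  have hlkD : Real.log κ ≤ 4 * Real.log D := by
    have := Real.log_le_log (by linarith) hkD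
    rw [Real.log_pow] at this
    exact_mod_cast this
  have hτ0 : 0 < τ := by rw [hτ]; positivity
  have hτD : τ * Real.log D = 1 := by rw [hτ]; field_simp
  set d : ℝ := τ * Real.log κ / 8 with hd
  have hd0 : 0 < d := by positivity
  have hd2 : d ≤ 1 / 2 := by
    have : τ * Real.log κ ≤ τ * (4 * Real.log D) := by gcongr
    rw [hd]; linarith
  -- A
  have hle : 0 < Real.log (1 + 1 / 3024) := Real.log_pos (by norm_num)
  have hle2 : Real.log (1 + 1 / 3024) ≤ 1 / 3024 := by
    have := Real.log_le_sub_one_of_pos (x := 1 + 1 / 3024) (by norm_num)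
    linarith
  have hAe : A * Real.log (1 + 1 / 3024) = Real.log (1 / d) := by
    rw [hA]; field_simp
  have hl2d : Real.log 2 ≤ Real.log (1 / d) := by
    apply Real.log_le_log (by norm_num)
    rw [le_div_iff₀ hd0]; linarith
  have hA0 : 2000 ≤ A := by
    by_contra hlt
    push Not at hlt
    have h1 := Real.log_two_gt_d9
    have h2 : A * Real.log (1 + 1 / 3024) ≤ 2000 * Real.log (1 + 1 / 3024) := by gcongr
    linarith
  -- logs of p
  have hp0 : (0:ℝ) < p := by exact_mod_cast (by omega : 0 < p)
  have hLp2 : Real.log ((p:ℝ) / 2) = Real.log p - Real.log 2 := Real.log_div hp0.ne' (by norm_num)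
  have h16 : 4 * Real.log 2 ≤ Real.log p := by
    have : Real.log ((2:ℝ) ^ (4:ℕ)) ≤ Real.log p := by
      apply Real.log_le_log (by norm_num)
      have : (17:ℝ) ≤ p := by exact_mod_cast hp17
      linarith
    rw [Real.log_pow] at this
    exact_mod_cast this
  have hl2 : 0 < Real.log 2 := Real.log_pos (by norm_num)
  set L : ℝ := Real.log ((p:ℝ) / 2) with hL
  have hLL : 3 * Real.log p ≤ 4 * L := by linarith
  have hL0 : 0 < L := by linarith
  have hτp : 2 < τ * Real.log p := by
    have h1 : 2 / τ < Real.log p := (Real.lt_log_iff_exp_lt hp0).mpr hpτ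
    rw [div_lt_iff₀ hτ0] at h1
    linarith
  have hτL : 1 ≤ τ * L := by
    have : τ * (3 * Real.log p) ≤ τ * (4 * L) := by gcongr
    linarith
  set m : ℕ := ⌊τ * L⌋₊ with hm
  have hm1 : 1 ≤ m := Nat.le_floor (by exact_mod_cast hτL)
  have hmle : (m : ℝ) ≤ τ * L := Nat.floor_le (by positivity)
  have hmge : τ * L / 2 ≤ m := by
    have h1 := Nat.lt_floor_add_one (τ * L)
    have h2 : (1:ℝ) ≤ m := by exact_mod_cast hm1
    rw [← hm] at h1
    linarith
  have hDm : D ^ m ≤ (p:ℝ) / 2 := by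
    rw [← Real.log_le_log_iff (by positivity) (by positivity), Real.log_pow, ← hL]
    calc (m:ℝ) * Real.log D ≤ τ * L * Real.log D := by gcongr
      _ = L * (τ * Real.log D) := by ring
      _ = L := by rw [hτD, mul_one]
  have hpr : p.Prime := Fact.out
  have hodd : p % 2 = 1 := by
    rcases hpr.eq_two_or_odd with h | h
    · omega
    · exact h
  obtain ⟨T, hT1, hT2, hT3⟩ := hg_words S hsym hfree D hD m
  have hinj := hg_modp p hodd T (D ^ m) hDm hT3
  set φ := Matrix.SpecialLinearGroup.map (n := Fin 2) (Int.castRingHom (ZMod p)) with hφ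
  set B : Finset (Matrix.SpecialLinearGroup (Fin 2) (ZMod p)) := S.image φ ∪ {1} with hB
  have hBs : ∀ h ∈ B, h⁻¹ ∈ B := by
    intro h hh
    rw [hB, Finset.mem_union] at hh ⊢
    rcases hh with hh | hh
    · left
      obtain ⟨s, hs, rfl⟩ := Finset.mem_image.mp hh
      rw [← map_inv]
      exact Finset.mem_image_of_mem _ (hsym s hs)
    · right
      rw [Finset.mem_singleton] at hh ⊢
      rw [hh, inv_one]
  have hB1 : (1 : Matrix.SpecialLinearGroup (Fin 2) (ZMod p)) ∈ B := by
    rw [hB, Finset.mem_union]; right; simp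
  have hBgen : Subgroup.closure (B : Set (Matrix.SpecialLinearGroup (Fin 2) (ZMod p))) = ⊤ := by
    rw [eq_top_iff, ← hgen]
    apply Subgroup.closure_mono
    have : S.image φ ⊆ B := Finset.subset_union_left
    exact_mod_cast this
  have hTB : T.image φ ⊆ B ^ m := by
    have h1 : T.image φ ⊆ (S ^ m).image φ := Finset.image_subset_image hT2
    rw [Finset.image_pow] at h1
    exact h1.trans (Finset.pow_subset_pow_left Finset.subset_union_left)
  have hBc : κ ^ m ≤ ((B ^ m).card : ℝ) := by
    have h1 := Finset.card_le_card hTB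
    rw [Finset.card_image_of_injOn hinj] at h1
    rw [← hkc]
    exact_mod_cast hT1.trans h1
  have hlB : 3 * d * Real.log p ≤ Real.log (B ^ m).card := by
    have h1 := Real.log_le_log (by positivity) hBc
    rw [Real.log_pow] at h1
    have h2 : τ * L / 2 * Real.log κ ≤ m * Real.log κ := by gcongr
    have h3 : τ * L / 2 * Real.log κ = d * (4 * L) := by rw [hd]; ring
    have h4 : d * (3 * Real.log p) ≤ d * (4 * L) := by gcongr
    linarith
  set j : ℕ := ⌈A / 24⌉₊ with hj
  have hjA : A / 24 ≤ j := Nat.le_ceil _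
  have hjA2 : (j : ℝ) < A / 24 + 1 := Nat.ceil_lt_add_one (by positivity)
  have hl101 : 24 * Real.log (1 + 1 / 3024) ≤ Real.log (101 / 100) := by
    have : Real.log ((1 + 1 / 3024 : ℝ) ^ (24:ℕ)) ≤ Real.log (101 / 100) := by
      apply Real.log_le_log (by positivity)
      norm_num
    rw [Real.log_pow] at this
    exact_mod_cast this
  have hpow : 1 / d ≤ (101 / 100 : ℝ) ^ j := by
    rw [← Real.log_le_log_iff (by positivity) (by positivity), Real.log_pow, ← hAe]
    calc A * Real.log (1 + 1 / 3024) = A / 24 * (24 * Real.log (1 + 1 / 3024)) := by ring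
      _ ≤ (j:ℝ) * Real.log (101 / 100) := by
        apply mul_le_mul hjA hl101 (by positivity) (by positivity)
  have h20 : (2 : ZMod p) ≠ 0 := by
    intro h
    have : ((2:ℕ) : ZMod p) = 0 := by exact_mod_cast h
    rw [ZMod.natCast_eq_zero_iff] at this
    have := Nat.le_of_dvd (by norm_num) this
    omega
  have hlp : 0 < Real.log p := by linarith
  have hmain := fun r hr k hk e he => hg_main (F := ZMod p) h20 (hg_inv hBs m) (hg_one hB1 m)
    (hg_gen_pow hB1 hBgen hm1) r hr k hk e he j (by
      rw [ZMod.card]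
      calc 3 * Real.log p = 1 / d * (3 * d * Real.log p) := by field_simp
        _ ≤ _ := by
          apply mul_le_mul hpow hlB (by positivity) (by positivity))
  obtain ⟨r, hr⟩ : ∃ r : ℕ, r = 3 ^ 100 := ⟨_, rfl⟩
  obtain ⟨k, hk⟩ : ∃ k : ℕ, k = 81 := ⟨_, rfl⟩
  obtain ⟨e, he⟩ : ∃ e : ℕ, e = 64 := ⟨_, rfl⟩
  refine ⟨m * (r * (k ^ j * e)), ?_, ?_⟩
  · have hmax : max ⌈A⌉ 0 = ((⌈A⌉₊ : ℕ) : ℤ) := by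
      have : 0 ≤ ⌈A⌉ := Int.ceil_nonneg (by linarith)
      rw [max_eq_left this]; exact (Int.natCast_ceil_eq_ceil (by linarith)).symm
    rw [hmax, zpow_natCast]
    have hexp : 104 + 4 * j ≤ ⌈A⌉₊ := by
      have h1 := Nat.le_ceil A
      have : ((104 + 4 * j : ℕ) : ℝ) ≤ (⌈A⌉₊ : ℝ) := by push_cast; linarith
      exact_mod_cast this
    have hb : r * (k ^ j * e) ≤ 3 ^ ⌈A⌉₊ := by
      calc r * (k ^ j * e) ≤ 3 ^ 100 * ((3 ^ 4) ^ j * 3 ^ 4) := by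
            rw [hr, hk, he]
            gcongr <;> norm_num
        _ = 3 ^ (104 + 4 * j) := by
            rw [← pow_mul, ← pow_add, ← pow_add]; congr 1; ring
        _ ≤ _ := Nat.pow_le_pow_right (by norm_num) hexp
    have hb' : ((r * (k ^ j * e) : ℕ) : ℝ) ≤ (3:ℝ) ^ ⌈A⌉₊ := by exact_mod_cast hb
    rw [Nat.cast_mul, mul_assoc, mul_comm]
    exact mul_le_mul hb' hmle (by positivity) (by positivity)
  · rw [pow_mul]
    exact hmain r hr k hk e he

/-- **Diameter bounds for Zariski-dense subgroups (Corollary `cor-diameter`).**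
Let `S ⊆ SL₂(ℤ)` be a finite symmetric set, `|S| ≥ 4`, freely generating a free group of
rank `|S|/2`. Put `Δ = max_{s∈S} ‖s‖`, `τ = 1/log Δ`, `δ = 1/3024`,
`δ₂ = τ·log(|S|−1)/8` and `A = log(1/δ₂)/log(1+δ)`. Then for every prime `p ≥ 17` with
`p > exp(2/τ)` such that `S mod p` generates `SL₂(𝔽_p)`, there is `n` with
`(n : ℝ) ≤ 3^(max(⌈A⌉,0))·τ·log(p/2)` and `((S mod p) ∪ {1})^(n) = SL₂(𝔽_p)`. -/
theorem stmt_3 (S : Finset (Matrix.SpecialLinearGroup (Fin 2) ℤ))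
    (hcard : 4 ≤ S.card)
    (hsym : ∀ s ∈ S, s⁻¹ ∈ S)
    (hfree : ∀ l : List (Matrix.SpecialLinearGroup (Fin 2) ℤ),
      l ≠ [] → (∀ x ∈ l, x ∈ S) →
      l.Chain' (fun a b => a * b ≠ 1) → l.prod ≠ 1)
    (τ : ℝ)
    (hτ : τ = 1 / Real.log (S.sup' (Finset.card_pos.mp (by omega)) sl2zOpNorm))
    (A : ℝ)
    (hA : A = Real.log (1 / (τ * Real.log ((S.card : ℝ) - 1) / 8)) /
      Real.log (1 + 1 / 3024))
    (p : ℕ) [Fact p.Prime] (hp17 : 17 ≤ p) (hpτ : (p : ℝ) > Real.exp (2 / τ))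
    (hgen : Subgroup.closure
        ((S.image (Matrix.SpecialLinearGroup.map (Int.castRingHom (ZMod p))) :
          Finset (Matrix.SpecialLinearGroup (Fin 2) (ZMod p))) :
          Set (Matrix.SpecialLinearGroup (Fin 2) (ZMod p))) = ⊤) :
    ∃ n : ℕ,
      (n : ℝ) ≤ (3 : ℝ) ^ (max ⌈A⌉ 0) * τ * Real.log ((p : ℝ) / 2) ∧
      ((S.image (Matrix.SpecialLinearGroup.map (Int.castRingHom (ZMod p))) ∪ {1}) ^ n :
        Finset (Matrix.SpecialLinearGroup (Fin 2) (ZMod p))) = Finset.univ := by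
  exact hg_final S hcard hsym hfree _ (fun s hs => Finset.le_sup' sl2zOpNorm hs) τ hτ A hA p hp17 hpτ hgen
end

section
/- Let p be a prime with p ≠ 3 and let S_p ⊂ SL₂(𝔽_p) be the set consisting of the reductions modulo p of the four integer matrices [[1,3],[0,1]], [[1,−3],[0,1]], [[1,0],[3,1]], [[1,0],[−3,1]]. Then there exists a natural number n with (n : ℝ) ≤ 2^5572 · log |SL₂(𝔽_p)| such that (S_p ∪ {1})^(n) = SL₂(𝔽_p); in particular S_p generates SL₂(𝔽_p) and the diameter of the corresponding Cayley graph is at most 2^5572 · log |SL₂(𝔽_p)|. -/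
open Pointwise

/-- The Lubotzky generators in `SL₂(ℤ)`. -/
def lubotzkySet : Finset (Matrix.SpecialLinearGroup (Fin 2) ℤ) :=
  { ⟨!![1, 3; 0, 1], by norm_num [Matrix.det_fin_two_of]⟩,
    ⟨!![1, -3; 0, 1], by norm_num [Matrix.det_fin_two_of]⟩,
    ⟨!![1, 0; 3, 1], by norm_num [Matrix.det_fin_two_of]⟩,
    ⟨!![1, 0; -3, 1], by norm_num [Matrix.det_fin_two_of]⟩ }

namespace Lub


abbrev SL (p : ℕ) := Matrix.SpecialLinearGroup (Fin 2) (ZMod p)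

section words
variable {p : ℕ}

/-- upper unipotent -/
def u (x : ZMod p) : SL p := ⟨!![1, x; 0, 1], by simp [Matrix.det_fin_two_of]⟩
/-- lower unipotent -/
def v (x : ZMod p) : SL p := ⟨!![1, 0; x, 1], by simp [Matrix.det_fin_two_of]⟩
/-- rotation -/
def J : SL p := ⟨!![0, -1; 1, 0], by simp [Matrix.det_fin_two_of]⟩

lemma mul_entry (g h : SL p) (i j : Fin 2) : (g * h) i j = g i 0 * h 0 j + g i 1 * h 1 j := by
  change (g.1 * h.1) i j = _
  rw [Matrix.mul_apply, Fin.sum_univ_two]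

lemma one_entry (i j : Fin 2) : (1 : SL p) i j = if i = j then 1 else 0 := by
  change (1 : Matrix (Fin 2) (Fin 2) (ZMod p)) i j = _
  rw [Matrix.one_apply]

lemma u00 (x : ZMod p) : (u x) 0 0 = 1 := rfl
lemma u01 (x : ZMod p) : (u x) 0 1 = x := rfl
lemma u10 (x : ZMod p) : (u x) 1 0 = 0 := rfl
lemma u11 (x : ZMod p) : (u x) 1 1 = 1 := rfl
lemma v00 (x : ZMod p) : (v x) 0 0 = 1 := rfl
lemma v01 (x : ZMod p) : (v x) 0 1 = 0 := rfl
lemma v10 (x : ZMod p) : (v x) 1 0 = x := rfl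
lemma v11 (x : ZMod p) : (v x) 1 1 = 1 := rfl
lemma J00 : (J : SL p) 0 0 = 0 := rfl
lemma J01 : (J : SL p) 0 1 = -1 := rfl
lemma J10 : (J : SL p) 1 0 = 1 := rfl
lemma J11 : (J : SL p) 1 1 = 0 := rfl

lemma ext_SL {g h : SL p} (h00 : g 0 0 = h 0 0) (h01 : g 0 1 = h 0 1) (h10 : g 1 0 = h 1 0)
    (h11 : g 1 1 = h 1 1) : g = h := by
  ext i j
  fin_cases i <;> fin_cases j <;> assumption

lemma u_mul (x y : ZMod p) : u x * u y = u (x + y) := by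
  apply ext_SL <;> simp [mul_entry, one_entry, u00, u01, u10, u11, v00, v01, v10, v11, J00, J01, J10, J11, add_comm]

lemma u_zero : u (0 : ZMod p) = 1 := by
  apply ext_SL <;> simp [mul_entry, one_entry, u00, u01, u10, u11, v00, v01, v10, v11, J00, J01, J10, J11, add_comm]

lemma v_mul (x y : ZMod p) : v x * v y = v (x + y) := by
  apply ext_SL <;> simp [mul_entry, one_entry, u00, u01, u10, u11, v00, v01, v10, v11, J00, J01, J10, J11, add_comm]

lemma v_zero : v (0 : ZMod p) = 1 := by
  apply ext_SL <;> simp [mul_entry, one_entry, u00, u01, u10, u11, v00, v01, v10, v11, J00, J01, J10, J11, add_comm]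

lemma u_inv (x : ZMod p) : (u x)⁻¹ = u (-x) := by
  rw [inv_eq_iff_mul_eq_one, u_mul, add_neg_cancel, u_zero]

lemma v_inv (x : ZMod p) : (v x)⁻¹ = v (-x) := by
  rw [inv_eq_iff_mul_eq_one, v_mul, add_neg_cancel, v_zero]

lemma J_u (x : ZMod p) : J * u x = v (-x) * J := by
  apply ext_SL <;> simp [mul_entry, one_entry, u00, u01, u10, u11, v00, v01, v10, v11, J00, J01, J10, J11, add_comm]

lemma J_v (x : ZMod p) : J * v x = u (-x) * J := by
  apply ext_SL <;> simp [mul_entry, one_entry, u00, u01, u10, u11, v00, v01, v10, v11, J00, J01, J10, J11, add_comm]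

lemma J_u' (x : ZMod p) : J * u x * J⁻¹ = v (-x) := by
  rw [J_u, mul_inv_cancel_right]

lemma J_v' (x : ZMod p) : J * v x * J⁻¹ = u (-x) := by
  rw [J_v, mul_inv_cancel_right]

variable [Fact p.Prime]

/-- generators with identity -/
def H (p : ℕ) [Fact p.Prime] : Finset (SL p) :=
  (lubotzkySet.image (Matrix.SpecialLinearGroup.map (Int.castRingHom (ZMod p))) ∪ {1})

lemma mem_H (g : SL p) : g ∈ H p ↔ g = u 3 ∨ g = u (-3) ∨ g = v 3 ∨ g = v (-3) ∨ g = 1 := by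
  have h_entry : ∀ (g : Matrix.SpecialLinearGroup (Fin 2) ℤ) (i j : Fin 2),
    (Matrix.SpecialLinearGroup.map (Int.castRingHom (ZMod p)) g) i j = ((g i j : ℤ) : ZMod p) :=
    fun _ _ _ => rfl
  have h1 : Matrix.SpecialLinearGroup.map (Int.castRingHom (ZMod p)) ⟨!![1, 3; 0, 1], by norm_num [Matrix.det_fin_two_of]⟩ = u 3 := by
    apply ext_SL <;> refine (h_entry _ _ _).trans ?_ <;> simp [u00, u01, u10, u11, v00, v01, v10, v11]
  have h2 : Matrix.SpecialLinearGroup.map (Int.castRingHom (ZMod p)) ⟨!![1, -3; 0, 1], by norm_num [Matrix.det_fin_two_of]⟩ = u (-3) := by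
    apply ext_SL <;> refine (h_entry _ _ _).trans ?_ <;> simp [u00, u01, u10, u11, v00, v01, v10, v11]
  have h3 : Matrix.SpecialLinearGroup.map (Int.castRingHom (ZMod p)) ⟨!![1, 0; 3, 1], by norm_num [Matrix.det_fin_two_of]⟩ = v 3 := by
    apply ext_SL <;> refine (h_entry _ _ _).trans ?_ <;> simp [u00, u01, u10, u11, v00, v01, v10, v11]
  have h4 : Matrix.SpecialLinearGroup.map (Int.castRingHom (ZMod p)) ⟨!![1, 0; -3, 1], by norm_num [Matrix.det_fin_two_of]⟩ = v (-3) := by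
    apply ext_SL <;> refine (h_entry _ _ _).trans ?_ <;> simp [u00, u01, u10, u11, v00, v01, v10, v11]
  unfold H
  rw [Finset.mem_union, Finset.mem_image, Finset.mem_singleton]
  constructor
  · rintro (⟨x, hx, rfl⟩ | rfl)
    · unfold lubotzkySet at hx
      rcases Finset.mem_insert.1 hx with h | hx
      · rw [h]; exact Or.inl h1
      rcases Finset.mem_insert.1 hx with h | hx
      · rw [h]; exact Or.inr (Or.inl h2)
      rcases Finset.mem_insert.1 hx with h | hx
      · rw [h]; exact Or.inr (Or.inr (Or.inl h3))
      rw [Finset.mem_singleton.1 hx]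
      exact Or.inr (Or.inr (Or.inr (Or.inl h4)))
    · simp
  · rintro (rfl | rfl | rfl | rfl | rfl)
    · exact Or.inl ⟨_, by unfold lubotzkySet; exact Finset.mem_insert_self _ _, h1⟩
    · exact Or.inl ⟨_, by unfold lubotzkySet; exact Finset.mem_insert_of_mem (Finset.mem_insert_self _ _), h2⟩
    · exact Or.inl ⟨_, by unfold lubotzkySet; exact Finset.mem_insert_of_mem (Finset.mem_insert_of_mem (Finset.mem_insert_self _ _)), h3⟩
    · exact Or.inl ⟨_, by unfold lubotzkySet; exact Finset.mem_insert_of_mem (Finset.mem_insert_of_mem (Finset.mem_insert_of_mem (Finset.mem_singleton_self _))), h4⟩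
    · exact Or.inr rfl

/-- `g` is a word of length at most `n`. -/
def C (n : ℕ) (g : SL p) : Prop := g ∈ (H p) ^ n

lemma one_mem_H : (1 : SL p) ∈ H p := by simp [mem_H]

lemma C.mono {m n : ℕ} (h : m ≤ n) {g : SL p} (hg : C m g) : C n g :=
  Finset.pow_subset_pow_right one_mem_H h hg

lemma C_one (n : ℕ) : C n (1 : SL p) := by
  apply C.mono (Nat.zero_le n)
  simp [C]

lemma C.mul {m n : ℕ} {g h : SL p} (hg : C m g) (hh : C n h) : C (m + n) (g * h) := by
  unfold C at *
  rw [pow_add]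
  exact Finset.mul_mem_mul hg hh

lemma C_of_mem {g : SL p} (hg : g ∈ H p) : C 1 g := by simpa [C] using hg

lemma C.inv {n : ℕ} {g : SL p} (hg : C n g) : C n g⁻¹ := by
  induction n generalizing g with
  | zero =>
    have : g = 1 := by simpa [C] using hg
    rw [this, inv_one]; exact C_one _
  | succ n ih =>
    unfold C at hg
    rw [pow_succ, Finset.mem_mul] at hg
    obtain ⟨a, ha, b, hb, rfl⟩ := hg
    rw [mul_inv_rev, add_comm]
    refine C.mul (C_of_mem ?_) (ih ha)
    rw [mem_H] at hb ⊢
    rcases hb with rfl | rfl | rfl | rfl | rfl <;> simp [u_inv, v_inv]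

lemma C.conj {n : ℕ} {g : SL p} (hg : C n g) : C n (J * g * J⁻¹) := by
  induction n generalizing g with
  | zero =>
    have : g = 1 := by simpa [C] using hg
    rw [this]; simpa using C_one _
  | succ n ih =>
    unfold C at hg
    rw [pow_succ, Finset.mem_mul] at hg
    obtain ⟨a, ha, b, hb, rfl⟩ := hg
    have : J * (a * b) * J⁻¹ = (J * a * J⁻¹) * (J * b * J⁻¹) := by group
    rw [this]
    refine C.mul (ih ha) (C_of_mem ?_)
    rw [mem_H] at hb ⊢
    rcases hb with rfl | rfl | rfl | rfl | rfl <;> simp [J_u', J_v']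

lemma J_sq_comm (g : SL p) : J * (J * g * J⁻¹) * J⁻¹ = g := by
  have h : (J : SL p) * J * g = g * (J * J) := by
    apply ext_SL <;> simp [mul_entry, J00, J01, J10, J11]
  have : J * (J * g * J⁻¹) * J⁻¹ = (J * J * g) * (J * J)⁻¹ := by group
  rw [this, h, mul_inv_cancel_right]

lemma C.conj' {n : ℕ} {g : SL p} (hg : C n g) : C n (J⁻¹ * g * J) := by
  have h := hg.conj
  have h2 : J * g * J⁻¹ = J⁻¹ * g * J := by
    conv_rhs => rw [← J_sq_comm g]
    group
  rwa [h2] at h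

lemma C.conjz {n : ℕ} {g : SL p} (hg : C n g) (i : ℤ) : C n (J ^ i * g * J ^ (-i)) := by
  induction i with
  | zero => simpa using hg
  | succ i ih =>
    have : (J : SL p) ^ ((i : ℤ) + 1) * g * J ^ (-((i : ℤ) + 1)) =
      J * (J ^ (i : ℤ) * g * J ^ (-(i : ℤ))) * J⁻¹ := by group
    rw [this]; exact ih.conj
  | pred i ih =>
    have : (J : SL p) ^ (-(i : ℤ) - 1) * g * J ^ (-(-(i : ℤ) - 1)) =
      J⁻¹ * (J ^ (-(i : ℤ)) * g * J ^ (-(-(i : ℤ)))) * J := by group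
    rw [this]; exact ih.conj'

/-- words up to powers of `J` -/
def D (n : ℕ) (g : SL p) : Prop := ∃ i : ℤ, C n (g * J ^ i)

lemma D.mul {m n : ℕ} {g h : SL p} (hg : D m g) (hh : D n h) : D (m + n) (g * h) := by
  obtain ⟨i, hi⟩ := hg
  obtain ⟨j, hj⟩ := hh
  refine ⟨j + i, ?_⟩
  have := hi.mul (hj.conjz (-i))
  convert this using 1
  group

lemma D.inv {n : ℕ} {g : SL p} (hg : D n g) : D n g⁻¹ := by
  obtain ⟨i, hi⟩ := hg
  refine ⟨-i, ?_⟩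
  have := hi.inv.conjz i
  convert this using 1
  group

lemma C.toD {n : ℕ} {g : SL p} (hg : C n g) : D n g := ⟨0, by simpa using hg⟩

lemma D_J : D 0 (J : SL p) := ⟨-1, by simpa using C_one 0⟩

lemma D.conj {m n : ℕ} {g h : SL p} (hg : D m g) (hh : C n h) : C (2 * m + n) (g * h * g⁻¹) := by
  obtain ⟨i, hi⟩ := hg
  have := (hi.mul (hh.conjz (-i))).mul hi.inv
  convert this using 1
  · ring
  · group

lemma C_u_nat (k : ℕ) : C k (u (3 * k : ZMod p)) := by
  induction k with
  | zero => simpa [u_zero] using C_one 0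
  | succ k ih =>
    have := ih.mul (C_of_mem (g := u (3 : ZMod p)) (by simp [mem_H]))
    rw [u_mul] at this
    convert this using 2
    push_cast; ring

lemma C_u_int (k : ℤ) : C k.natAbs (u (3 * k : ZMod p)) := by
  rcases Int.natAbs_eq k with h | h
  · have := C_u_nat (p := p) k.natAbs
    have h2 : (k : ZMod p) = ((k.natAbs : ℕ) : ZMod p) := by
      conv_lhs => rw [h]
      simp only [Int.cast_natCast]
    rw [h2]; exact this
  · have := (C_u_nat (p := p) k.natAbs).inv
    rw [u_inv] at this
    have h2 : (k : ZMod p) = -((k.natAbs : ℕ) : ZMod p) := by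
      conv_lhs => rw [h]
      simp only [Int.cast_natCast, Int.cast_neg]
    rw [h2, mul_neg]; exact this

lemma C_univ {m : ℕ} (h : ∀ x : ZMod p, C m (u x)) : H p ^ (4 * m) = Finset.univ := by
  have hv : ∀ x : ZMod p, C m (v x) := by
    intro x
    have := (h (-x)).conj
    rwa [J_u', neg_neg] at this
  have key : ∀ g : SL p, g 1 0 ≠ 0 → C (3 * m) g := by
    intro g hg
    have : g = u ((g 0 0 - 1) / g 1 0) * v (g 1 0) * u ((g 1 1 - 1) / g 1 0) := by
      have hd := g.det_coe
      rw [Matrix.det_fin_two] at hd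
      apply ext_SL <;> simp only [mul_entry, u00, u01, u10, u11, v00, v01, v10, v11]
      · field_simp; ring
      · field_simp
        linear_combination -hd
      · field_simp; ring
      · field_simp; ring
    rw [this]
    have := ((h ((g 0 0 - 1) / g 1 0)).mul (hv (g 1 0))).mul (h ((g 1 1 - 1) / g 1 0))
    convert this using 1
    ring
  apply Finset.eq_univ_of_forall
  intro g
  by_cases hg : g 1 0 = 0
  · have h1 : C (3 * m) (v 1 * g) := by
      apply key
      have hd := g.det_coe
      rw [Matrix.det_fin_two] at hd
      rw [mul_entry, v10, v11, hg]
      intro h0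
      rw [one_mul, mul_zero, add_zero] at h0
      rw [h0, hg] at hd
      simp at hd
    have h2 := (hv 1).inv.mul h1
    rw [inv_mul_cancel_left] at h2
    exact h2.mono (by omega)
  · exact (key g hg).mono (by omega)

end words
section sumproduct
variable {p : ℕ} [Fact p.Prime]

/-- `x` acts on unipotents cheaply. -/
def G (l L : ℕ) (x : ZMod p) : Prop := ∀ m y, C m (u y) → C (l * (m + L)) (u (x * y))

lemma G.add {l l' L : ℕ} {x y : ZMod p} (hx : G l L x) (hy : G l' L y) : G (l + l') L (x + y) := by
  intro m z hz
  rw [add_mul, add_mul, ← u_mul]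
  exact (hx m z hz).mul (hy m z hz)

lemma G.neg {l L : ℕ} {x : ZMod p} (hx : G l L x) : G l L (-x) := by
  intro m z hz
  rw [neg_mul, ← u_inv]
  exact (hx m z hz).inv

lemma G.sub {l l' L : ℕ} {x y : ZMod p} (hx : G l L x) (hy : G l' L y) : G (l + l') L (x - y) := by
  rw [sub_eq_add_neg]; exact hx.add hy.neg

lemma G.mul {l l' L L' : ℕ} (hl : 1 ≤ l') {x y : ZMod p} (hx : G l L x) (hy : G l' L' y) :
    G (l * l') (L + L') (x * y) := by
  intro m z hz
  rw [mul_assoc x]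
  refine (hx _ _ (hy _ _ hz)).mono ?_
  rw [mul_assoc]
  apply Nat.mul_le_mul_left
  nlinarith

lemma G.mono {l l' L : ℕ} (h : l ≤ l') {x : ZMod p} (hx : G l L x) : G l' L x := by
  intro m z hz
  exact (hx m z hz).mono (Nat.mul_le_mul_right _ h)

/-- Cauchy-Schwarz -/
lemma card_sq_le {α β : Type*} [DecidableEq α] [DecidableEq β] (S : Finset α) (f : α → β) :
    S.card ^ 2 ≤ (S.image f).card * ((S ×ˢ S).filter (fun q => f q.1 = f q.2)).card := by
  have h1 : S.card = ∑ b ∈ S.image f, (S.filter (fun a => f a = b)).card :=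
    Finset.card_eq_sum_card_fiberwise (fun a ha => Finset.mem_image_of_mem f ha)
  have h2 : ((S ×ˢ S).filter (fun q => f q.1 = f q.2)).card =
      ∑ b ∈ S.image f, (S.filter (fun a => f a = b)).card ^ 2 := by
    rw [Finset.card_eq_sum_card_fiberwise (f := fun q => f q.1) (t := S.image f)]
    · apply Finset.sum_congr rfl
      intro b _
      rw [sq, ← Finset.card_product]
      congr 1
      ext ⟨a, a'⟩
      simp only [Finset.mem_filter, Finset.mem_product]
      constructor
      · rintro ⟨⟨⟨h1, h2⟩, h3⟩, h4⟩
        exact ⟨⟨h1, h4⟩, h2, h3 ▸ h4⟩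
      · rintro ⟨⟨h1, h4⟩, h2, h3⟩
        exact ⟨⟨⟨h1, h2⟩, h4.trans h3.symm⟩, h4⟩
    · intro q hq
      simp only [Finset.coe_filter, Finset.mem_product, Set.mem_ofPred_eq] at hq
      exact Finset.mem_coe.2 (Finset.mem_image_of_mem f hq.1.1)
  rw [h2]
  calc S.card ^ 2 = (∑ b ∈ S.image f, (S.filter (fun a => f a = b)).card) ^ 2 := by rw [← h1]
    _ ≤ _ := sq_sum_le_card_mul_sum_sq

/-- Averaging: some dilate gives a large sumset. -/
lemma exists_dilate (A : Finset (ZMod p)) :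
    ∃ ξ : ZMod p, min (A.card ^ 2) p ≤
      2 * ((A ×ˢ A).image (fun q => q.1 + ξ * q.2)).card := by
  classical
  rcases A.eq_empty_or_nonempty with rfl | hA
  · exact ⟨0, by simp⟩
  have hp : 0 < p := (Fact.out : p.Prime).pos
  set S := A ×ˢ A with hS
  have hScard : S.card = A.card ^ 2 := by rw [hS, Finset.card_product, sq]
  let E : ZMod p → ℕ := fun ξ =>
    ((S ×ˢ S).filter (fun q => q.1.1 + ξ * q.1.2 = q.2.1 + ξ * q.2.2)).card
  have hE : ∑ ξ : ZMod p, E ξ ≤ p * A.card ^ 2 + A.card ^ 4 := by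
    have h1 : ∑ ξ : ZMod p, E ξ = ∑ q ∈ S ×ˢ S,
        ((Finset.univ : Finset (ZMod p)).filter
          (fun ξ => q.1.1 + ξ * q.1.2 = q.2.1 + ξ * q.2.2)).card := by
      simp only [E, Finset.card_filter]
      rw [Finset.sum_comm]
    have h2 : ∀ q ∈ S ×ˢ S, ((Finset.univ : Finset (ZMod p)).filter
          (fun ξ => q.1.1 + ξ * q.1.2 = q.2.1 + ξ * q.2.2)).card ≤
          (if q.1 = q.2 then p else 0) + 1 := by
      intro q _
      split_ifs with h
      · refine (Finset.card_le_univ _).trans ?_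
        rw [ZMod.card]; omega
      · rw [zero_add, Finset.card_le_one]
        intro a ha b hb
        simp only [Finset.mem_filter, Finset.mem_univ, true_and] at ha hb
        have h3 : (a - b) * (q.1.2 - q.2.2) = 0 := by linear_combination ha - hb
        rcases mul_eq_zero.1 h3 with h4 | h4
        · exact sub_eq_zero.1 h4
        · exfalso
          apply h
          have h5 : q.1.2 = q.2.2 := sub_eq_zero.1 h4
          rw [h5] at ha
          exact Prod.ext (add_right_cancel ha) h5
    rw [h1]
    refine (Finset.sum_le_sum h2).trans ?_
    rw [Finset.sum_add_distrib, Finset.sum_const, Finset.card_product, hScard]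
    have h6 : ∑ q ∈ S ×ˢ S, (if q.1 = q.2 then p else 0) = p * A.card ^ 2 := by
      rw [Finset.sum_product]
      simp [hScard, mul_comm]
    rw [h6]
    apply le_of_eq
    simp; ring
  obtain ⟨ξ, -, hξ⟩ : ∃ ξ ∈ (Finset.univ : Finset (ZMod p)), p * E ξ ≤ p * A.card ^ 2 + A.card ^ 4 := by
    by_contra hcon
    push Not at hcon
    have := Finset.sum_lt_sum_of_nonempty (s := (Finset.univ : Finset (ZMod p)))
      ⟨0, Finset.mem_univ _⟩ hcon
    rw [Finset.sum_const, ← Finset.mul_sum, Finset.card_univ, ZMod.card, smul_eq_mul] at this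
    exact absurd (Nat.lt_of_mul_lt_mul_left this) (not_lt.2 hE)
  refine ⟨ξ, ?_⟩
  have hcs := card_sq_le S (fun q => q.1 + ξ * q.2)
  rw [hScard] at hcs
  set I := (S.image (fun q => q.1 + ξ * q.2)).card
  change (A.card ^ 2) ^ 2 ≤ I * E ξ at hcs
  have hA0 : 0 < A.card ^ 2 := pow_pos hA.card_pos 2
  set a := A.card ^ 2 with ha
  have ha4 : A.card ^ 4 = a * a := by rw [ha]; ring
  rw [ha4] at hξ
  -- p * a^2 ≤ I * (p a + a^2)
  have h7 : p * (a * a) ≤ I * (p + a) * a := by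
    calc p * (a * a) = p * a ^ 2 := by ring
      _ ≤ p * (I * E ξ) := Nat.mul_le_mul_left _ hcs
      _ = I * (p * E ξ) := by ring
      _ ≤ I * (p * a + a * a) := Nat.mul_le_mul_left _ hξ
      _ = _ := by ring
  have h8 : p * a ≤ I * (p + a) := by
    apply Nat.le_of_mul_le_mul_right _ hA0
    linarith
  rcases le_total a p with h | h
  · rw [min_eq_left h]
    apply Nat.le_of_mul_le_mul_left _ hp
    nlinarith
  · rw [min_eq_right h]
    apply Nat.le_of_mul_le_mul_left _ hA0
    nlinarith

lemma growth (A : Finset (ZMod p)) (hA : 2 ≤ A.card) :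
    ∃ a ∈ A, ∃ b ∈ A, ∃ c ∈ A, ∃ d ∈ A, ∃ e ∈ ({0, c - d} : Set (ZMod p)),
      min (A.card ^ 2) p ≤
        2 * ((A ×ˢ A).image (fun q => (c - d) * q.1 + (a - b + e) * q.2)).card := by
  classical
  let Q : Set (ZMod p) := {x | ∃ a ∈ A, ∃ b ∈ A, ∃ c ∈ A, ∃ d ∈ A, c ≠ d ∧ x * (c - d) = a - b}
  have resc : ∀ (c ξ : ZMod p), c ≠ 0 →
      ((A ×ˢ A).image (fun q => c * q.1 + (c * ξ) * q.2)).card =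
      ((A ×ˢ A).image (fun q => q.1 + ξ * q.2)).card := by
    intro c ξ hc
    rw [← Finset.card_image_of_injective ((A ×ˢ A).image (fun q => q.1 + ξ * q.2))
      (mul_right_injective₀ hc), Finset.image_image]
    congr 2
    funext q
    simp; ring
  by_cases hQ : ∀ x, x ∈ Q
  · obtain ⟨ξ, hξ⟩ := exists_dilate A
    obtain ⟨a, ha, b, hb, c, hc, d, hd, hcd, h⟩ := hQ ξ
    refine ⟨a, ha, b, hb, c, hc, d, hd, 0, by simp, ?_⟩
    rw [← h, add_zero, mul_comm ξ, resc _ _ (sub_ne_zero.2 hcd)]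
    exact hξ
  · have h0 : (0 : ZMod p) ∈ Q := by
      obtain ⟨c, hc, d, hd, hcd⟩ := Finset.one_lt_card.1 hA
      exact ⟨c, hc, c, hc, c, hc, d, hd, hcd, by simp⟩
    obtain ⟨ξ, hξ, hξ1⟩ : ∃ ξ ∈ Q, ξ + 1 ∉ Q := by
      by_contra hcon
      push Not at hcon
      apply hQ
      have : ∀ n : ℕ, (n : ZMod p) ∈ Q := by
        intro n
        induction n with
        | zero => simpa using h0
        | succ n ih => simpa using hcon _ ih
      intro x
      have := this x.val
      rwa [ZMod.natCast_zmod_val] at this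
    obtain ⟨a, ha, b, hb, c, hc, d, hd, hcd, h⟩ := hξ
    refine ⟨a, ha, b, hb, c, hc, d, hd, c - d, by simp, ?_⟩
    have h2 : a - b + (c - d) = (c - d) * (ξ + 1) := by rw [← h]; ring
    rw [h2, resc _ _ (sub_ne_zero.2 hcd), Finset.card_image_of_injOn]
    · rw [Finset.card_product, ← sq]
      exact (min_le_left _ _).trans (by omega)
    · rintro ⟨x, y⟩ hxy ⟨x', y'⟩ hxy' heq
      simp only [Finset.coe_product, Set.mem_prod, Finset.mem_coe] at hxy hxy' heq
      by_cases hy : y = y'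
      · subst hy
        simpa using heq
      · exfalso
        apply hξ1
        refine ⟨x', hxy'.1, x, hxy.1, y, hxy.2, y', hxy'.2, hy, ?_⟩
        linear_combination heq

lemma growth_step {l L : ℕ} (hl : 1 ≤ l) (A : Finset (ZMod p)) (hA : 2 ≤ A.card)
    (hG : ∀ x ∈ A, G l L x) :
    ∃ B : Finset (ZMod p), min (A.card ^ 2) p ≤ 2 * B.card ∧ ∀ x ∈ B, G (6 * l ^ 2) (2 * L) x := by
  obtain ⟨a, ha, b, hb, c, hc, d, hd, e, he, h⟩ := growth A hA
  refine ⟨_, h, ?_⟩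
  intro x hx
  simp only [Finset.mem_image, Finset.mem_product, Prod.exists] at hx
  obtain ⟨y, z, ⟨hy, hz⟩, rfl⟩ := hx
  have hcd := (hG c hc).sub (hG d hd)
  have hab := (hG a ha).sub (hG b hb)
  have h1 : G (l + l + (l + l)) L (a - b + e) := by
    rcases he with rfl | rfl
    · rw [add_zero]; exact hab.mono (by omega)
    · exact hab.add hcd
  have h2 := (hcd.mul hl (hG y hy)).add (h1.mul hl (hG z hz))
  convert h2 using 1 <;> ring

lemma growth_iter (A : Finset (ZMod p)) {L : ℕ} (hG : ∀ x ∈ A, G 1 L x)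
    (hp : 2 < p) (hA : p ≤ (A.card / 2) ^ 32) : ∀ x : ZMod p, G (2 * 6 ^ 31) (32 * L) x := by
  classical
  -- the invariant
  have hs : ∀ (l k L' : ℕ), 1 ≤ l → 1 ≤ k →
      (∃ B : Finset (ZMod p), (p ≤ (B.card / 2) ^ (2 * k) ∨ p ≤ 2 * B.card)
        ∧ ∀ x ∈ B, G l L' x) →
      (∃ B : Finset (ZMod p), (p ≤ (B.card / 2) ^ k ∨ p ≤ 2 * B.card)
        ∧ ∀ x ∈ B, G (6 * l ^ 2) (2 * L') x) := by
    rintro l k L' hl hk ⟨B, hB, hBG⟩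
    have h2 : 2 ≤ B.card := by
      rcases hB with hB | hB
      · by_contra hlt
        have : B.card / 2 = 0 := by omega
        rw [this, zero_pow (by omega)] at hB
        omega
      · omega
    obtain ⟨B', hB', hG'⟩ := growth_step hl B h2 hBG
    refine ⟨B', ?_, hG'⟩
    rcases le_total (B.card ^ 2) p with h | h
    · rw [min_eq_left h] at hB'
      rcases hB with hB | hB
      · left
        rw [pow_mul] at hB
        refine hB.trans (Nat.pow_le_pow_left ?_ _)
        have h3 : 2 * (B.card / 2) ≤ B.card := Nat.mul_div_le _ _
        rw [Nat.le_div_iff_mul_le (by norm_num)]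
        have h4 := Nat.pow_le_pow_left h3 2
        rw [mul_pow] at h4
        omega
      · right
        nlinarith
    · rw [min_eq_right h] at hB'
      right; exact hB'
  have s0 : (∃ B : Finset (ZMod p), (p ≤ (B.card / 2) ^ (2 * 16) ∨ p ≤ 2 * B.card)
        ∧ ∀ x ∈ B, G 1 L x) := ⟨A, Or.inl hA, hG⟩
  have s1 := hs _ 16 _ (by norm_num) (by norm_num) s0
  have s2 := hs _ 8 _ (by norm_num) (by norm_num) s1
  have s3 := hs _ 4 _ (by norm_num) (by norm_num) s2
  have s4 := hs _ 2 _ (by norm_num) (by norm_num) s3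
  have s5 := hs _ 1 _ (by norm_num) (by norm_num) s4
  obtain ⟨B, hB, hBG⟩ := s5
  have hodd : p % 2 = 1 := by
    rcases (Fact.out : p.Prime).eq_two_or_odd with h | h <;> omega
  have hB2 : p < 2 * B.card := by
    rcases hB with hB | hB
    · rw [pow_one] at hB; omega
    · omega
  intro x
  -- pigeonhole
  have hne : ¬ Disjoint B (B.image (fun y => x - y)) := by
    intro hd
    have h1 := Finset.card_union_of_disjoint hd
    rw [Finset.card_image_of_injective _ (fun a b h => by simpa using h)] at h1
    have h2 := Finset.card_le_univ (B ∪ B.image (fun y => x - y))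
    rw [ZMod.card] at h2
    omega
  rw [Finset.not_disjoint_iff] at hne
  obtain ⟨y, hy, hy'⟩ := hne
  obtain ⟨z, hz, rfl⟩ := Finset.mem_image.1 hy'
  have := (hBG _ hy).add (hBG _ hz)
  rw [sub_add_cancel] at this
  convert this using 1
  · ring
  · ring

end sumproduct
section tree
variable {p : ℕ} [Fact p.Prime]

/-- exponents used in the words -/
def K : Finset ℤ := {-5, -4, -3, -2, -1, 1, 2, 3, 4, 5}

lemma mem_K {k : ℤ} (h : k ∈ K) : 1 ≤ |k| ∧ |k| ≤ 5 := by
  revert k; decide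

lemma K_sum : (1 : ℝ) ≤ ∑ k ∈ K, (5 / 6 : ℝ) / (3 * |k| + 1 : ℤ) := by
  have : ∑ k ∈ K, (5 / 6 : ℚ) / (3 * |k| + 1 : ℤ) = ∑ k ∈ K, (5 / 6 : ℚ) / (3 * |k| + 1 : ℤ) := rfl
  have h : (1 : ℚ) ≤ ∑ k ∈ K, (5 / 6 : ℚ) / (3 * |k| + 1 : ℤ) := by
    unfold K; simp; norm_num
  have h2 : ((1 : ℚ) : ℝ) ≤ ((∑ k ∈ K, (5 / 6 : ℚ) / (3 * |k| + 1 : ℤ) : ℚ) : ℝ) := by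
    exact_mod_cast h
  push_cast at h2 ⊢
  exact h2

lemma pow_bound {X m : ℝ} (hX : 0 < X) (hm : 1 ≤ m) (hm' : m ≤ 16) :
    X ^ (17 / 16 : ℝ) * ((5 / 6) / m) ≤ (X / m) ^ (17 / 16 : ℝ) := by
  have hm0 : 0 < m := by linarith
  rw [Real.div_rpow hX.le hm0.le]
  have h1 : m ^ (17 / 16 : ℝ) ≤ m * (6 / 5) := by
    have : (17 / 16 : ℝ) = 1 + 1 / 16 := by norm_num
    rw [this, Real.rpow_add hm0, Real.rpow_one]
    apply mul_le_mul_of_nonneg_left _ hm0.le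
    have h2 : m ^ (1 / 16 : ℝ) ≤ ((6 / 5 : ℝ) ^ (16 : ℝ)) ^ (1 / 16 : ℝ) := by
      apply Real.rpow_le_rpow hm0.le _ (by norm_num)
      refine hm'.trans ?_
      norm_num
    rw [← Real.rpow_mul (by norm_num)] at h2
    norm_num at h2 ⊢
    exact h2
  rw [div_eq_mul_inv (X ^ _)]
  apply mul_le_mul_of_nonneg_left _ (by positivity)
  have h3 : (5 / 6 : ℝ) / m = (m * (6 / 5))⁻¹ := by field_simp
  rw [h3]
  exact inv_anti₀ (by positivity) h1

lemma tree (p : ℕ) [Fact p.Prime] (n : ℕ) : ∀ X : ℝ, 0 < X → X < 4 ^ n → ∃ V : Finset (ℤ × ℤ),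
    X ^ (17 / 16 : ℝ) ≤ V.card ∧ ∀ w ∈ V, |w.2| < |w.1| ∧ ((|w.1| : ℤ) : ℝ) ≤ max 1 (16 * X) ∧
      ∃ g : SL p, D (5 * n) g ∧ g 0 0 = w.1 ∧ g 1 0 = w.2 := by
  classical
  have base : ∀ (n : ℕ) (X : ℝ), 0 < X → X ≤ 1 → ∃ V : Finset (ℤ × ℤ),
    X ^ (17 / 16 : ℝ) ≤ V.card ∧ ∀ w ∈ V, |w.2| < |w.1| ∧ ((|w.1| : ℤ) : ℝ) ≤ max 1 (16 * X) ∧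
      ∃ g : SL p, D (5 * n) g ∧ g 0 0 = w.1 ∧ g 1 0 = w.2 := by
    intro n X h0 h1
    refine ⟨{(1, 0)}, ?_, ?_⟩
    · simpa using Real.rpow_le_one h0.le h1 (by norm_num)
    · intro w hw
      rw [Finset.mem_singleton] at hw
      subst hw
      refine ⟨by simp, by simp, 1, (C_one _).toD, by simp [one_entry], by simp [one_entry]⟩
  induction n with
  | zero =>
    intro X h0 h1
    exact base _ X h0 (by simpa using h1.le)
  | succ n ih =>
    intro X h0 h1
    by_cases hX : X ≤ 1
    · exact base _ X h0 hX
    push Not at hX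
    have hm : ∀ k ∈ K, (4 : ℝ) ≤ (3 * |k| + 1 : ℤ) ∧ ((3 * |k| + 1 : ℤ) : ℝ) ≤ 16 := by
      intro k hk
      have := mem_K hk
      constructor
      · exact_mod_cast (by omega : (4 : ℤ) ≤ 3 * |k| + 1)
      · exact_mod_cast (by omega : 3 * |k| + 1 ≤ (16 : ℤ))
    have hex : ∀ k : ℤ, ∃ V : Finset (ℤ × ℤ), k ∈ K →
        (X / (3 * |k| + 1 : ℤ)) ^ (17 / 16 : ℝ) ≤ V.card ∧
        ∀ w ∈ V, |w.2| < |w.1| ∧ ((|w.1| : ℤ) : ℝ) ≤ max 1 (16 * (X / (3 * |k| + 1 : ℤ))) ∧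
        ∃ g : SL p, D (5 * n) g ∧ g 0 0 = w.1 ∧ g 1 0 = w.2 := by
      intro k
      by_cases hk : k ∈ K
      · obtain ⟨hm1, hm2⟩ := hm k hk
        have hpos : (0 : ℝ) < (3 * |k| + 1 : ℤ) := by linarith
        obtain ⟨V, hV⟩ := ih (X / (3 * |k| + 1 : ℤ)) (by positivity) (by
          rw [div_lt_iff₀ hpos]
          rw [pow_succ] at h1
          refine h1.trans_le ?_
          apply mul_le_mul_of_nonneg_left hm1 (by positivity))
        exact ⟨V, fun _ => hV⟩
      · exact ⟨∅, fun h => absurd h hk⟩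
    choose V hV using hex
    let M : ℤ → ℤ × ℤ → ℤ × ℤ := fun k w => (3 * k * w.1 - w.2, w.1)
    have hMinj : ∀ k, Function.Injective (M k) := by
      rintro k ⟨x, y⟩ ⟨x', y'⟩ h
      simp only [M, Prod.mk.injEq] at h
      obtain ⟨h1, rfl⟩ := h
      simpa using h1
    refine ⟨K.biUnion (fun k => (V k).image (M k)), ?_, ?_⟩
    · rw [Finset.card_biUnion]
      · push_cast
        calc X ^ (17 / 16 : ℝ) = X ^ (17 / 16 : ℝ) * 1 := by ring
          _ ≤ X ^ (17 / 16 : ℝ) * ∑ k ∈ K, (5 / 6 : ℝ) / (3 * |k| + 1 : ℤ) :=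
            mul_le_mul_of_nonneg_left K_sum (by positivity)
          _ = ∑ k ∈ K, X ^ (17 / 16 : ℝ) * ((5 / 6 : ℝ) / (3 * |k| + 1 : ℤ)) := Finset.mul_sum _ _ _
          _ ≤ _ := by
            apply Finset.sum_le_sum
            intro k hk
            rw [Finset.card_image_of_injective _ (hMinj k)]
            exact (pow_bound h0 (by linarith [(hm k hk).1]) (hm k hk).2).trans (hV k hk).1
      · intro k hk k' hk' hne
        change Disjoint _ _
        rw [Finset.disjoint_left]
        intro w hw hw'
        obtain ⟨⟨x, y⟩, hxy, rfl⟩ := Finset.mem_image.1 hw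
        obtain ⟨⟨x', y'⟩, hxy', h⟩ := Finset.mem_image.1 hw'
        simp only [M, Prod.mk.injEq] at h
        obtain ⟨h2, rfl⟩ := h
        have a1 := ((hV k hk).2 _ hxy).1
        have a2 := ((hV k' hk').2 _ hxy').1
        simp only at a1 a2
        have h3 : 3 * (k' - k) * x' = y' - y := by linear_combination h2
        have h4 : 3 * |k' - k| * |x'| = |y' - y| := by
          rw [← h3, abs_mul, abs_mul]; simp
        have h5 : |y' - y| ≤ |y'| + |y| := abs_sub _ _
        have h6 : 1 ≤ |k' - k| := by
          have : 0 < |k' - k| := abs_pos.2 (sub_ne_zero.2 (Ne.symm hne))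
          omega
        nlinarith [abs_nonneg x']
    · intro w hw
      obtain ⟨k, hk, hw⟩ := Finset.mem_biUnion.1 hw
      obtain ⟨⟨x, y⟩, hxy, rfl⟩ := Finset.mem_image.1 hw
      obtain ⟨a1, a2, g, hg, g0, g1⟩ := (hV k hk).2 _ hxy
      obtain ⟨hk1, hk5⟩ := mem_K hk
      simp only at a1 a2 g0 g1
      simp only [M]
      have e1 : |3 * k * x| = 3 * |k| * |x| := by rw [abs_mul, abs_mul]; simp
      refine ⟨?_, ?_, ?_⟩
      · have := abs_sub_abs_le_abs_sub (3 * k * x) y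
        rw [e1] at this
        nlinarith [abs_nonneg x, abs_nonneg y]
      · have h3 : |3 * k * x - y| ≤ (3 * |k| + 1) * |x| := by
          have := abs_sub (3 * k * x) y
          rw [e1] at this
          nlinarith
        have h4 : ((|3 * k * x - y| : ℤ) : ℝ) ≤ ((3 * |k| + 1 : ℤ) : ℝ) * ((|x| : ℤ) : ℝ) := by
          exact_mod_cast h3
        obtain ⟨hm1, hm2⟩ := hm k hk
        set m : ℝ := ((3 * |k| + 1 : ℤ) : ℝ)
        have hm0 : 0 < m := by linarith
        refine le_max_of_le_right (h4.trans ?_)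
        calc m * ((|x| : ℤ) : ℝ) ≤ m * max 1 (16 * (X / m)) := mul_le_mul_of_nonneg_left a2 hm0.le
          _ ≤ 16 * X := by
            rcases le_total 1 (16 * (X / m)) with h | h
            · rw [max_eq_right h]
              apply le_of_eq; field_simp
            · rw [max_eq_left h]
              linarith
      · refine ⟨u (3 * (k : ZMod p)) * J * g, ?_, ?_, ?_⟩
        · have h1 := ((C_u_int (p := p) k).toD.mul D_J).mul hg
          obtain ⟨i, hi⟩ := h1
          refine ⟨i, hi.mono ?_⟩
          have hk6 := Int.abs_eq_natAbs k
          have : k.natAbs ≤ 5 := by omega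
          omega
        · simp only [mul_entry, u00, u01, u10, u11, J00, J01, J10, J11, g0, g1]
          push_cast; ring
        · simp only [mul_entry, u00, u01, u10, u11, J00, J01, J10, J11, g0, g1]
          push_cast; ring

lemma C_conj_borel {m n : ℕ} {g : SL p} (hg : D m g) (h10 : g 1 0 = 0) (y : ZMod p)
    (hy : C n (u y)) : C (2 * m + n) (u (g 0 0 ^ 2 * y)) := by
  have := hg.conj hy
  convert this using 1
  rw [eq_mul_inv_iff_mul_eq]
  have hd := g.det_coe
  rw [Matrix.det_fin_two, h10] at hd
  apply ext_SL <;> simp only [mul_entry, u00, u01, u10, u11, h10]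
  · ring
  · linear_combination (g 0 0 * y) * hd
  · ring
  · ring

lemma SL_inv_entries (g h : SL p) : (g⁻¹ * h) 0 0 = g 1 1 * h 0 0 - g 0 1 * h 1 0 ∧
    (g⁻¹ * h) 1 0 = g 0 0 * h 1 0 - g 1 0 * h 0 0 := by
  have hd := g.det_coe
  rw [Matrix.det_fin_two] at hd
  have h0 : h = g * (g⁻¹ * h) := by group
  set k := g⁻¹ * h
  rw [h0]
  simp only [mul_entry]
  constructor
  · linear_combination -(k 0 0) * hd
  · linear_combination -(k 1 0) * hd

set_option exponentiation.threshold 6000 in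
lemma exists_A (p : ℕ) [Fact p.Prime] (hp : 2 ^ 480 ≤ p) (n : ℕ) (hn : p < 2 ^ n) :
    ∃ A : Finset (ZMod p), p ≤ (A.card / 2) ^ 32 ∧ ∀ x ∈ A, G 1 (20 * n) x := by
  classical
  have hp0 : (0 : ℝ) < p := by exact_mod_cast (Fact.out : p.Prime).pos
  have hpbig : (2 : ℝ) ^ 480 ≤ p := by exact_mod_cast hp
  have hp64 : (64 : ℝ) ≤ p := le_trans (by norm_num) hpbig
  obtain ⟨V, hVc, hV⟩ := tree p n (p / 64) (by positivity) (by
    have h1 : (p : ℝ) < 2 ^ n := by exact_mod_cast hn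
    have h2 : (2 : ℝ) ^ n ≤ 4 ^ n := pow_le_pow_left₀ (by norm_num) (by norm_num) n
    linarith)
  have hVp : ∀ w ∈ V, 4 * |w.1| ≤ p := by
    intro w hw
    have h := (hV w hw).2.1
    rw [max_eq_right (by linarith)] at h
    have : (4 : ℝ) * ((|w.1| : ℤ) : ℝ) ≤ p := by linarith
    exact_mod_cast this
  have small : ∀ a : ℤ, |a| < p → (a : ZMod p) = 0 → a = 0 := by
    intro a ha h
    rw [ZMod.intCast_zmod_eq_zero_iff_dvd] at h
    exact Int.eq_zero_of_abs_lt_dvd h ha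
  have hne : ∀ w ∈ V, (w.1 : ZMod p) ≠ 0 := by
    intro w hw h0
    have h1 := (hV w hw).1
    have h2 := hVp w hw
    have h3 := abs_nonneg w.2
    have := small w.1 (by omega) h0
    rw [this] at h1
    simp at h1
    omega
  have hp' : 0 < p := (Fact.out : p.Prime).pos
  -- pigeonhole
  obtain ⟨t, -, ht⟩ := Finset.exists_le_card_fiber_of_mul_le_card_of_maps_to
    (s := V) (t := (Finset.univ : Finset (ZMod p))) (f := fun w => (w.2 : ZMod p) / (w.1 : ZMod p))
    (n := V.card / p) (fun _ _ => Finset.mem_univ _) ⟨0, Finset.mem_univ _⟩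
    (by rw [Finset.card_univ, ZMod.card]; exact Nat.mul_div_le _ _)
  set F := V.filter (fun w => (w.2 : ZMod p) / (w.1 : ZMod p) = t) with hF
  have hFV : ∀ w ∈ F, w ∈ V := fun w hw => (Finset.mem_filter.1 hw).1
  have hFt : ∀ w ∈ F, (w.2 : ZMod p) = t * w.1 := by
    intro w hw
    have h1 := (Finset.mem_filter.1 hw).2
    rw [div_eq_iff (hne w (hFV w hw))] at h1
    exact h1
  -- squares of ratios
  have hcount : ∀ c : ZMod p, c ≠ 0 →
      F.card ≤ 2 * (F.image (fun w => ((w.1 : ZMod p) / c) ^ 2)).card := by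
    intro c hc
    apply Finset.card_le_mul_card_image
    intro b hb
    obtain ⟨w, hw, rfl⟩ := Finset.mem_image.1 hb
    have hsub : F.filter (fun a => ((a.1 : ZMod p) / c) ^ 2 = ((w.1 : ZMod p) / c) ^ 2) ⊆
        {w, (-w.1, -w.2)} := by
      intro a ha
      obtain ⟨haF, ha⟩ := Finset.mem_filter.1 ha
      have b1 := hVp w (hFV w hw)
      have b2 := hVp a (hFV a haF)
      have c1 := (hV w (hFV w hw)).1
      have c2 := (hV a (hFV a haF)).1
      have t1 := hFt w hw
      have t2 := hFt a haF
      rw [div_pow, div_pow, div_left_inj' (pow_ne_zero 2 hc), sq_eq_sq_iff_eq_or_eq_neg] at ha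
      rw [Finset.mem_insert, Finset.mem_singleton]
      rcases ha with ha | ha
      · left
        have e1 := small (a.1 - w.1) (by
          have := abs_sub a.1 w.1
          omega) (by push_cast; rw [ha, sub_self])
        have e2 := small (a.2 - w.2) (by
          have := abs_sub a.2 w.2
          omega) (by push_cast; rw [t1, t2, ha, sub_self])
        exact Prod.ext (by omega) (by omega)
      · right
        have e1 := small (a.1 + w.1) (by
          have := abs_add_le a.1 w.1
          omega) (by push_cast; rw [ha]; ring)
        have e2 := small (a.2 + w.2) (by
          have := abs_add_le a.2 w.2
          omega) (by push_cast; rw [t1, t2, ha]; ring)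
        exact Prod.ext (by simp only; omega) (by simp only; omega)
    exact (Finset.card_le_card hsub).trans Finset.card_le_two
  -- numerics
  have hnum : ∀ a : ℕ, V.card < p * (4 * a + 3) → p ≤ a ^ 32 := by
    intro a ha
    by_contra hlt
    push Not at hlt
    have ha' : (V.card : ℝ) < p * (4 * a + 3) := by exact_mod_cast ha
    have hlt' : (a : ℝ) ^ 32 < p := by exact_mod_cast hlt
    set q : ℝ := (p : ℝ) ^ (1 / 32 : ℝ) with hq
    have hq0 : 0 ≤ q := by positivity
    have hq32 : q ^ 32 = p := by
      rw [hq, ← Real.rpow_natCast, ← Real.rpow_mul hp0.le]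
      norm_num
    have haq : (a : ℝ) < q := by
      rw [← hq32] at hlt'
      exact lt_of_pow_lt_pow_left₀ 32 hq0 hlt'
    have hqbig : (32768 : ℝ) ≤ q := by
      have : (32768 : ℝ) ^ 32 ≤ q ^ 32 := by
        rw [hq32]
        refine le_trans (le_of_eq ?_) hpbig
        norm_num
      exact le_of_pow_le_pow_left₀ (by norm_num) hq0 this
    have h1 : (p : ℝ) ^ (17 / 16 : ℝ) = p * q ^ 2 := by
      have e : (17 / 16 : ℝ) = 1 + 1 / 32 * (2 : ℕ) := by norm_num
      rw [e, Real.rpow_add hp0, Real.rpow_one, Real.rpow_mul hp0.le, Real.rpow_natCast]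
    have h2 : (64 : ℝ) ^ (17 / 16 : ℝ) ≤ 4096 := by
      calc (64 : ℝ) ^ (17 / 16 : ℝ) ≤ (64 : ℝ) ^ (2 : ℝ) :=
            Real.rpow_le_rpow_of_exponent_le (by norm_num) (by norm_num)
        _ = 4096 := by norm_num
    have h3 : p * q ^ 2 / 4096 ≤ (V.card : ℝ) := by
      refine le_trans ?_ hVc
      rw [Real.div_rpow hp0.le (by norm_num), h1]
      apply div_le_div_of_nonneg_left (by positivity) (by positivity) h2
    have h4 : (p : ℝ) * (q ^ 2 / 4096) < p * (4 * a + 3) := by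
      calc (p : ℝ) * (q ^ 2 / 4096) = p * q ^ 2 / 4096 := by ring
        _ < _ := lt_of_le_of_lt h3 ha'
    have h5 := lt_of_mul_lt_mul_left h4 hp0.le
    clear hpbig hq32 hlt' h1 h2 h3 h4 hVc ha'
    nlinarith
  have hVN : V.card < p * (V.card / p + 1) := by
    have := Nat.lt_mul_div_succ V.card hp'
    exact this
  have hFne : F.Nonempty := by
    rw [Finset.nonempty_iff_ne_empty]
    intro h0
    rw [h0, Finset.card_empty] at ht
    have := hnum 0 (hVN.trans_le (Nat.mul_le_mul_left _ (by omega)))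
    rw [zero_pow (by norm_num)] at this
    omega
  obtain ⟨w0, hw0⟩ := hFne
  obtain ⟨-, -, g0, hg0, g00, g10⟩ := hV w0 (hFV w0 hw0)
  refine ⟨F.image (fun w => ((w.1 : ZMod p) / (w0.1 : ZMod p)) ^ 2), ?_, ?_⟩
  · have hc := hcount _ (hne w0 (hFV w0 hw0))
    set a := (F.image (fun w => ((w.1 : ZMod p) / (w0.1 : ZMod p)) ^ 2)).card
    apply hnum
    refine hVN.trans_le (Nat.mul_le_mul_left _ ?_)
    omega
  · intro x hx
    obtain ⟨w, hw, rfl⟩ := Finset.mem_image.1 hx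
    obtain ⟨-, -, g, hg, h00, h10⟩ := hV w (hFV w hw)
    obtain ⟨e1, e2⟩ := SL_inv_entries g0 g
    have t0 := hFt w0 hw0
    have t1 := hFt w hw
    have n0 := hne w0 (hFV w0 hw0)
    have hd := g0.det_coe
    rw [Matrix.det_fin_two] at hd
    rw [g00, g10, h00, h10, t0, t1] at e2
    rw [h00, h10, t1] at e1
    rw [g00, g10, t0] at hd
    have e3 : (g0⁻¹ * g) 0 0 = (w.1 : ZMod p) / (w0.1 : ZMod p) := by
      rw [e1, eq_div_iff n0]
      linear_combination (w.1 : ZMod p) * hd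
    intro m y hy
    have := C_conj_borel (hg0.inv.mul hg) (by rw [e2]; ring) y hy
    rw [e3] at this
    exact this.mono (by omega)

end tree

end Lub

set_option exponentiation.threshold 6000

/-- **Diameter bound for the Lubotzky group (Corollary `cor-lubotzky`).** For any prime
`p ≠ 3`, letting `S_p ⊆ SL₂(𝔽_p)` be the reductions mod `p` of the four matrices
`[[1,±3],[0,1]]`, `[[1,0],[±3,1]]`, there is `n` with `(n : ℝ) ≤ 2^5572·log |SL₂(𝔽_p)|`
and `(S_p ∪ {1})^(n) = SL₂(𝔽_p)`; in particular `S_p` generates `SL₂(𝔽_p)` and the Cayley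
graph `C(SL₂(𝔽_p), S_p)` has diameter at most `2^5572·log |SL₂(𝔽_p)|`. -/
theorem stmt_4 (p : ℕ) [Fact p.Prime] (hp3 : p ≠ 3) :
    ∃ n : ℕ,
      (n : ℝ) ≤ 2 ^ 5572 *
        Real.log (Fintype.card (Matrix.SpecialLinearGroup (Fin 2) (ZMod p))) ∧
      ((lubotzkySet.image (Matrix.SpecialLinearGroup.map (Int.castRingHom (ZMod p))) ∪ {1}) ^ n :
        Finset (Matrix.SpecialLinearGroup (Fin 2) (ZMod p))) = Finset.univ := by
  have hp2 : 2 ≤ p := (Fact.out : p.Prime).two_le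
  have hp0 : (0 : ℝ) < p := by exact_mod_cast (by omega : 0 < p)
  have hcard : Real.log p ≤
      Real.log (Fintype.card (Matrix.SpecialLinearGroup (Fin 2) (ZMod p))) := by
    apply Real.log_le_log hp0
    have h := Fintype.card_le_of_injective (Lub.u : ZMod p → Lub.SL p) (by
      intro x y h
      have := congrArg (fun g : Lub.SL p => g 0 1) h
      simpa [Lub.u01] using this)
    rw [ZMod.card] at h
    exact_mod_cast h
  have h3 : (3 : ZMod p) ≠ 0 := by
    intro h
    have h' : ((3 : ℕ) : ZMod p) = 0 := by exact_mod_cast h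
    rw [ZMod.natCast_eq_zero_iff] at h'
    exact hp3 ((Nat.prime_dvd_prime_iff_eq Fact.out Nat.prime_three).1 h')
  have hlog2 : Real.log 2 ≤ Real.log p := by
    apply Real.log_le_log (by norm_num)
    exact_mod_cast hp2
  have hl2 := Real.log_two_gt_d9
  set lg := Real.log (Fintype.card (Matrix.SpecialLinearGroup (Fin 2) (ZMod p))) with hlg
  rcases lt_or_ge p (2 ^ 480) with hsmall | hbig
  · refine ⟨4 * p, ?_, Lub.C_univ (m := p) ?_⟩
    · have h1 : (p : ℝ) ≤ 2 ^ 480 := by exact_mod_cast hsmall.le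
      have h2 : (1 / 2 : ℝ) ≤ lg := by linarith
      calc ((4 * p : ℕ) : ℝ) = 4 * p := by push_cast; ring
        _ ≤ 4 * 2 ^ 480 := by linarith
        _ ≤ 2 ^ 5572 * (1 / 2) := by norm_num
        _ ≤ 2 ^ 5572 * lg := mul_le_mul_of_nonneg_left h2 (by positivity)
    · intro x
      have h := Lub.C_u_nat (p := p) (x / 3).val
      rw [ZMod.natCast_zmod_val, mul_div_cancel₀ x h3] at h
      exact h.mono (ZMod.val_lt _).le
  · obtain ⟨n, hn⟩ : ∃ n, n = Nat.log 2 p + 1 := ⟨_, rfl⟩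
    have hlt : p < 2 ^ n := hn ▸ Nat.lt_pow_succ_log_self (by norm_num) p
    obtain ⟨A, hA, hG⟩ := Lub.exists_A p hbig n hlt
    have h2lt : (2 : ℕ) < 2 ^ 480 := by norm_num
    have hp2' : 2 < p := lt_of_lt_of_le h2lt hbig
    clear hbig h2lt
    have hall := Lub.growth_iter (p := p) A (L := 20 * n) hG hp2' hA
    obtain ⟨K, hK⟩ : ∃ K : ℕ, K = 2 * 6 ^ 31 := ⟨_, rfl⟩
    rw [← hK] at hall
    have hKr : (K : ℝ) = 2 * 6 ^ 31 := by rw [hK]; push_cast; ring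
    clear hK
    refine ⟨4 * (K * (1 + 32 * (20 * n))), ?_, Lub.C_univ ?_⟩
    · have h1 : ((n : ℝ) - 1) * Real.log 2 ≤ Real.log p := by
        have h := Nat.pow_log_le_self 2 (by omega : p ≠ 0)
        have h' : (2 : ℝ) ^ (Nat.log 2 p) ≤ p := by exact_mod_cast h
        have h'' := Real.log_le_log (by positivity) h'
        rw [Real.log_pow] at h''
        rw [hn]
        push_cast
        linarith
      have hn1 : (1 : ℝ) ≤ n := by
        rw [hn]; push_cast
        have : (0 : ℝ) ≤ (Nat.log 2 p : ℝ) := Nat.cast_nonneg _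
        linarith
      have h4 : (n : ℝ) ≤ 4 * lg := by nlinarith
      have h5 : (0 : ℝ) ≤ lg := by linarith
      calc ((4 * (K * (1 + 32 * (20 * n))) : ℕ) : ℝ)
          = 8 * 6 ^ 31 * (1 + 640 * n) := by push_cast; rw [hKr]; ring
        _ ≤ 8 * 6 ^ 31 * (641 * (4 * lg)) := by
          apply mul_le_mul_of_nonneg_left _ (by positivity)
          linarith
        _ = (8 * 6 ^ 31 * 641 * 4) * lg := by ring
        _ ≤ 2 ^ 5572 * lg := by
          apply mul_le_mul_of_nonneg_right _ h5
          norm_num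
    · intro x
      have h := hall (x / 3) 1 3 (Lub.C_of_mem (by simp [Lub.mem_H]))
      rw [div_mul_cancel₀ x h3] at h
      exact h
end
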